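/- For each p ∈ S, the map β_p ↦ P(β) (with h and all other coordinates of β held fixed) is differentiable at every point β_p ∈ ℝ. -/

import Mathlib

open MeasureTheory ProbabilityTheory Real Filter Topology

noncomputable section

/-- The centered Gaussian measure on `ℝ` with variance `v` (Dirac at `0` if `v ≤ 0`). -/
def gauss (v : ℝ) : Measure ℝ := gaussianReal 0 v.toNNReal

/-- `ξ(x) = Σ_{p ∈ S} β_p^2 x^p`. -/
def xiFn (S : Finset ℕ) (β : ℕ → ℝ) (x : ℝ) : ℝ := ∑ p ∈ S, β p ^ 2 * x ^ p

/-- `ξ'(x) = Σ_{p ∈ S} β_p^2 p x^(p-1)`. -/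
def xiFn' (S : Finset ℕ) (β : ℕ → ℝ) (x : ℝ) : ℝ := ∑ p ∈ S, β p ^ 2 * p * x ^ (p - 1)

/-- `θ(x) = x ξ'(x) - ξ(x)`. -/
def thetaFn (S : Finset ℕ) (β : ℕ → ℝ) (x : ℝ) : ℝ := x * xiFn' S β x - xiFn S β x

/-- A discrete order parameter with at most `k` atoms:
`0 = m_0 ≤ m_1 ≤ ⋯ ≤ m_k = 1` with `m_l > 0` for `1 ≤ l ≤ k`,
and `0 = q_0 ≤ q_1 ≤ ⋯ ≤ q_k ≤ q_{k+1} = 1`. -/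
structure OrderParam (k : ℕ) where
  m : ℕ → ℝ
  q : ℕ → ℝ
  m_zero : m 0 = 0
  m_last : m k = 1
  m_mono : ∀ l, l < k → m l ≤ m (l + 1)
  m_pos : ∀ l, 1 ≤ l → l ≤ k → 0 < m l
  q_zero : q 0 = 0
  q_last : q (k + 1) = 1
  q_mono : ∀ l, l ≤ k → q l ≤ q (l + 1)

/-- The recursively defined functions of the Parisi functional:
`parisiB m v k j = A_{k-j}`, so `parisiB m v k 0 = A_k = log cosh` and
`parisiB m v k k = A_0`, where
`A_{l-1}(x) = (1/m_l) log ∫ exp (m_l A_l (x+y)) dγ_{v_l}(y)`. -/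
def parisiB (m v : ℕ → ℝ) (k : ℕ) : ℕ → ℝ → ℝ
  | 0, x => Real.log (Real.cosh x)
  | j + 1, x =>
      (1 / m (k - j)) *
        Real.log (∫ y, Real.exp (m (k - j) * parisiB m v k j (x + y)) ∂(gauss (v (k - j))))

/-- The variances `v_0 = ξ'(q_1)` and `v_l = ξ'(q_{l+1}) - ξ'(q_l)` for `l ≥ 1`. -/
def opVar (S : Finset ℕ) (β : ℕ → ℝ) {k : ℕ} (op : OrderParam k) : ℕ → ℝ := fun l =>
  if l = 0 then xiFn' S β (op.q 1) else xiFn' S β (op.q (l + 1)) - xiFn' S β (op.q l)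

/-- The discrete Parisi functional
`P(m,q;β) = ∫ A_0(h+y) dγ_{v_0}(y) - (1/2) Σ_{1≤l≤k} m_l (θ(q_{l+1}) - θ(q_l))`. -/
def parisiP (S : Finset ℕ) (h : ℝ) (β : ℕ → ℝ) {k : ℕ} (op : OrderParam k) : ℝ :=
  (∫ y, parisiB op.m (opVar S β op) k k (h + y) ∂(gauss (opVar S β op 0))) -
    (1 / 2) * ∑ l ∈ Finset.Icc 1 k, op.m l * (thetaFn S β (op.q (l + 1)) - thetaFn S β (op.q l))

/-- The Parisi formula: infimum over `k ≥ 1` and discrete order parameters with at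
most `k` atoms. -/
def parisiF (S : Finset ℕ) (h : ℝ) (β : ℕ → ℝ) : ℝ :=
  sInf {x : ℝ | ∃ k : ℕ, 1 ≤ k ∧ ∃ op : OrderParam k, x = parisiP S h β op}

/-!
Let `X` be the Legendre transform of `ξ` over `[0, 1]`, so that `θ(q) = X(ξ'(q))`. Describing an
order parameter by its masses as a function of the time `ξ'(q)` turns `P(β)` into the infimum,
over all nondecreasing step functions `m : [0, T] → (0, 1]` with `T` fixed, of
`Ψ_m(h) - (1/2) ∫ m dX`. Here `Ψ_m` does not depend on `β`, and `X` is differentiable in `β_p` by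
Danskin's theorem.

In general an infimum of differentiable functions is not differentiable. But `m ↦ Ψ_m(h)` is
strictly convex, quantitatively: if two near-minimizers are close in value to their midpoint, then
they are close in `L¹`. Hence, as `β_p → t`, the slopes at `t` of all near-minimizers approach each
other, and the infimum inherits their common limit as its derivative.
-/

namespace Parisi

/-! ### Functions of exponential growth -/

/-- Measurable functions of at most exponential growth: a class closed under algebraic operations
and translations, all of whose members are integrable under every Gaussian measure. -/
structure ExpGrowth (g : ℝ → ℝ) : Prop where
  measurable : Measurable g
  bound : ∃ C K : ℝ, 0 ≤ C ∧ 0 ≤ K ∧ ∀ y, |g y| ≤ C * exp (K * |y|)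

section ExpGrowth

variable {f g A : ℝ → ℝ}

theorem ExpGrowth.of_bounded (hg : Measurable g) {C : ℝ} (h : ∀ y, |g y| ≤ C) : ExpGrowth g :=
  ⟨hg, C, 0, (abs_nonneg _).trans (h 0), le_rfl, fun y => by simpa using h y⟩

theorem ExpGrowth.const (c : ℝ) : ExpGrowth fun _ => c :=
  .of_bounded measurable_const fun _ => le_rfl

theorem ExpGrowth.id : ExpGrowth fun y => y :=
  ⟨measurable_id, 1, 1, zero_le_one, zero_le_one, fun y => by
    simp only [one_mul]
    linarith [add_one_le_exp |y|]⟩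

theorem ExpGrowth.add (hf : ExpGrowth f) (hg : ExpGrowth g) : ExpGrowth fun y => f y + g y := by
  obtain ⟨C, K, hC, hK, hfb⟩ := hf.bound
  obtain ⟨C', K', hC', hK', hgb⟩ := hg.bound
  refine ⟨hf.measurable.add hg.measurable, C + C', K + K', by positivity, by positivity,
    fun y => ?_⟩
  calc |f y + g y| ≤ |f y| + |g y| := abs_add_le _ _
    _ ≤ C * exp (K * |y|) + C' * exp (K' * |y|) := add_le_add (hfb y) (hgb y)
    _ ≤ C * exp ((K + K') * |y|) + C' * exp ((K + K') * |y|) := by gcongr <;> linarith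
    _ = (C + C') * exp ((K + K') * |y|) := by ring

theorem ExpGrowth.mul (hf : ExpGrowth f) (hg : ExpGrowth g) : ExpGrowth fun y => f y * g y := by
  obtain ⟨C, K, hC, hK, hfb⟩ := hf.bound
  obtain ⟨C', K', hC', hK', hgb⟩ := hg.bound
  refine ⟨hf.measurable.mul hg.measurable, C * C', K + K', by positivity, by positivity,
    fun y => ?_⟩
  calc |f y * g y| = |f y| * |g y| := abs_mul _ _
    _ ≤ (C * exp (K * |y|)) * (C' * exp (K' * |y|)) :=
      mul_le_mul (hfb y) (hgb y) (abs_nonneg _) (by positivity)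
    _ = C * C' * exp ((K + K') * |y|) := by rw [add_mul, exp_add]; ring

theorem ExpGrowth.const_mul (c : ℝ) (hf : ExpGrowth f) : ExpGrowth fun y => c * f y :=
  (ExpGrowth.const c).mul hf

theorem ExpGrowth.sub (hf : ExpGrowth f) (hg : ExpGrowth g) : ExpGrowth fun y => f y - g y := by
  simpa [sub_eq_add_neg] using hf.add (hg.const_mul (-1))

theorem ExpGrowth.sq (hf : ExpGrowth f) : ExpGrowth fun y => f y ^ 2 := by
  simpa [pow_two] using hf.mul hf

theorem ExpGrowth.abs (hf : ExpGrowth f) : ExpGrowth fun y => |f y| := by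
  obtain ⟨C, K, hC, hK, hfb⟩ := hf.bound
  exact ⟨hf.measurable.abs, C, K, hC, hK, fun y => by simpa using hfb y⟩

theorem ExpGrowth.mono (hf : ExpGrowth f) (hg : Measurable g) (h : ∀ y, |g y| ≤ f y) :
    ExpGrowth g := by
  obtain ⟨C, K, hC, hK, hfb⟩ := hf.bound
  exact ⟨hg, C, K, hC, hK, fun y => (h y).trans ((le_abs_self _).trans (hfb y))⟩

theorem ExpGrowth.exp_mul_abs (K : ℝ) : ExpGrowth fun y => exp (K * |y|) := by
  refine ⟨by fun_prop, 1, |K|, zero_le_one, abs_nonneg _, fun y => ?_⟩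
  rw [abs_of_pos (exp_pos _), one_mul]
  gcongr
  exact le_abs_self _

theorem ExpGrowth.exp_mul (c : ℝ) : ExpGrowth fun y => exp (c * y) := by
  refine (ExpGrowth.exp_mul_abs |c|).mono (by fun_prop) fun y => ?_
  rw [abs_of_pos (exp_pos _), ← abs_mul]
  gcongr
  exact le_abs_self _

theorem ExpGrowth.comp_const_add (hf : ExpGrowth f) (x : ℝ) : ExpGrowth fun y => f (x + y) := by
  obtain ⟨C, K, hC, hK, hfb⟩ := hf.bound
  refine ⟨hf.measurable.comp (by fun_prop), C * exp (K * |x|), K, by positivity, hK,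
    fun y => (hfb _).trans ?_⟩
  rw [mul_assoc, ← exp_add, ← mul_add]
  gcongr
  exact abs_add_le _ _

theorem abs_sub_le_of_lipschitz (hA : LipschitzWith 1 A) (x y : ℝ) : |A x - A y| ≤ |x - y| := by
  simpa [Real.dist_eq] using hA.dist_le_mul x y

theorem abs_le_of_lipschitz (hA : LipschitzWith 1 A) (y : ℝ) : |A y| ≤ |A 0| + |y| := by
  have hy := abs_sub_le_of_lipschitz hA y 0
  rw [sub_zero] at hy
  linarith [abs_sub_abs_le_abs_sub (A y) (A 0)]

theorem lipschitz_comp_const_add (hA : LipschitzWith 1 A) (x : ℝ) :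
    LipschitzWith 1 fun y => A (x + y) := by
  simpa [Function.comp_def] using hA.comp (isometry_add_left x).lipschitz

theorem ExpGrowth.of_lipschitz (hA : LipschitzWith 1 A) : ExpGrowth A :=
  ((ExpGrowth.const |A 0|).add ExpGrowth.id.abs).mono hA.continuous.measurable
    (abs_le_of_lipschitz hA)

theorem ExpGrowth.exp_mul_of_lipschitz (hA : LipschitzWith 1 A) (m : ℝ) :
    ExpGrowth fun y => exp (m * A y) := by
  have hAc := hA.continuous
  refine ((ExpGrowth.exp_mul_abs |m|).const_mul (exp (|m| * |A 0|))).mono (by fun_prop) fun y => ?_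
  rw [abs_of_pos (exp_pos _), ← exp_add, ← mul_add, exp_le_exp]
  calc m * A y ≤ |m| * |A y| := (le_abs_self _).trans (abs_mul _ _).le
    _ ≤ |m| * (|A 0| + |y|) := by gcongr; exact abs_le_of_lipschitz hA y

end ExpGrowth

/-! ### Gaussian integrals -/

section Gaussian

variable {v w : ℝ} {f F F' : ℝ → ℝ}

instance isProbabilityMeasure_gauss (v : ℝ) : IsProbabilityMeasure (gauss v) := by
  unfold gauss; infer_instance

theorem gauss_zero : gauss 0 = Measure.dirac 0 := by simp [gauss]

theorem ExpGrowth.integrable (hf : ExpGrowth f) (v : ℝ) : Integrable f (gauss v) := by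
  obtain ⟨C, K, hC, -, hfb⟩ := hf.bound
  have hsum : Integrable (fun y => exp (K * y) + exp (-K * y)) (gauss v) :=
    (integrable_exp_mul_gaussianReal K).add (integrable_exp_mul_gaussianReal (-K))
  refine (hsum.const_mul C).mono' hf.measurable.aestronglyMeasurable
    (ae_of_all _ fun y => (hfb y).trans ?_)
  gcongr
  rcases abs_cases y with ⟨hy, _⟩ | ⟨hy, _⟩ <;> rw [hy]
  · exact le_add_of_nonneg_right (exp_pos _).le
  · rw [mul_neg, ← neg_mul]
    exact le_add_of_nonneg_left (exp_pos _).le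

theorem integral_exp_mul_gauss (c : ℝ) (hv : 0 ≤ v) :
    ∫ y, exp (c * y) ∂gauss v = exp (c ^ 2 * v / 2) := by
  have hmgf := congrFun (mgf_fun_id_gaussianReal (μ := 0) (v := v.toNNReal)) c
  simp only [mgf, zero_mul, zero_add, Real.coe_toNNReal v hv] at hmgf
  rw [gauss, hmgf, mul_comm v]

theorem integral_id_gauss (v : ℝ) : ∫ y, y ∂gauss v = 0 := by simp [gauss]

theorem integral_gauss_eq_integral_pdf_mul (hv : 0 < v) (f : ℝ → ℝ) :
    ∫ y, f y ∂gauss v = ∫ y, gaussianPDFReal 0 v.toNNReal y * f y := by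
  rw [gauss, integral_gaussianReal_eq_integral_smul (by simpa using hv)]
  simp

theorem gaussianPDFReal_zero_toNNReal (hv : 0 < v) (y : ℝ) :
    gaussianPDFReal 0 v.toNNReal y = (√(2 * π * v))⁻¹ * exp (-y ^ 2 / (2 * v)) := by
  simp [gaussianPDFReal, Real.coe_toNNReal v hv.le]

theorem hasDerivAt_gaussianPDFReal (hv : 0 < v) (y : ℝ) :
    HasDerivAt (gaussianPDFReal 0 v.toNNReal) (gaussianPDFReal 0 v.toNNReal y * (-y / v)) y := by
  rw [funext (gaussianPDFReal_zero_toNNReal hv), mul_assoc (√(2 * π * v))⁻¹]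
  have hsq : HasDerivAt (fun y : ℝ => -y ^ 2 / (2 * v)) (-y / v) y :=
    ((hasDerivAt_pow 2 y).fun_neg.div_const (2 * v)).congr_deriv (by push_cast; field_simp)
  exact hsq.exp.const_mul _

theorem integrable_gaussianPDFReal_mul (hv : 0 < v) (hf : Integrable f (gauss v)) :
    Integrable fun y => gaussianPDFReal 0 v.toNNReal y * f y := by
  rw [gauss, gaussianReal_of_var_ne_zero _ (by simpa using hv),
    integrable_withDensity_iff_integrable_smul' (measurable_gaussianPDF _ _)
      (ae_of_all _ fun _ ↦ gaussianPDF_lt_top)] at hf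
  simpa [toReal_gaussianPDF] using hf

/-- The Cameron–Martin formula. -/
theorem integral_add_mul_gauss (hv : 0 ≤ v) (c : ℝ) (f : ℝ → ℝ) :
    ∫ y, f (y + v * c) ∂gauss v = ∫ y, f y * exp (c * y - c ^ 2 * v / 2) ∂gauss v := by
  rcases hv.eq_or_lt with rfl | hv
  · simp [gauss_zero]
  rw [integral_gauss_eq_integral_pdf_mul hv, integral_gauss_eq_integral_pdf_mul hv,
    ← integral_sub_right_eq_self _ (v * c)]
  congr 1 with y
  have hexp : exp (-(y - v * c) ^ 2 / (2 * v)) =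
      exp (-y ^ 2 / (2 * v)) * exp (c * y - c ^ 2 * v / 2) := by
    rw [← exp_add]; congr 1; field_simp; ring
  simp only [sub_add_cancel, gaussianPDFReal_zero_toNNReal hv, hexp]
  ring

/-- Gaussian integration by parts. -/
theorem integral_id_mul_gauss (hv : 0 ≤ v) (hF : ExpGrowth F) (hF' : ExpGrowth F')
    (hd : ∀ y, HasDerivAt F (F' y) y) :
    ∫ y, y * F y ∂gauss v = v * ∫ y, F' y ∂gauss v := by
  rcases hv.eq_or_lt with rfl | hv
  · simp [gauss_zero]
  have hpdf' : ∀ y, gaussianPDFReal 0 v.toNNReal y * (-y / v) * F y =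
      (-1 / v) * (gaussianPDFReal 0 v.toNNReal y * (y * F y)) := fun y => by ring
  have hparts := integral_mul_deriv_eq_deriv_mul_of_integrable
    (fun y _ => hasDerivAt_gaussianPDFReal hv y) (fun y _ => hd y)
    (integrable_gaussianPDFReal_mul hv (hF'.integrable v))
    ((integrable_congr (ae_of_all _ hpdf')).mpr
      ((integrable_gaussianPDFReal_mul hv ((ExpGrowth.id.mul hF).integrable v)).const_mul _))
    (integrable_gaussianPDFReal_mul hv (hF.integrable v))
  rw [integral_gauss_eq_integral_pdf_mul hv, integral_gauss_eq_integral_pdf_mul hv, hparts]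
  simp_rw [hpdf']
  rw [integral_const_mul]
  field_simp

theorem gauss_conv_gauss (hv : 0 ≤ v) (hw : 0 ≤ w) : gauss v ∗ gauss w = gauss (v + w) := by
  rw [gauss, gauss, gauss, gaussianReal_conv_gaussianReal, Real.toNNReal_add hv hw, zero_add]

theorem integral_integral_add_gauss (hv : 0 ≤ v) (hw : 0 ≤ w) (hf : ExpGrowth f) :
    ∫ y, ∫ z, f (y + z) ∂gauss w ∂gauss v = ∫ y, f y ∂gauss (v + w) := by
  have hconv := gauss_conv_gauss hv hw
  rw [← hconv, integral_conv (hconv ▸ hf.integrable _)]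

theorem integrable_integral_add_gauss (hv : 0 ≤ v) (hw : 0 ≤ w) (hf : ExpGrowth f) :
    Integrable (fun y => ∫ z, f (y + z) ∂gauss w) (gauss v) := by
  have hconv : Integrable f (gauss v ∗ gauss w) := gauss_conv_gauss hv hw ▸ hf.integrable _
  exact (hconv.comp_measurable measurable_add).integral_prod_left

theorem integral_gauss_eq_integral_sqrt_mul (hv : 0 ≤ v) (hf : Measurable f) :
    ∫ y, f y ∂gauss v = ∫ y, f (√v * y) ∂gauss 1 := by
  have hmap : gauss v = (gauss 1).map (fun y => √v * y) := by
    rw [gauss, gauss, gaussianReal_map_const_mul]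
    congr 1
    · simp
    · ext; simp [Real.sq_sqrt hv, hv]
  rw [hmap, integral_map (by fun_prop) hf.aestronglyMeasurable]

theorem hasDerivAt_integral_add_gauss (hF : ExpGrowth F) (hF' : ExpGrowth F')
    (hd : ∀ y, HasDerivAt F (F' y) y) (v x : ℝ) :
    HasDerivAt (fun x => ∫ y, F (x + y) ∂gauss v) (∫ y, F' (x + y) ∂gauss v) x := by
  obtain ⟨C, K, hC, hK, hb⟩ := hF'.bound
  refine (hasDerivAt_integral_of_dominated_loc_of_deriv_le (F := fun x y => F (x + y))
    (F' := fun x y => F' (x + y)) (s := Metric.ball x 1)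
    (bound := fun y => C * exp (K * (|x| + 1)) * exp (K * |y|)) (Metric.ball_mem_nhds x one_pos)
    (.of_forall fun z => (hF.comp_const_add z).measurable.aestronglyMeasurable)
    ((hF.comp_const_add x).integrable v) (hF'.comp_const_add x).measurable.aestronglyMeasurable
    (ae_of_all _ fun y z hz => ?_) (((ExpGrowth.exp_mul_abs K).const_mul _).integrable v)
    (ae_of_all _ fun y z _ => (hd (z + y)).comp_add_const z y)).2
  have hzx : |z - x| < 1 := by simpa [Real.dist_eq] using hz
  have hzy : |z + y| ≤ |x| + 1 + |y| := by
    linarith [abs_add_le z y, abs_sub_abs_le_abs_sub z x]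
  calc ‖F' (z + y)‖ ≤ C * exp (K * |z + y|) := hb _
    _ ≤ C * exp (K * (|x| + 1 + |y|)) := by gcongr
    _ = C * exp (K * (|x| + 1)) * exp (K * |y|) := by rw [mul_assoc, ← exp_add, ← mul_add]

theorem integral_le_log_integral_exp {μ : Measure ℝ} [IsProbabilityMeasure μ]
    (hf : Integrable f μ) (he : Integrable (fun y => exp (f y)) μ) :
    ∫ y, f y ∂μ ≤ log (∫ y, exp (f y) ∂μ) := by
  rw [Real.le_log_iff_exp_le (integral_exp_pos he)]
  exact convexOn_exp.map_integral_le continuous_exp.continuousOn isClosed_univ (by simp) hf he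

end Gaussian

/-! ### The Parisi operator -/

/-- The operator `T_{m,v} A (x) = (1/m) log ∫ exp (m A(x+y)) dγ_v(y)` by which the functions `A_l`
of the Parisi functional are defined recursively. -/
def parisiOp (m v : ℝ) (A : ℝ → ℝ) (x : ℝ) : ℝ :=
  (1 / m) * log (∫ y, exp (m * A (x + y)) ∂gauss v)

/-- The normalizing constant `∫ exp (m A(x+y)) dγ_v(y)` of the tilted measure `tiltedGauss`. -/
def partitionFn (m v : ℝ) (A : ℝ → ℝ) (x : ℝ) : ℝ := ∫ y, exp (m * A (x + y)) ∂gauss v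

/-- The Gibbs measure with density proportional to `y ↦ exp (m A(x+y))` with respect to `γ_v`. -/
def tiltedGauss (m v : ℝ) (A : ℝ → ℝ) (x : ℝ) : Measure ℝ :=
  (gauss v).tilted fun y => m * A (x + y)

section ParisiOp

variable {m v w : ℝ} {A B f : ℝ → ℝ}

theorem ExpGrowth.exp_mul_add_of_lipschitz (hA : LipschitzWith 1 A) (m x : ℝ) :
    ExpGrowth fun y => exp (m * A (x + y)) :=
  .exp_mul_of_lipschitz (lipschitz_comp_const_add hA x) m

theorem partitionFn_pos (hA : LipschitzWith 1 A) (m v x : ℝ) : 0 < partitionFn m v A x :=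
  integral_exp_pos ((ExpGrowth.exp_mul_add_of_lipschitz hA m x).integrable v)

theorem isProbabilityMeasure_tiltedGauss (hA : LipschitzWith 1 A) (m v x : ℝ) :
    IsProbabilityMeasure (tiltedGauss m v A x) :=
  isProbabilityMeasure_tilted ((ExpGrowth.exp_mul_add_of_lipschitz hA m x).integrable v)

theorem integral_tiltedGauss (m v : ℝ) (A : ℝ → ℝ) (x : ℝ) (f : ℝ → ℝ) :
    ∫ y, f y ∂tiltedGauss m v A x =
      (∫ y, f y * exp (m * A (x + y)) ∂gauss v) / partitionFn m v A x := by
  rw [tiltedGauss, integral_tilted, ← integral_div]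
  congr 1 with y
  rw [smul_eq_mul, partitionFn]
  ring

theorem ExpGrowth.integrable_tiltedGauss (hf : ExpGrowth f) (hA : LipschitzWith 1 A) (m v x : ℝ) :
    Integrable f (tiltedGauss m v A x) := by
  have hexp := ExpGrowth.exp_mul_add_of_lipschitz hA m x
  rw [tiltedGauss, integrable_tilted_iff (hexp.integrable v)]
  simpa [smul_eq_mul] using (hexp.mul hf).integrable v

theorem integral_mul_exp_eq_partitionFn_mul (hA : LipschitzWith 1 A) (m v x : ℝ) (f : ℝ → ℝ) :
    ∫ y, f y * exp (m * A (x + y)) ∂gauss v =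
      partitionFn m v A x * ∫ y, f y ∂tiltedGauss m v A x := by
  rw [integral_tiltedGauss, mul_div_cancel₀ _ (partitionFn_pos hA m v x).ne']

theorem mul_parisiOp (hm : 0 < m) (v : ℝ) (A : ℝ → ℝ) (x : ℝ) :
    m * parisiOp m v A x = log (partitionFn m v A x) := by
  unfold parisiOp partitionFn; field_simp

theorem exp_mul_parisiOp (hm : 0 < m) (hA : LipschitzWith 1 A) (v x : ℝ) :
    exp (m * parisiOp m v A x) = partitionFn m v A x := by
  rw [mul_parisiOp hm, Real.exp_log (partitionFn_pos hA m v x)]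

theorem parisiOp_zero (hm : 0 < m) (A : ℝ → ℝ) : parisiOp m 0 A = A := by
  ext x
  simp only [parisiOp, gauss_zero, integral_dirac, add_zero, log_exp]
  field_simp

theorem parisiOp_mono (hm : 0 < m) (hA : LipschitzWith 1 A) (hB : LipschitzWith 1 B)
    (h : ∀ x, A x ≤ B x) (v x : ℝ) : parisiOp m v A x ≤ parisiOp m v B x := by
  refine mul_le_mul_of_nonneg_left (Real.log_le_log (partitionFn_pos hA m v x) ?_) (by positivity)
  refine integral_mono ((ExpGrowth.exp_mul_add_of_lipschitz hA m x).integrable v)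
    ((ExpGrowth.exp_mul_add_of_lipschitz hB m x).integrable v) fun z => ?_
  have := h (x + z)
  dsimp only
  gcongr

theorem parisiOp_add_const (hm : 0 < m) (hA : LipschitzWith 1 A) (c v x : ℝ) :
    parisiOp m v (fun y => A y + c) x = parisiOp m v A x + c := by
  have hZ : partitionFn m v (fun y => A y + c) x = exp (m * c) * partitionFn m v A x := by
    simp only [partitionFn, ← integral_const_mul, mul_add, exp_add, mul_comm]
  refine mul_left_cancel₀ hm.ne' ?_
  rw [mul_add, mul_parisiOp hm, mul_parisiOp hm, hZ,
    Real.log_mul (exp_pos _).ne' (partitionFn_pos hA m v x).ne', Real.log_exp, add_comm]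

theorem parisiOp_parisiOp (hm : 0 < m) (hA : LipschitzWith 1 A) (hv : 0 ≤ v) (hw : 0 ≤ w) :
    parisiOp m v (parisiOp m w A) = parisiOp m (v + w) A := by
  ext x
  have hexp : ∀ y, exp (m * parisiOp m w A (x + y)) = ∫ z, exp (m * A (x + (y + z))) ∂gauss w :=
    fun y => by simp only [exp_mul_parisiOp hm hA, partitionFn, add_assoc]
  rw [parisiOp]
  simp_rw [hexp]
  rw [integral_integral_add_gauss hv hw (ExpGrowth.exp_mul_add_of_lipschitz hA m x), parisiOp]

theorem integral_le_parisiOp (hm : 0 < m) (hA : LipschitzWith 1 A) (v x : ℝ) :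
    ∫ y, A (x + y) ∂gauss v ≤ parisiOp m v A x := by
  have hAx := (ExpGrowth.of_lipschitz hA).comp_const_add x
  have hjensen := integral_le_log_integral_exp ((hAx.const_mul m).integrable v)
    ((ExpGrowth.exp_mul_add_of_lipschitz hA m x).integrable v)
  rw [integral_const_mul] at hjensen
  rwa [parisiOp, one_div, le_inv_mul_iff₀ hm]

end ParisiOp

/-! ### Moments and derivatives of the tilted measure -/

section Tilted

variable {m v : ℝ} {A u F F' : ℝ → ℝ}

theorem ExpGrowth.of_hasDerivAt (hA : LipschitzWith 1 A) (hAu : ∀ x, HasDerivAt A (u x) x) :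
    ExpGrowth u := by
  have hu : u = deriv A := funext fun x => (hAu x).deriv.symm
  refine .of_bounded (C := 1) (hu ▸ measurable_deriv A) fun y => ?_
  simpa [hu] using norm_deriv_le_of_lipschitz hA

theorem ExpGrowth.memLp_two_tiltedGauss (hF : ExpGrowth F) (hA : LipschitzWith 1 A) (m v x : ℝ) :
    MemLp F 2 (tiltedGauss m v A x) :=
  (memLp_two_iff_integrable_sq hF.measurable.aestronglyMeasurable).mpr
    (hF.sq.integrable_tiltedGauss hA m v x)

theorem hasDerivAt_mul_exp (hAu : ∀ x, HasDerivAt A (u x) x) (hF : ∀ y, HasDerivAt F (F' y) y)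
    (m x y : ℝ) : HasDerivAt (fun y => F y * exp (m * A (x + y)))
      ((F' y + m * (F y * u (x + y))) * exp (m * A (x + y))) y :=
  ((hF y).mul ((((hAu (x + y)).comp_const_add x y).const_mul m).exp)).congr_deriv (by ring)

/-- Gaussian integration by parts, for the tilted measure. -/
theorem integral_id_mul_tiltedGauss (hA : LipschitzWith 1 A) (hAu : ∀ x, HasDerivAt A (u x) x)
    (hF : ExpGrowth F) (hF' : ExpGrowth F') (hFF' : ∀ y, HasDerivAt F (F' y) y) (hv : 0 ≤ v)
    (m x : ℝ) :
    ∫ y, y * F y ∂tiltedGauss m v A x =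
      v * ∫ y, (F' y + m * (F y * u (x + y))) ∂tiltedGauss m v A x := by
  have hexp := ExpGrowth.exp_mul_add_of_lipschitz hA m x
  have hux := (ExpGrowth.of_hasDerivAt hA hAu).comp_const_add x
  have hibp := integral_id_mul_gauss hv (hF.mul hexp)
    ((hF'.add ((hF.mul hux).const_mul m)).mul hexp) (hasDerivAt_mul_exp hAu hFF' m x)
  simp_rw [← mul_assoc _ (F _)] at hibp
  rw [integral_mul_exp_eq_partitionFn_mul hA, integral_mul_exp_eq_partitionFn_mul hA] at hibp
  refine mul_left_cancel₀ (partitionFn_pos hA m v x).ne' (hibp.trans ?_)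
  simp only [mul_assoc, mul_left_comm]

theorem hasDerivAt_integral_mul_exp (hA : LipschitzWith 1 A) (hAu : ∀ x, HasDerivAt A (u x) x)
    (hF : ExpGrowth F) (hF' : ExpGrowth F') (hFF' : ∀ y, HasDerivAt F (F' y) y) (m v x : ℝ) :
    HasDerivAt (fun x => ∫ y, F (x + y) * exp (m * A (x + y)) ∂gauss v)
      (partitionFn m v A x *
        ∫ y, (F' (x + y) + m * (F (x + y) * u (x + y))) ∂tiltedGauss m v A x) x := by
  have hexp := ExpGrowth.exp_mul_of_lipschitz hA m
  have hu := ExpGrowth.of_hasDerivAt hA hAu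
  have hd : ∀ y, HasDerivAt (fun y => F y * exp (m * A y))
      ((F' y + m * (F y * u y)) * exp (m * A y)) y := fun y => by
    simpa using hasDerivAt_mul_exp hAu hFF' m 0 y
  rw [← integral_mul_exp_eq_partitionFn_mul hA]
  exact hasDerivAt_integral_add_gauss (hF.mul hexp)
    ((hF'.add ((hF.mul hu).const_mul m)).mul hexp) hd v x

theorem hasDerivAt_partitionFn (hA : LipschitzWith 1 A) (hAu : ∀ x, HasDerivAt A (u x) x)
    (m v x : ℝ) : HasDerivAt (partitionFn m v A)
      (partitionFn m v A x * (m * ∫ y, u (x + y) ∂tiltedGauss m v A x)) x := by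
  have hd := hasDerivAt_integral_mul_exp hA hAu (.const 1) (.const 0)
    (fun y => hasDerivAt_const y 1) m v x
  simp only [one_mul, zero_add, integral_const_mul] at hd
  exact hd

theorem hasDerivAt_parisiOp (hA : LipschitzWith 1 A) (hAu : ∀ x, HasDerivAt A (u x) x)
    (hm : 0 < m) (v x : ℝ) :
    HasDerivAt (parisiOp m v A) (∫ y, u (x + y) ∂tiltedGauss m v A x) x := by
  have hZ := partitionFn_pos hA m v x
  refine (((hasDerivAt_partitionFn hA hAu m v x).log hZ.ne').const_mul (1 / m)).congr_deriv ?_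
  field_simp

theorem integral_add_const_mul_mul_tiltedGauss (hA : LipschitzWith 1 A)
    (hAu : ∀ x, HasDerivAt A (u x) x) (hF : ExpGrowth F) (hF' : ExpGrowth F') (m v x : ℝ) :
    ∫ y, (F' y + m * (F y * u (x + y))) ∂tiltedGauss m v A x =
      (∫ y, F' y ∂tiltedGauss m v A x) +
        m * (cov[F, fun y => u (x + y); tiltedGauss m v A x] +
          (∫ y, F y ∂tiltedGauss m v A x) * ∫ y, u (x + y) ∂tiltedGauss m v A x) := by
  have hux := (ExpGrowth.of_hasDerivAt hA hAu).comp_const_add x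
  have := isProbabilityMeasure_tiltedGauss hA m v x
  rw [covariance_eq_sub (hF.memLp_two_tiltedGauss hA m v x) (hux.memLp_two_tiltedGauss hA m v x),
    integral_add (hF'.integrable_tiltedGauss hA m v x)
      (((hF.mul hux).const_mul m).integrable_tiltedGauss hA m v x), integral_const_mul,
    sub_add_cancel]
  rfl

/-- The derivative in `x` acts on the integrand and, through the Gibbs weight, as a covariance. -/
theorem hasDerivAt_integral_tiltedGauss (hA : LipschitzWith 1 A)
    (hAu : ∀ x, HasDerivAt A (u x) x) (hF : ExpGrowth F) (hF' : ExpGrowth F')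
    (hFF' : ∀ y, HasDerivAt F (F' y) y) (m v x : ℝ) :
    HasDerivAt (fun x => ∫ y, F (x + y) ∂tiltedGauss m v A x)
      ((∫ y, F' (x + y) ∂tiltedGauss m v A x) +
        m * cov[fun y => F (x + y), fun y => u (x + y); tiltedGauss m v A x]) x := by
  have hZ := partitionFn_pos hA m v x
  simp_rw [integral_tiltedGauss m v A _ (fun y => F (_ + y))]
  refine ((hasDerivAt_integral_mul_exp hA hAu hF hF' hFF' m v x).div
    (hasDerivAt_partitionFn hA hAu m v x) hZ.ne').congr_deriv ?_
  rw [integral_mul_exp_eq_partitionFn_mul hA m v x (fun y => F (x + y)),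
    integral_add_const_mul_mul_tiltedGauss hA hAu (hF.comp_const_add x) (hF'.comp_const_add x)]
  field_simp
  ring

theorem integral_id_tiltedGauss (hA : LipschitzWith 1 A) (hAu : ∀ x, HasDerivAt A (u x) x)
    (hv : 0 ≤ v) (m x : ℝ) :
    ∫ y, y ∂tiltedGauss m v A x = m * v * ∫ y, u (x + y) ∂tiltedGauss m v A x := by
  have hibp := integral_id_mul_tiltedGauss hA hAu (.const 1) (.const 0)
    (fun y => hasDerivAt_const y 1) hv m x
  simp only [mul_one, one_mul, zero_add, integral_const_mul] at hibp
  rw [hibp]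
  ring

theorem covariance_id_tiltedGauss (hA : LipschitzWith 1 A) (hAu : ∀ x, HasDerivAt A (u x) x)
    (hF : ExpGrowth F) (hF' : ExpGrowth F') (hFF' : ∀ y, HasDerivAt F (F' y) y) (hv : 0 ≤ v)
    (m x : ℝ) :
    cov[fun y => y, F; tiltedGauss m v A x] =
      v * ((∫ y, F' y ∂tiltedGauss m v A x) +
        m * cov[F, fun y => u (x + y); tiltedGauss m v A x]) := by
  have := isProbabilityMeasure_tiltedGauss hA m v x
  rw [covariance_eq_sub (ExpGrowth.id.memLp_two_tiltedGauss hA m v x)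
    (hF.memLp_two_tiltedGauss hA m v x), integral_id_tiltedGauss hA hAu hv]
  simp only [Pi.mul_apply]
  rw [integral_id_mul_tiltedGauss hA hAu hF hF' hFF' hv,
    integral_add_const_mul_mul_tiltedGauss hA hAu hF hF']
  ring

end Tilted

section TiltedCosh

variable {m v : ℝ} {A : ℝ → ℝ}

theorem integral_exp_mul_tiltedGauss_le (hA : LipschitzWith 1 A) (hm : 0 ≤ m) (hm1 : m ≤ 1)
    (hv : 0 ≤ v) (b x : ℝ) :
    ∫ y, exp (b * y) ∂tiltedGauss m v A x ≤ exp (b ^ 2 * v / 2 + |b| * v) := by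
  have hshift : ∫ y, exp (b * y) * exp (m * A (x + y)) ∂gauss v =
      exp (b ^ 2 * v / 2) * partitionFn m v A (x + v * b) := by
    have hcm := integral_add_mul_gauss hv b fun y => exp (m * A (x + y))
    simp only [partitionFn, add_right_comm x, add_assoc x]
    rw [hcm, ← integral_const_mul]
    congr 1 with y
    rw [← exp_add, ← exp_add, ← exp_add]
    ring_nf
  have hZ : partitionFn m v A (x + v * b) ≤ exp (|b| * v) * partitionFn m v A x := by
    rw [partitionFn, partitionFn, ← integral_const_mul]
    refine integral_mono ((ExpGrowth.exp_mul_add_of_lipschitz hA m _).integrable v)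
      (((ExpGrowth.exp_mul_add_of_lipschitz hA m x).const_mul _).integrable v) fun y => ?_
    have hlip := (abs_le.mp (abs_sub_le_of_lipschitz hA (x + v * b + y) (x + y))).2
    rw [show x + v * b + y - (x + y) = b * v by ring, abs_mul, abs_of_nonneg hv] at hlip
    have hbv : 0 ≤ |b| * v := by positivity
    dsimp only
    rw [← exp_add, exp_le_exp]
    nlinarith
  rw [integral_tiltedGauss, div_le_iff₀ (partitionFn_pos hA m v x), hshift, exp_add, mul_assoc]
  gcongr

theorem ExpGrowth.cosh_mul_add (b x : ℝ) : ExpGrowth fun y => cosh (b * (x + y)) := by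
  have hcosh := ((ExpGrowth.exp_mul b).add (ExpGrowth.exp_mul (-b))).const_mul (1 / 2)
  convert hcosh.comp_const_add x using 2 with y
  rw [cosh_eq]
  ring_nf

theorem ExpGrowth.one_div_cosh_mul_add (b x : ℝ) :
    ExpGrowth fun y => 1 / cosh (b * (x + y)) := by
  refine .of_bounded (C := 1) ((ExpGrowth.cosh_mul_add b x).measurable.const_div 1) fun y => ?_
  rw [abs_of_pos (one_div_pos.mpr (cosh_pos _)), div_le_one (cosh_pos _)]
  exact one_le_cosh _

theorem integral_cosh_tiltedGauss_le (hA : LipschitzWith 1 A) (hm : 0 ≤ m) (hm1 : m ≤ 1)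
    (hv : 0 ≤ v) (b x : ℝ) :
    ∫ y, cosh (b * (x + y)) ∂tiltedGauss m v A x ≤
      exp (b ^ 2 * v / 2 + |b| * v) * cosh (b * x) := by
  have hpos := integral_exp_mul_tiltedGauss_le hA hm hm1 hv b x
  have hneg := integral_exp_mul_tiltedGauss_le hA hm hm1 hv (-b) x
  rw [abs_neg, neg_sq] at hneg
  have hsplit : ∀ y, cosh (b * (x + y)) =
      exp (b * x) / 2 * exp (b * y) + exp (-b * x) / 2 * exp (-b * y) := fun y => by
    rw [cosh_eq, show -(b * (x + y)) = -b * x + -b * y by ring, mul_add, exp_add, exp_add]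
    ring
  have hint : ∀ b' : ℝ, Integrable (fun y => exp (b' * x) / 2 * exp (b' * y))
      (tiltedGauss m v A x) := fun b' =>
    ((ExpGrowth.exp_mul b').const_mul _).integrable_tiltedGauss hA m v x
  simp_rw [hsplit]
  rw [integral_add (hint b) (hint (-b)), integral_const_mul, integral_const_mul, cosh_eq,
    ← neg_mul]
  nlinarith [exp_pos (b * x), exp_pos (-b * x)]

theorem le_integral_one_div_cosh_tiltedGauss (hA : LipschitzWith 1 A) (hm : 0 ≤ m) (hm1 : m ≤ 1)
    (hv : 0 ≤ v) (b x : ℝ) :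
    exp (-(b ^ 2 * v / 2 + |b| * v)) / cosh (b * x) ≤
      ∫ y, 1 / cosh (b * (x + y)) ∂tiltedGauss m v A x := by
  have := isProbabilityMeasure_tiltedGauss hA m v x
  have hcosh := integral_cosh_tiltedGauss_le hA hm hm1 hv b x
  have hcoshInt := (ExpGrowth.cosh_mul_add b x).integrable_tiltedGauss hA m v x
  set E := exp (b ^ 2 * v / 2 + |b| * v) with hE
  have hEpos : 0 < E := exp_pos _
  rw [exp_neg, ← hE]
  set a := E⁻¹ / cosh (b * x) with ha
  -- `1 / t` lies above its tangent lines `2 a - a² t`.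
  have htangent : ∫ y, (2 * a - a ^ 2 * cosh (b * (x + y))) ∂tiltedGauss m v A x ≤
      ∫ y, 1 / cosh (b * (x + y)) ∂tiltedGauss m v A x := by
    refine integral_mono ((integrable_const _).sub (hcoshInt.const_mul _))
      ((ExpGrowth.one_div_cosh_mul_add b x).integrable_tiltedGauss hA m v x) fun y => ?_
    dsimp only
    rw [le_div_iff₀ (cosh_pos _)]
    nlinarith [sq_nonneg (a * cosh (b * (x + y)) - 1)]
  rw [integral_sub (integrable_const _) (hcoshInt.const_mul _), integral_const, probReal_univ,
    one_smul, integral_const_mul] at htangent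
  have hmean : a ^ 2 * ∫ y, cosh (b * (x + y)) ∂tiltedGauss m v A x ≤ a :=
    calc _ ≤ a ^ 2 * (E * cosh (b * x)) := by gcongr
      _ = a := by rw [ha]; field_simp
  linarith

end TiltedCosh

/-! ### The class of functions preserved by the Parisi operators -/

/-- `ParisiClass c A u u'`: the function `A` has first derivative `u` and second derivative `u'`,
with `|u| ≤ 1` and `c / cosh (2x) ≤ u' ≤ 1 - u²`. It contains `log cosh` and is preserved by the
operators `parisiOp m v` with `0 < m ≤ 1`, up to the value of the constant `c ≥ 0`. -/
structure ParisiClass (c : ℝ) (A u u' : ℝ → ℝ) : Prop where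
  nonneg : 0 ≤ c
  hasDerivAt : ∀ x, HasDerivAt A (u x) x
  hasDerivAt_slope : ∀ x, HasDerivAt u (u' x) x
  abs_slope_le_one : ∀ x, |u x| ≤ 1
  div_cosh_le : ∀ x, c / cosh (2 * x) ≤ u' x
  le_one_sub_sq : ∀ x, u' x ≤ 1 - u x ^ 2

/-- The first derivative of `parisiOp m v A` if `A` has derivative `u`. -/
def meanSlope (m v : ℝ) (A u : ℝ → ℝ) (x : ℝ) : ℝ := ∫ y, u (x + y) ∂tiltedGauss m v A x

/-- The second derivative of `parisiOp m v A` if `A` has derivatives `u` and `u'`. -/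
def meanCurvature (m v : ℝ) (A u u' : ℝ → ℝ) (x : ℝ) : ℝ :=
  (∫ y, u' (x + y) ∂tiltedGauss m v A x) +
    m * Var[fun y => u (x + y); tiltedGauss m v A x]

namespace ParisiClass

variable {c m v : ℝ} {A u u' : ℝ → ℝ}

theorem curvature_nonneg (h : ParisiClass c A u u') (x : ℝ) : 0 ≤ u' x :=
  (div_nonneg h.nonneg (cosh_pos _).le).trans (h.div_cosh_le x)

theorem curvature_le_one (h : ParisiClass c A u u') (x : ℝ) : u' x ≤ 1 :=
  (h.le_one_sub_sq x).trans (sub_le_self _ (sq_nonneg _))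

theorem lipschitzWith (h : ParisiClass c A u u') : LipschitzWith 1 A :=
  lipschitzWith_of_nnnorm_deriv_le (fun x => (h.hasDerivAt x).differentiableAt) fun x => by
    simpa [← NNReal.coe_le_coe, (h.hasDerivAt x).deriv] using h.abs_slope_le_one x

theorem lipschitzWith_slope (h : ParisiClass c A u u') : LipschitzWith 1 u :=
  lipschitzWith_of_nnnorm_deriv_le (fun x => (h.hasDerivAt_slope x).differentiableAt) fun x => by
    simpa [← NNReal.coe_le_coe, (h.hasDerivAt_slope x).deriv, abs_of_nonneg (h.curvature_nonneg x)]
      using h.curvature_le_one x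

theorem expGrowth_slope (h : ParisiClass c A u u') : ExpGrowth u :=
  .of_hasDerivAt h.lipschitzWith h.hasDerivAt

theorem expGrowth_curvature (h : ParisiClass c A u u') : ExpGrowth u' :=
  .of_hasDerivAt h.lipschitzWith_slope h.hasDerivAt_slope

theorem memLp_two_slope (h : ParisiClass c A u u') (m v x : ℝ) :
    MemLp (fun y => u (x + y)) 2 (tiltedGauss m v A x) :=
  (h.expGrowth_slope.comp_const_add x).memLp_two_tiltedGauss h.lipschitzWith m v x

theorem hasDerivAt_meanSlope (h : ParisiClass c A u u') (m v x : ℝ) :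
    HasDerivAt (meanSlope m v A u) (meanCurvature m v A u u' x) x := by
  rw [meanCurvature, ← covariance_self (h.memLp_two_slope m v x).aestronglyMeasurable.aemeasurable]
  exact hasDerivAt_integral_tiltedGauss h.lipschitzWith h.hasDerivAt h.expGrowth_slope
    h.expGrowth_curvature h.hasDerivAt_slope m v x

theorem abs_meanSlope_le_one (h : ParisiClass c A u u') (m v x : ℝ) :
    |meanSlope m v A u x| ≤ 1 := by
  have := isProbabilityMeasure_tiltedGauss h.lipschitzWith m v x
  simpa [meanSlope] using norm_integral_le_of_norm_le_const (μ := tiltedGauss m v A x) (C := 1)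
    (f := fun y => u (x + y)) (ae_of_all _ fun y => h.abs_slope_le_one (x + y))

theorem le_meanCurvature (h : ParisiClass c A u u') (hm : 0 ≤ m) (hm1 : m ≤ 1) (hv : 0 ≤ v)
    (x : ℝ) : c * exp (-(4 * v)) / cosh (2 * x) ≤ meanCurvature m v A u u' x := by
  have hA := h.lipschitzWith
  calc c * exp (-(4 * v)) / cosh (2 * x)
      = c * (exp (-(2 ^ 2 * v / 2 + |2| * v)) / cosh (2 * x)) := by
        rw [mul_div_assoc, abs_two]; ring_nf
    _ ≤ c * ∫ y, 1 / cosh (2 * (x + y)) ∂tiltedGauss m v A x :=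
        mul_le_mul_of_nonneg_left (le_integral_one_div_cosh_tiltedGauss hA hm hm1 hv 2 x) h.nonneg
    _ = ∫ y, c * (1 / cosh (2 * (x + y))) ∂tiltedGauss m v A x := (integral_const_mul _ _).symm
    _ ≤ ∫ y, u' (x + y) ∂tiltedGauss m v A x :=
        integral_mono
          (((ExpGrowth.one_div_cosh_mul_add 2 x).const_mul c).integrable_tiltedGauss hA m v x)
          ((h.expGrowth_curvature.comp_const_add x).integrable_tiltedGauss hA m v x) fun y => by
            simpa [div_eq_mul_inv] using h.div_cosh_le (x + y)
    _ ≤ meanCurvature m v A u u' x :=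
        le_add_of_nonneg_right (mul_nonneg hm (variance_nonneg _ _))

theorem meanCurvature_le (h : ParisiClass c A u u') (hm1 : m ≤ 1) (v x : ℝ) :
    meanCurvature m v A u u' x ≤ 1 - meanSlope m v A u x ^ 2 := by
  have hA := h.lipschitzWith
  have := isProbabilityMeasure_tiltedGauss hA m v x
  have husq := (h.memLp_two_slope m v x).integrable_sq
  have hmean : ∫ y, u' (x + y) ∂tiltedGauss m v A x ≤
      1 - ∫ y, u (x + y) ^ 2 ∂tiltedGauss m v A x := by
    calc _ ≤ ∫ y, (1 - u (x + y) ^ 2) ∂tiltedGauss m v A x :=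
          integral_mono ((h.expGrowth_curvature.comp_const_add x).integrable_tiltedGauss hA m v x)
            ((integrable_const 1).sub husq) fun y => h.le_one_sub_sq _
      _ = _ := by rw [integral_sub (integrable_const 1) husq]; simp
  have hvar := variance_eq_sub (h.memLp_two_slope m v x)
  have hvar0 := variance_nonneg (fun y => u (x + y)) (tiltedGauss m v A x)
  simp only [Pi.pow_apply] at hvar
  rw [meanCurvature, meanSlope]
  nlinarith

theorem map_parisiOp (h : ParisiClass c A u u') (hm : 0 < m) (hm1 : m ≤ 1) (hv : 0 ≤ v) :
    ParisiClass (c * exp (-(4 * v))) (parisiOp m v A) (meanSlope m v A u)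
      (meanCurvature m v A u u') where
  nonneg := mul_nonneg h.nonneg (exp_pos _).le
  hasDerivAt := hasDerivAt_parisiOp h.lipschitzWith h.hasDerivAt hm v
  hasDerivAt_slope := h.hasDerivAt_meanSlope m v
  abs_slope_le_one := h.abs_meanSlope_le_one m v
  div_cosh_le := h.le_meanCurvature hm.le hm1 hv
  le_one_sub_sq := h.meanCurvature_le hm1 v

theorem covariance_id_slope (h : ParisiClass c A u u') (hv : 0 ≤ v) (m x : ℝ) :
    cov[fun y => y, fun y => u (x + y); tiltedGauss m v A x] =
      v * meanCurvature m v A u u' x := by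
  rw [covariance_id_tiltedGauss h.lipschitzWith h.hasDerivAt (h.expGrowth_slope.comp_const_add x)
    (h.expGrowth_curvature.comp_const_add x)
    (fun y => (h.hasDerivAt_slope (x + y)).comp_const_add x y) hv,
    covariance_self (h.memLp_two_slope m v x).aestronglyMeasurable.aemeasurable, meanCurvature]

theorem variance_id_tiltedGauss (h : ParisiClass c A u u') (hv : 0 ≤ v) (m x : ℝ) :
    Var[fun y => y; tiltedGauss m v A x] = v + m * v ^ 2 * meanCurvature m v A u u' x := by
  have := isProbabilityMeasure_tiltedGauss h.lipschitzWith m v x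
  rw [← covariance_self aemeasurable_id', covariance_id_tiltedGauss h.lipschitzWith h.hasDerivAt
    ExpGrowth.id (.const 1) hasDerivAt_id' hv, h.covariance_id_slope hv, integral_const,
    probReal_univ, one_smul]
  ring

/-- The part of the variance of `u(x+y)` explained by linear regression on `y`. -/
theorem mul_sq_meanCurvature_le_variance (h : ParisiClass c A u u') (hm : 0 < m) (hm1 : m ≤ 1)
    (hv : 0 ≤ v) (hv1 : v ≤ 1) (x : ℝ) :
    v * meanCurvature m v A u u' x ^ 2 / 2 ≤ Var[fun y => u (x + y); tiltedGauss m v A x] := by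
  have := isProbabilityMeasure_tiltedGauss h.lipschitzWith m v x
  have hU0 := (h.map_parisiOp hm hm1 hv).curvature_nonneg x
  have hU1 := (h.map_parisiOp hm hm1 hv).curvature_le_one x
  have hvar := variance_fun_sub (h.memLp_two_slope m v x)
    ((ExpGrowth.id.const_mul (meanCurvature m v A u u' x / 2)).memLp_two_tiltedGauss
      h.lipschitzWith m v x)
  rw [variance_const_mul, covariance_const_mul_right, covariance_comm, h.covariance_id_slope hv,
    h.variance_id_tiltedGauss hv] at hvar
  set U' := meanCurvature m v A u u' x
  have hresidual := (variance_nonneg _ _).trans_eq hvar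
  have hvarId : v + m * v ^ 2 * U' ≤ 2 * v := by
    have hmvU : m * v * U' ≤ 1 :=
      mul_le_one₀ (mul_le_one₀ hm1 hv hv1) hU0 hU1
    nlinarith
  nlinarith [mul_le_mul_of_nonneg_left hvarId (sq_nonneg (U' / 2))]

end ParisiClass

/-! ### Entropy of the tilted measure -/

/-- The relative entropy of `tiltedGauss m v A x` with respect to `γ_v`, that is, the integral of
`m A(x+y) - log Z` where `Z = partitionFn m v A x`. -/
def tiltEntropy (m v : ℝ) (A : ℝ → ℝ) (x : ℝ) : ℝ :=
  m * (∫ y, A (x + y) ∂tiltedGauss m v A x) - m * parisiOp m v A x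

section Entropy

variable {a m v : ℝ} {A B : ℝ → ℝ}

theorem integral_exp_mul_tilt_drift (hv : 0 ≤ v) (m a k x z : ℝ) (A B : ℝ → ℝ) :
    ∫ y, exp (a * B (z + v * k + y) + (-k * y - k ^ 2 * v / 2) - m * A (x + y))
        ∂tiltedGauss m v A x = partitionFn a v B z / partitionFn m v A x := by
  have hcm := integral_add_mul_gauss hv (-k) fun y => exp (a * B (z + v * k + y))
  rw [integral_tiltedGauss]
  congr 1
  calc _ = ∫ y, exp (a * B (z + v * k + y)) * exp (-k * y - (-k) ^ 2 * v / 2) ∂gauss v := by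
        congr 1 with y
        rw [← exp_add, ← exp_add]
        ring_nf
    _ = partitionFn a v B z := by
        rw [← hcm, partitionFn]
        congr 1 with y
        ring_nf

/-- The Donsker–Varadhan inequality for `B`, evaluated at the law of `y + v k` under the measure
tilted by `A`. -/
theorem mul_integral_tiltedGauss_le_mul_parisiOp_add (hA : LipschitzWith 1 A)
    (hB : LipschitzWith 1 B) (hm : 0 < m) (ha : 0 < a) (hv : 0 ≤ v) (k x z : ℝ) :
    a * ∫ y, B (z + v * k + y) ∂tiltedGauss m v A x ≤
      a * parisiOp a v B z + tiltEntropy m v A x +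
        (k * (∫ y, y ∂tiltedGauss m v A x) + k ^ 2 * v / 2) := by
  have := isProbabilityMeasure_tiltedGauss hA m v x
  have hBg := (ExpGrowth.of_lipschitz (lipschitz_comp_const_add hB (z + v * k))).const_mul a
  have hdrift := (ExpGrowth.id.const_mul (-k)).sub (.const (k ^ 2 * v / 2))
  have hAg := (ExpGrowth.of_lipschitz (lipschitz_comp_const_add hA x)).const_mul m
  have hexp : ExpGrowth fun y =>
      exp (a * B (z + v * k + y) + (-k * y - k ^ 2 * v / 2) - m * A (x + y)) := by
    convert ((ExpGrowth.exp_mul_add_of_lipschitz hB a (z + v * k)).mul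
      ((ExpGrowth.exp_mul (-k)).mul (.const (exp (-(k ^ 2 * v / 2)))))).mul
      (ExpGrowth.exp_mul_add_of_lipschitz hA (-m) x) using 2 with y
    simp only [← exp_add]
    ring_nf
  have hjensen := integral_le_log_integral_exp
    (((hBg.add hdrift).sub hAg).integrable_tiltedGauss hA m v x)
    (hexp.integrable_tiltedGauss hA m v x)
  rw [integral_exp_mul_tilt_drift hv, Real.log_div (partitionFn_pos hB a v z).ne'
    (partitionFn_pos hA m v x).ne', ← mul_parisiOp hm, ← mul_parisiOp ha,
    integral_sub ((hBg.add hdrift).integrable_tiltedGauss hA m v x)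
      (hAg.integrable_tiltedGauss hA m v x),
    integral_add (hBg.integrable_tiltedGauss hA m v x) (hdrift.integrable_tiltedGauss hA m v x),
    integral_sub ((ExpGrowth.id.const_mul (-k)).integrable_tiltedGauss hA m v x)
      (integrable_const _), integral_const, probReal_univ, one_smul, integral_const_mul,
    integral_const_mul, integral_const_mul] at hjensen
  rw [tiltEntropy]
  linarith

theorem tiltedGauss_zero (m v x : ℝ) : tiltedGauss m v (fun _ => 0) x = gauss v := by
  simp [tiltedGauss]

theorem mul_integral_gauss_le_mul_parisiOp_add (hB : LipschitzWith 1 B) (ha : 0 < a) (hv : 0 ≤ v)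
    (k z : ℝ) :
    a * ∫ y, B (z + v * k + y) ∂gauss v ≤ a * parisiOp a v B z + k ^ 2 * v / 2 := by
  simpa [tiltEntropy, parisiOp, tiltedGauss_zero, integral_id_gauss] using
    mul_integral_tiltedGauss_le_mul_parisiOp_add (m := 1) (LipschitzWith.const' (0 : ℝ)) hB
      one_pos ha hv k 0 z

end Entropy

/-- The distance at `x + y` from the graph of `A` down to its tangent line of slope `u x` at `x`. -/
def tangentGap (A u : ℝ → ℝ) (x y : ℝ) : ℝ := A (x + y) - A x - u x * y

/-- The third-order error constant in `tiltEntropy_le`. -/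
def entropyErrorConst : ℝ := ∫ y, y ^ 2 * (exp |y| * (2 * |y| + 1 / 2)) ∂gauss 1

section TangentGap

variable {c m v : ℝ} {A u u' : ℝ → ℝ}

theorem ExpGrowth.tangentGap (hA : LipschitzWith 1 A) (u : ℝ → ℝ) (x : ℝ) :
    ExpGrowth (tangentGap A u x) :=
  ((ExpGrowth.of_lipschitz (lipschitz_comp_const_add hA x)).sub (.const _)).sub
    (ExpGrowth.id.const_mul _)

theorem integral_eq_integral_tangentGap_add {μ : Measure ℝ} [IsProbabilityMeasure μ] {s x : ℝ}
    (hA : Integrable (fun y => A (x + (s + y))) μ) (hid : Integrable (fun y => y) μ)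
    (u : ℝ → ℝ) :
    ∫ y, A (x + (s + y)) ∂μ =
      (∫ y, tangentGap A u x (s + y) ∂μ) + (A x + u x * (s + ∫ y, y ∂μ)) := by
  have hlin : Integrable (fun y => u x * (s + y)) μ := ((integrable_const s).add hid).const_mul _
  have hdiff : Integrable (fun y => A (x + (s + y)) - A x) μ := hA.sub (integrable_const _)
  simp only [tangentGap]
  rw [integral_sub hdiff hlin, integral_sub hA (integrable_const _),
    integral_const_mul, integral_add (integrable_const s) hid]
  simp only [integral_const, probReal_univ, one_smul]
  ring

theorem ExpGrowth.sq_mul_exp_abs (b c : ℝ) :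
    ExpGrowth fun y => y ^ 2 * (exp (b * |y|) * (2 * |y| + c)) :=
  ExpGrowth.id.sq.mul
    ((ExpGrowth.exp_mul_abs b).mul ((ExpGrowth.id.abs.const_mul 2).add (.const c)))

theorem entropyErrorConst_nonneg : 0 ≤ entropyErrorConst :=
  integral_nonneg fun y => by dsimp only [Pi.zero_apply]; positivity

theorem integral_sq_mul_exp_abs_le (hv : 0 ≤ v) (hv1 : v ≤ 1) :
    ∫ y, y ^ 2 * (exp (1 * |y|) * (2 * |y| + v / 2)) ∂gauss v ≤ entropyErrorConst * (v * √v) := by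
  rw [integral_gauss_eq_integral_sqrt_mul hv (ExpGrowth.sq_mul_exp_abs 1 (v / 2)).measurable,
    entropyErrorConst, ← integral_mul_const]
  have hs : 0 ≤ √v := Real.sqrt_nonneg v
  have hs1 : √v ≤ 1 := Real.sqrt_le_one.mpr hv1
  have hss : √v * √v = v := Real.mul_self_sqrt hv
  refine integral_mono_of_nonneg (ae_of_all _ fun y => by dsimp only [Pi.zero_apply]; positivity)
    (by simpa using ((ExpGrowth.sq_mul_exp_abs 1 (1 / 2)).integrable 1).mul_const (v * √v))
    (ae_of_all _ fun y => ?_)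
  dsimp only
  rw [abs_mul, abs_of_nonneg hs, mul_pow, sq √v, hss]
  have hlin : 2 * (√v * |y|) + v / 2 ≤ √v * (2 * |y| + 1 / 2) := by nlinarith [abs_nonneg y]
  have hexp : exp (1 * (√v * |y|)) ≤ exp |y| := by
    rw [one_mul]
    gcongr
    exact mul_le_of_le_one_left (abs_nonneg y) hs1
  calc v * y ^ 2 * (exp (1 * (√v * |y|)) * (2 * (√v * |y|) + v / 2))
      ≤ v * y ^ 2 * (exp |y| * (√v * (2 * |y| + 1 / 2))) := by gcongr
    _ = y ^ 2 * (exp |y| * (2 * |y| + 1 / 2)) * (v * √v) := by ring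

namespace ParisiClass

theorem monotone_slope (h : ParisiClass c A u u') : Monotone u :=
  monotone_of_deriv_nonneg (fun z => (h.hasDerivAt_slope z).differentiableAt) fun z => by
    rw [(h.hasDerivAt_slope z).deriv]; exact h.curvature_nonneg z

theorem exists_tangentGap_eq (h : ParisiClass c A u u') (x y : ℝ) :
    ∃ r ∈ Set.Ioo (0 : ℝ) 1, tangentGap A u x y = (u (x + r * y) - u x) * y := by
  have hd : ∀ r, HasDerivAt (fun r => A (x + r * y)) (u (x + r * y) * y) r := fun r => by
    simpa [Function.comp_def] using
      (h.hasDerivAt (x + r * y)).comp r (((hasDerivAt_id r).mul_const y).const_add x)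
  obtain ⟨r, hr, hslope⟩ := exists_hasDerivAt_eq_slope _ _ one_pos
    (fun r _ => (hd r).continuousAt.continuousWithinAt) fun r _ => hd r
  refine ⟨r, hr, ?_⟩
  simp only [one_mul, zero_mul, add_zero, sub_zero, div_one] at hslope
  rw [tangentGap, sub_mul, hslope]

theorem tangentGap_nonneg (h : ParisiClass c A u u') (x y : ℝ) : 0 ≤ tangentGap A u x y := by
  obtain ⟨r, hr, hgap⟩ := h.exists_tangentGap_eq x y
  rw [hgap]
  rcases le_total 0 y with hy | hy
  · exact mul_nonneg (sub_nonneg.mpr (h.monotone_slope (by nlinarith [hr.1]))) hy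
  · exact mul_nonneg_of_nonpos_of_nonpos
      (sub_nonpos.mpr (h.monotone_slope (by nlinarith [hr.1]))) hy

theorem tangentGap_le_sq (h : ParisiClass c A u u') (x y : ℝ) : tangentGap A u x y ≤ y ^ 2 := by
  obtain ⟨r, hr, hgap⟩ := h.exists_tangentGap_eq x y
  have hlip := abs_sub_le_of_lipschitz h.lipschitzWith_slope (x + r * y) x
  rw [add_sub_cancel_left, abs_mul, abs_of_pos hr.1] at hlip
  calc tangentGap A u x y ≤ |u (x + r * y) - u x| * |y| := by
        rw [hgap, ← abs_mul]; exact le_abs_self _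
    _ ≤ |y| * |y| := mul_le_mul_of_nonneg_right
        (hlip.trans (mul_le_of_le_one_left (abs_nonneg y) hr.2.le)) (abs_nonneg y)
    _ = y ^ 2 := by rw [abs_mul_abs_self, sq]

theorem exp_mul_le_partitionFn (h : ParisiClass c A u u') (hm : 0 < m) (v x : ℝ) :
    exp (m * A x) ≤ partitionFn m v A x := by
  have hmean := integral_eq_integral_tangentGap_add (s := 0) (x := x) (μ := gauss v)
    (by simpa using (ExpGrowth.of_lipschitz
      (lipschitz_comp_const_add h.lipschitzWith x)).integrable v) (ExpGrowth.id.integrable v) u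
  have hgap : 0 ≤ ∫ y, tangentGap A u x (0 + y) ∂gauss v :=
    integral_nonneg fun y => h.tangentGap_nonneg x _
  rw [integral_id_gauss] at hmean
  simp only [zero_add, add_zero, mul_zero] at hmean hgap
  have hop := integral_le_parisiOp hm h.lipschitzWith v x
  rw [← exp_mul_parisiOp hm h.lipschitzWith]
  gcongr
  linarith

theorem integral_tangentGap_tiltedGauss_le (h : ParisiClass c A u u') (hm : 0 < m) (hm1 : m ≤ 1)
    (v x : ℝ) :
    ∫ y, tangentGap A u x y ∂tiltedGauss m v A x ≤
      ∫ y, tangentGap A u x y * exp (1 * |y|) ∂gauss v := by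
  have hgap := ExpGrowth.tangentGap h.lipschitzWith u x
  rw [integral_tiltedGauss, div_le_iff₀ (partitionFn_pos h.lipschitzWith m v x),
    ← integral_mul_const]
  refine integral_mono
    ((hgap.mul (ExpGrowth.exp_mul_add_of_lipschitz h.lipschitzWith m x)).integrable v)
    (((hgap.mul (ExpGrowth.exp_mul_abs 1)).integrable v).mul_const _) fun y => ?_
  dsimp only
  rw [mul_assoc]
  refine mul_le_mul_of_nonneg_left ?_ (h.tangentGap_nonneg x y)
  have hlip := (abs_le.mp (abs_sub_le_of_lipschitz h.lipschitzWith (x + y) x)).2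
  rw [add_sub_cancel_left] at hlip
  calc exp (m * A (x + y)) ≤ exp (1 * |y| + m * A x) := by
        gcongr
        nlinarith [abs_nonneg y]
    _ = exp (1 * |y|) * exp (m * A x) := exp_add _ _
    _ ≤ exp (1 * |y|) * partitionFn m v A x := by
        gcongr
        exact h.exp_mul_le_partitionFn hm v x

theorem le_integral_tangentGap_add_gauss (h : ParisiClass c A u u') (hv : 0 ≤ v) {k : ℝ}
    (hk : |k| ≤ 1) (x : ℝ) :
    ∫ y, tangentGap A u x y * (exp (-1 * |y|) * exp (-(v / 2))) ∂gauss v ≤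
      ∫ y, tangentGap A u x (v * k + y) ∂gauss v := by
  have hgap := ExpGrowth.tangentGap h.lipschitzWith u x
  have hweight : ExpGrowth fun y => exp (k * y - k ^ 2 * v / 2) := by
    convert (ExpGrowth.exp_mul k).mul (.const (exp (-(k ^ 2 * v / 2)))) using 2 with y
    rw [← exp_add, sub_eq_add_neg]
  simp_rw [add_comm (v * k)]
  rw [integral_add_mul_gauss hv k]
  refine integral_mono
    ((hgap.mul ((ExpGrowth.exp_mul_abs (-1)).mul (.const _))).integrable v)
    ((hgap.mul hweight).integrable v) fun y => ?_
  refine mul_le_mul_of_nonneg_left ?_ (h.tangentGap_nonneg x y)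
  have hky : -|y| ≤ k * y := by
    have := neg_abs_le (k * y)
    rw [abs_mul] at this
    nlinarith [abs_nonneg y]
  have hksq : k ^ 2 * v / 2 ≤ v / 2 := by nlinarith [(sq_le_one_iff_abs_le_one k).mpr hk]
  rw [← exp_add]
  gcongr
  linarith

theorem integral_tangentGap_sub_le (h : ParisiClass c A u u') (hm : 0 < m) (hm1 : m ≤ 1)
    (hv : 0 ≤ v) (hv1 : v ≤ 1) {k : ℝ} (hk : |k| ≤ 1) (x : ℝ) :
    (∫ y, tangentGap A u x y ∂tiltedGauss m v A x) -
      ∫ y, tangentGap A u x (v * k + y) ∂gauss v ≤ entropyErrorConst * (v * √v) := by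
  have hgap := ExpGrowth.tangentGap h.lipschitzWith u x
  have hupper := hgap.mul (ExpGrowth.exp_mul_abs 1)
  have hlower := hgap.mul ((ExpGrowth.exp_mul_abs (-1)).mul (.const (exp (-(v / 2)))))
  have hdiff : (∫ y, tangentGap A u x y * exp (1 * |y|) ∂gauss v) -
      ∫ y, tangentGap A u x y * (exp (-1 * |y|) * exp (-(v / 2))) ∂gauss v ≤
        ∫ y, y ^ 2 * (exp (1 * |y|) * (2 * |y| + v / 2)) ∂gauss v := by
    rw [← integral_sub (hupper.integrable v) (hlower.integrable v)]
    refine integral_mono ((hupper.sub hlower).integrable v)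
      ((ExpGrowth.sq_mul_exp_abs 1 (v / 2)).integrable v) fun y => ?_
    have hweight : exp (1 * |y|) - exp (-1 * |y|) * exp (-(v / 2)) ≤
        exp (1 * |y|) * (2 * |y| + v / 2) := by
      rw [show exp (-1 * |y|) * exp (-(v / 2)) = exp (1 * |y|) * exp (-(2 * |y| + v / 2)) by
        rw [← exp_add, ← exp_add]; ring_nf]
      nlinarith [exp_pos (1 * |y|), add_one_le_exp (-(2 * |y| + v / 2))]
    dsimp only
    rw [← mul_sub]
    exact (mul_le_mul_of_nonneg_left hweight (h.tangentGap_nonneg x y)).trans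
      (mul_le_mul_of_nonneg_right (h.tangentGap_le_sq x y) (by positivity))
  linarith [h.integral_tangentGap_tiltedGauss_le hm hm1 v x,
    h.le_integral_tangentGap_add_gauss hv hk x, integral_sq_mul_exp_abs_le hv hv1]

/-- Up to an error of order `v^{3/2}`, the tilted measure has the relative entropy of a Gaussian
with its mean `m v U`, where `U = meanSlope m v A u x`. -/
theorem tiltEntropy_le (h : ParisiClass c A u u') (hm : 0 < m) (hm1 : m ≤ 1) (hv : 0 ≤ v)
    (hv1 : v ≤ 1) (x : ℝ) :
    tiltEntropy m v A x ≤
      m ^ 2 * v * meanSlope m v A u x ^ 2 / 2 + m * (entropyErrorConst * (v * √v)) := by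
  have hA := h.lipschitzWith
  have := isProbabilityMeasure_tiltedGauss hA m v x
  set k := m * meanSlope m v A u x with hk
  have hk1 : |k| ≤ 1 := by
    rw [hk, abs_mul, abs_of_pos hm]
    exact mul_le_one₀ hm1 (abs_nonneg _) (h.abs_meanSlope_le_one m v x)
  have hAx : ∀ s, ExpGrowth fun y => A (x + (s + y)) := fun s => by
    simpa [add_assoc] using ExpGrowth.of_lipschitz (lipschitz_comp_const_add hA (x + s))
  have hgibbs := integral_eq_integral_tangentGap_add
    ((hAx 0).integrable_tiltedGauss hA m v x) (ExpGrowth.id.integrable_tiltedGauss hA m v x) u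
  have hgauss := integral_eq_integral_tangentGap_add
    ((hAx (v * k)).integrable v) (ExpGrowth.id.integrable v) u
  have hmean : ∫ y, y ∂tiltedGauss m v A x = v * k := by
    rw [integral_id_tiltedGauss hA h.hasDerivAt hv, hk, meanSlope]; ring
  have hdv := mul_integral_gauss_le_mul_parisiOp_add hA hm hv k x
  simp only [zero_add, hmean] at hgibbs
  simp only [integral_id_gauss, add_zero, ← add_assoc] at hgauss
  rw [hgauss] at hdv
  rw [tiltEntropy, hgibbs, show m ^ 2 * v * meanSlope m v A u x ^ 2 / 2 = k ^ 2 * v / 2 by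
    rw [hk]; ring]
  linarith [mul_le_mul_of_nonneg_left (h.integral_tangentGap_sub_le hm hm1 hv hv1 hk1 x) hm.le]

end ParisiClass

end TangentGap

/-! ### Quantitative midpoint convexity under one Parisi operator -/

section GapStep

variable {a b c v : ℝ} {A A₀ A₁ u u' : ℝ → ℝ}

theorem integral_half_add_half_sub {μ : Measure ℝ} {f g k : ℝ → ℝ} (hf : Integrable f μ)
    (hg : Integrable g μ) (hk : Integrable k μ) :
    ∫ y, (1 / 2 * f y + 1 / 2 * g y - k y) ∂μ =
      1 / 2 * (∫ y, f y ∂μ) + 1 / 2 * (∫ y, g y ∂μ) - ∫ y, k y ∂μ := by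
  have hsum : Integrable (fun y => 1 / 2 * f y + 1 / 2 * g y) μ :=
    (hf.const_mul _).add (hg.const_mul _)
  rw [integral_sub hsum hk, integral_add (hf.const_mul _) (hg.const_mul _), integral_const_mul,
    integral_const_mul]

theorem half_div_add_half_div_sub_div {m e E : ℝ} (ha : 0 < a) (hb : 0 < b)
    (hm : m = (a + b) / 2) (he : e = (a - b) / 2) (U : ℝ) :
    1 / 2 * ((E + e * U * (m * v * U) + (e * U) ^ 2 * v / 2) / a) +
      1 / 2 * ((E - e * U * (m * v * U) + (e * U) ^ 2 * v / 2) / b) - E / m =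
        e ^ 2 / (a * b) * ((E - m ^ 2 * v * U ^ 2 / 2) / m) := by
  have hab : a + b ≠ 0 := by positivity
  rw [hm, he]
  field_simp
  ring

/-- The drift `e U`, where `m` is the mean and `e` half the difference of `a` and `b`, is chosen so
that the two Donsker–Varadhan bounds combine to a defect involving only the entropy excess
controlled by `tiltEntropy_le`. -/
theorem ParisiClass.half_parisiOp_add_half_parisiOp_sub_ge {m e : ℝ} (h : ParisiClass c A u u')
    (h₀ : LipschitzWith 1 A₀) (h₁ : LipschitzWith 1 A₁) (ha : 0 < a) (hb : 0 < b)
    (hm : m = (a + b) / 2) (he : e = (a - b) / 2) (hm1 : m ≤ 1) (hv : 0 ≤ v) (hv1 : v ≤ 1)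
    (x d : ℝ) :
    (∫ y, (1 / 2 * A₀ (x + y + (d + e * v * meanSlope m v A u x)) +
        1 / 2 * A₁ (x + y - (d + e * v * meanSlope m v A u x)) - A (x + y))
          ∂tiltedGauss m v A x) - e ^ 2 / (a * b) * (entropyErrorConst * (v * √v)) ≤
      1 / 2 * parisiOp a v A₀ (x + d) + 1 / 2 * parisiOp b v A₁ (x - d) - parisiOp m v A x := by
  have hm0 : 0 < m := by linarith
  have hA := h.lipschitzWith
  have hent := h.tiltEntropy_le hm0 hm1 hv hv1 x
  set U := meanSlope m v A u x
  have hmean : ∫ y, y ∂tiltedGauss m v A x = m * v * U :=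
    integral_id_tiltedGauss hA h.hasDerivAt hv m x
  have hdv₀ := mul_integral_tiltedGauss_le_mul_parisiOp_add hA h₀ hm0 ha hv (e * U) x (x + d)
  have hdv₁ := mul_integral_tiltedGauss_le_mul_parisiOp_add hA h₁ hm0 hb hv (-(e * U)) x (x - d)
  have harg₀ : ∀ y, x + y + (d + e * v * U) = x + d + v * (e * U) + y := fun y => by ring
  have harg₁ : ∀ y, x + y - (d + e * v * U) = x - d + v * -(e * U) + y := fun y => by ring
  simp_rw [harg₀, harg₁]
  have hint : ∀ {B : ℝ → ℝ}, LipschitzWith 1 B → ∀ z,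
      Integrable (fun y => B (z + y)) (tiltedGauss m v A x) := fun hB z =>
    (ExpGrowth.of_lipschitz (lipschitz_comp_const_add hB z)).integrable_tiltedGauss hA m v x
  rw [integral_half_add_half_sub (hint h₀ _) (hint h₁ _) (hint hA x)]
  rw [hmean] at hdv₀ hdv₁
  set I₀ := ∫ y, A₀ (x + d + v * (e * U) + y) ∂tiltedGauss m v A x
  set I₁ := ∫ y, A₁ (x - d + v * -(e * U) + y) ∂tiltedGauss m v A x
  set E := tiltEntropy m v A x with hE
  set R := entropyErrorConst * (v * √v)
  have hI : ∫ y, A (x + y) ∂tiltedGauss m v A x = parisiOp m v A x + E / m := by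
    rw [hE, tiltEntropy]; field_simp; ring
  have hdiv₀ : I₀ - (E + (e * U) * (m * v * U) + (e * U) ^ 2 * v / 2) / a ≤
      parisiOp a v A₀ (x + d) := by
    rw [sub_le_iff_le_add, ← sub_le_iff_le_add', le_div_iff₀ ha]; linarith
  have hdiv₁ : I₁ - (E - (e * U) * (m * v * U) + (e * U) ^ 2 * v / 2) / b ≤
      parisiOp b v A₁ (x - d) := by
    rw [sub_le_iff_le_add, ← sub_le_iff_le_add', le_div_iff₀ hb]; linarith
  have hexcess : e ^ 2 / (a * b) * ((E - m ^ 2 * v * U ^ 2 / 2) / m) ≤ e ^ 2 / (a * b) * R := by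
    gcongr
    rw [div_le_iff₀ hm0]; linarith
  linarith [half_div_add_half_div_sub_div (v := v) (E := E) ha hb hm he U]

end GapStep

/-! ### The solution along a list of cells -/

/-- The function `log cosh` at which the Parisi recursion starts. -/
def logCosh (x : ℝ) : ℝ := log (cosh x)

theorem one_sub_tanh_sq (x : ℝ) : 1 - tanh x ^ 2 = 1 / cosh x ^ 2 := by
  have := (cosh_pos x).ne'
  rw [tanh_eq_sinh_div_cosh]
  field_simp
  linarith [cosh_sq x]

theorem hasDerivAt_tanh (x : ℝ) : HasDerivAt tanh (1 - tanh x ^ 2) x := by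
  have hcosh := (cosh_pos x).ne'
  rw [show tanh = fun x => sinh x / cosh x from funext tanh_eq_sinh_div_cosh]
  refine ((hasDerivAt_sinh x).div (hasDerivAt_cosh x) hcosh).congr_deriv ?_
  field_simp

theorem parisiClass_logCosh : ParisiClass 1 logCosh tanh fun x => 1 - tanh x ^ 2 where
  nonneg := zero_le_one
  hasDerivAt x := by
    rw [tanh_eq_sinh_div_cosh]
    exact (hasDerivAt_cosh x).log (cosh_pos x).ne'
  hasDerivAt_slope := hasDerivAt_tanh
  abs_slope_le_one x := abs_le.mpr ⟨(neg_one_lt_tanh x).le, (tanh_lt_one x).le⟩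
  div_cosh_le x := by
    rw [one_sub_tanh_sq]
    have := cosh_pos x
    gcongr
    nlinarith [cosh_two_mul x, sq_nonneg (sinh x)]
  le_one_sub_sq _ := le_rfl

theorem cosh_add_mul_cosh_sub (x d : ℝ) :
    cosh (x + d) * cosh (x - d) = cosh x ^ 2 + sinh d ^ 2 := by
  rw [cosh_add, cosh_sub]
  linear_combination (-(sinh d ^ 2)) * sinh_sq x + cosh x ^ 2 * cosh_sq d

theorem sq_le_sinh_sq (d : ℝ) : d ^ 2 ≤ sinh d ^ 2 := by
  rw [sq_le_sq, abs_sinh]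
  exact self_le_sinh_iff.mpr (abs_nonneg d)

theorem half_logCosh_add_half_logCosh_sub (x d : ℝ) :
    1 / 2 * logCosh (x + d) + 1 / 2 * logCosh (x - d) - logCosh x =
      1 / 2 * log (1 + sinh d ^ 2 / cosh x ^ 2) := by
  have hprod : 1 + sinh d ^ 2 / cosh x ^ 2 = cosh (x + d) * cosh (x - d) / cosh x ^ 2 := by
    rw [cosh_add_mul_cosh_sub]
    field_simp
  rw [hprod, Real.log_div (mul_pos (cosh_pos _) (cosh_pos _)).ne' (by positivity),
    Real.log_mul (cosh_pos _).ne' (cosh_pos _).ne', Real.log_pow]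
  simp only [logCosh]
  push_cast
  ring

/-- The parameter `lam` linearizes the quotient `d ^ 2 / cosh x ^ 2`, which would not be stable
under the Parisi operators. -/
theorem logCosh_midpoint_gap {T d : ℝ} (hd : |d| ≤ T) (x lam : ℝ) :
    1 / (2 * (1 + T ^ 2)) * (2 * lam * d ^ 2 - lam ^ 2 * T ^ 2 * cosh (2 * x)) ≤
      1 / 2 * logCosh (x + d) + 1 / 2 * logCosh (x - d) - logCosh x := by
  have hdT : d ^ 2 ≤ T ^ 2 := sq_le_sq' (neg_le_of_abs_le hd) (le_of_abs_le hd)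
  have hcosh : 1 ≤ cosh x ^ 2 := one_le_pow₀ (one_le_cosh x)
  have hcosh_two : cosh x ^ 2 ≤ cosh (2 * x) := by
    rw [cosh_two_mul]
    exact le_add_of_nonneg_right (sq_nonneg _)
  set z := d ^ 2 / cosh x ^ 2 with hz
  have hz0 : 0 ≤ z := by positivity
  have hzT : z ≤ T ^ 2 := (div_le_self (sq_nonneg d) hcosh).trans hdT
  have hquad : 2 * lam * d ^ 2 - lam ^ 2 * T ^ 2 * cosh (2 * x) ≤ z := by
    have hT : lam ^ 2 * d ^ 2 * cosh x ^ 2 ≤ lam ^ 2 * T ^ 2 * cosh (2 * x) := by gcongr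
    have hamgm : 2 * lam * d ^ 2 - lam ^ 2 * d ^ 2 * cosh x ^ 2 ≤ z := by
      rw [hz, le_div_iff₀ (by positivity)]
      nlinarith [mul_nonneg (sq_nonneg d) (sq_nonneg (lam * cosh x ^ 2 - 1))]
    linarith
  have hlog : z / (1 + T ^ 2) ≤ log (1 + z) := by
    calc z / (1 + T ^ 2) ≤ z / (1 + z) := by gcongr
      _ = 1 - (1 + z)⁻¹ := by field_simp; ring
      _ ≤ log (1 + z) := Real.one_sub_inv_le_log_of_pos (by positivity)
  rw [half_logCosh_add_half_logCosh_sub]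
  calc _ ≤ 1 / (2 * (1 + T ^ 2)) * z := by gcongr
    _ = 1 / 2 * (z / (1 + T ^ 2)) := by field_simp
    _ ≤ 1 / 2 * log (1 + z) := by gcongr
    _ ≤ _ := by
      rw [hz]
      gcongr 1 / 2 * log (1 + ?_ / _)
      exact sq_le_sinh_sq d

/-- A step of a discrete order parameter in the variable `t = ξ'(q)`: it has value `mass` on an
interval of length `width`. -/
structure Cell where
  mass : ℝ
  width : ℝ

/-- The constraints on the cells of an order parameter. -/
structure Cell.IsAdmissible (c : Cell) : Prop where
  mass_pos : 0 < c.mass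
  mass_le_one : c.mass ≤ 1
  width_nonneg : 0 ≤ c.width

/-- The length of the interval covered by a list of cells. -/
def totalWidth (l : List Cell) : ℝ := (l.map Cell.width).sum

/-- The value at time zero of the Parisi recursion along a list of cells; the last cell acts
first. -/
def parisiFn : List Cell → ℝ → ℝ
  | [] => logCosh
  | c :: l => parisiOp c.mass c.width (parisiFn l)

/-- The first derivative of `parisiFn`. -/
def parisiSlope : List Cell → ℝ → ℝ
  | [] => tanh
  | c :: l => meanSlope c.mass c.width (parisiFn l) (parisiSlope l)

/-- The second derivative of `parisiFn`. -/
def parisiCurvature : List Cell → ℝ → ℝ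
  | [] => fun x => 1 - tanh x ^ 2
  | c :: l => meanCurvature c.mass c.width (parisiFn l) (parisiSlope l) (parisiCurvature l)

@[simp] theorem totalWidth_nil : totalWidth [] = 0 := rfl

@[simp] theorem totalWidth_cons (c : Cell) (l : List Cell) :
    totalWidth (c :: l) = c.width + totalWidth l := rfl

theorem totalWidth_nonneg {l : List Cell} (h : ∀ c ∈ l, c.IsAdmissible) : 0 ≤ totalWidth l :=
  List.sum_nonneg (List.forall_mem_map.mpr fun c hc => (h c hc).width_nonneg)

theorem parisiClass_parisiFn {l : List Cell} (h : ∀ c ∈ l, c.IsAdmissible) :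
    ParisiClass (exp (-(4 * totalWidth l))) (parisiFn l) (parisiSlope l) (parisiCurvature l) := by
  induction l with
  | nil => simpa [parisiFn, parisiSlope, parisiCurvature] using parisiClass_logCosh
  | cons c l ih =>
    obtain ⟨hc, hl⟩ := List.forall_mem_cons.mp h
    have hstep := (ih hl).map_parisiOp hc.mass_pos hc.mass_le_one hc.width_nonneg
    rwa [← exp_add, show -(4 * totalWidth l) + -(4 * c.width) = -(4 * totalWidth (c :: l)) by
      rw [totalWidth_cons]; ring] at hstep

theorem lipschitzWith_parisiFn {l : List Cell} (h : ∀ c ∈ l, c.IsAdmissible) :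
    LipschitzWith 1 (parisiFn l) :=
  (parisiClass_parisiFn h).lipschitzWith

/-! ### Quantitative midpoint convexity along a list of cells -/

/-- A cell on which two order parameters are constant. -/
structure PairCell where
  mass₁ : ℝ
  mass₂ : ℝ
  width : ℝ

namespace PairCell

/-- The cell of the first order parameter. -/
def fst (c : PairCell) : Cell := ⟨c.mass₁, c.width⟩

/-- The cell of the second order parameter. -/
def snd (c : PairCell) : Cell := ⟨c.mass₂, c.width⟩

/-- The cell of the average of the two order parameters. -/
def mid (c : PairCell) : Cell := ⟨(c.mass₁ + c.mass₂) / 2, c.width⟩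

/-- The constraints on a pair cell, where the masses are bounded below by `η`. -/
structure IsAdmissible (η : ℝ) (c : PairCell) : Prop where
  le_mass₁ : η ≤ c.mass₁
  mass₁_le_one : c.mass₁ ≤ 1
  le_mass₂ : η ≤ c.mass₂
  mass₂_le_one : c.mass₂ ≤ 1
  width_nonneg : 0 ≤ c.width
  width_le_one : c.width ≤ 1

variable {η : ℝ} {c : PairCell}

theorem IsAdmissible.fst (hη : 0 < η) (h : c.IsAdmissible η) : c.fst.IsAdmissible :=
  ⟨hη.trans_le h.le_mass₁, h.mass₁_le_one, h.width_nonneg⟩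

theorem IsAdmissible.snd (hη : 0 < η) (h : c.IsAdmissible η) : c.snd.IsAdmissible :=
  ⟨hη.trans_le h.le_mass₂, h.mass₂_le_one, h.width_nonneg⟩

theorem IsAdmissible.mid (hη : 0 < η) (h : c.IsAdmissible η) : c.mid.IsAdmissible :=
  ⟨by simp only [PairCell.mid]; linarith [h.le_mass₁, h.le_mass₂],
    by simp only [PairCell.mid]; linarith [h.mass₁_le_one, h.mass₂_le_one], h.width_nonneg⟩

end PairCell

/-- The length of the interval covered by a list of pair cells. -/
def pairWidth (L : List PairCell) : ℝ := (L.map PairCell.width).sum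

/-- Half the integral of the difference of two order parameters. -/
def massShift (L : List PairCell) : ℝ :=
  (L.map fun c => (c.mass₁ - c.mass₂) / 2 * c.width).sum

/-- A Riemann sum for the integral over `t` of the squared `massShift` of the part after `t`. -/
def shiftEnergy : List PairCell → ℝ
  | [] => 0
  | c :: L => massShift L ^ 2 * c.width + shiftEnergy L

/-- The discretization error accumulated along a list of pair cells. -/
def widthError (L : List PairCell) : ℝ := (L.map fun c => c.width * √c.width).sum

@[simp] theorem pairWidth_nil : pairWidth [] = 0 := rfl

@[simp] theorem pairWidth_cons (c : PairCell) (L : List PairCell) :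
    pairWidth (c :: L) = c.width + pairWidth L := rfl

@[simp] theorem massShift_nil : massShift [] = 0 := rfl

@[simp] theorem massShift_cons (c : PairCell) (L : List PairCell) :
    massShift (c :: L) = (c.mass₁ - c.mass₂) / 2 * c.width + massShift L := rfl

@[simp] theorem widthError_nil : widthError [] = 0 := rfl

@[simp] theorem widthError_cons (c : PairCell) (L : List PairCell) :
    widthError (c :: L) = c.width * √c.width + widthError L := rfl

theorem totalWidth_map_mid (L : List PairCell) :
    totalWidth (L.map PairCell.mid) = pairWidth L := by
  simp [totalWidth, pairWidth, PairCell.mid, Function.comp_def]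

theorem pairWidth_nonneg {L : List PairCell} (h : ∀ c ∈ L, 0 ≤ c.width) : 0 ≤ pairWidth L :=
  List.sum_nonneg (List.forall_mem_map.mpr h)

theorem shiftEnergy_nonneg {L : List PairCell} (h : ∀ c ∈ L, 0 ≤ c.width) :
    0 ≤ shiftEnergy L := by
  induction L with
  | nil => exact le_rfl
  | cons c L ih =>
    obtain ⟨hc, hL⟩ := List.forall_mem_cons.mp h
    exact add_nonneg (mul_nonneg (sq_nonneg _) hc) (ih hL)

/-- The lower bound for the midpoint gap at `x` in direction `d` that is propagated along a list
of pair cells with `pairWidth = τ`, `massShift = K` and `shiftEnergy = Q`, if `u` is the slope of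
the averaged solution. -/
def gapBound (T lam τ K Q : ℝ) (u : ℝ → ℝ) (x d : ℝ) : ℝ :=
  1 / (2 * (1 + T ^ 2)) *
    (2 * lam * ((d + K * u x) ^ 2 + exp (-(8 * T)) / 2 * exp (-(12 * τ)) * Q / cosh (4 * x)) -
      lam ^ 2 * T ^ 2 * exp (4 * τ) * cosh (2 * x))

section GapBound

variable {T lam τ K Q m v e : ℝ} {A u u' : ℝ → ℝ}

theorem ParisiClass.integral_sq_add_mul_slope {c : ℝ} (h : ParisiClass c A u u')
    (m v x d K : ℝ) :
    ∫ y, (d + K * u (x + y)) ^ 2 ∂tiltedGauss m v A x =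
      (d + K * meanSlope m v A u x) ^ 2 +
        K ^ 2 * Var[fun y => u (x + y); tiltedGauss m v A x] := by
  have := isProbabilityMeasure_tiltedGauss h.lipschitzWith m v x
  have hu := h.memLp_two_slope m v x
  have hvar := variance_eq_sub (X := fun y => d + K * u (x + y))
    ((memLp_const d).add (hu.const_mul K))
  rw [variance_const_add (hu.const_mul K).aestronglyMeasurable, variance_const_mul,
    integral_add (integrable_const d) ((hu.integrable one_le_two).const_mul K),
    integral_const_mul] at hvar
  simp only [integral_const, probReal_univ, one_smul, Pi.pow_apply] at hvar
  rw [meanSlope, hvar]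
  ring

theorem ParisiClass.div_cosh_le_sq_meanCurvature (h : ParisiClass (exp (-(4 * τ))) A u u')
    (hm : 0 ≤ m) (hm1 : m ≤ 1) (hv : 0 ≤ v) (hT : v + τ ≤ T) (x : ℝ) :
    exp (-(8 * T)) / cosh (4 * x) ≤ meanCurvature m v A u u' x ^ 2 := by
  have hcosh : cosh (2 * x) ^ 2 ≤ cosh (4 * x) := by
    rw [show 4 * x = 2 * (2 * x) by ring, cosh_two_mul (2 * x)]
    exact le_add_of_nonneg_right (sq_nonneg _)
  calc exp (-(8 * T)) / cosh (4 * x) ≤ exp (-(8 * T)) / cosh (2 * x) ^ 2 := by gcongr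
    _ = (exp (-(4 * T)) / cosh (2 * x)) ^ 2 := by
        rw [div_pow, ← exp_nat_mul]
        push_cast
        ring_nf
    _ ≤ (exp (-(4 * τ)) * exp (-(4 * v)) / cosh (2 * x)) ^ 2 := by
        rw [← exp_add]
        gcongr
        linarith
    _ ≤ meanCurvature m v A u u' x ^ 2 := by
        gcongr
        exact h.le_meanCurvature hm hm1 hv x

theorem ParisiClass.expGrowth_gapBound {c : ℝ} (h : ParisiClass c A u u')
    (T lam τ K Q x d : ℝ) : ExpGrowth fun y => gapBound T lam τ K Q u (x + y) d := by
  have hsq := ((ExpGrowth.const d).add ((h.expGrowth_slope.comp_const_add x).const_mul K)).sq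
  have hinv := (ExpGrowth.one_div_cosh_mul_add 4 x).const_mul
    (exp (-(8 * T)) / 2 * exp (-(12 * τ)) * Q)
  convert (((hsq.add hinv).const_mul (2 * lam)).sub
    ((ExpGrowth.cosh_mul_add 2 x).const_mul (lam ^ 2 * T ^ 2 * exp (4 * τ)))).const_mul
      (1 / (2 * (1 + T ^ 2))) using 2 with y
  rw [gapBound, mul_one_div]

theorem ParisiClass.integral_gapBound {c : ℝ} (h : ParisiClass c A u u')
    (T lam τ K Q m v x d : ℝ) :
    ∫ y, gapBound T lam τ K Q u (x + y) d ∂tiltedGauss m v A x =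
      1 / (2 * (1 + T ^ 2)) *
        (2 * lam * ((d + K * meanSlope m v A u x) ^ 2 +
          K ^ 2 * Var[fun y => u (x + y); tiltedGauss m v A x] +
            exp (-(8 * T)) / 2 * exp (-(12 * τ)) * Q *
              ∫ y, 1 / cosh (4 * (x + y)) ∂tiltedGauss m v A x) -
          lam ^ 2 * T ^ 2 * exp (4 * τ) * ∫ y, cosh (2 * (x + y)) ∂tiltedGauss m v A x) := by
  have hA := h.lipschitzWith
  have hsq := ((ExpGrowth.const d).add
    ((h.expGrowth_slope.comp_const_add x).const_mul K)).sq.integrable_tiltedGauss hA m v x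
  have hinv := ((ExpGrowth.one_div_cosh_mul_add 4 x).const_mul
    (exp (-(8 * T)) / 2 * exp (-(12 * τ)) * Q)).integrable_tiltedGauss hA m v x
  have hcosh := (ExpGrowth.cosh_mul_add 2 x).integrable_tiltedGauss hA m v x
  have hsum : Integrable (fun y => 2 * lam * ((d + K * u (x + y)) ^ 2 +
      exp (-(8 * T)) / 2 * exp (-(12 * τ)) * Q * (1 / cosh (4 * (x + y)))))
      (tiltedGauss m v A x) := (hsq.add hinv).const_mul _
  simp only [gapBound, div_eq_mul_one_div (_ * Q)]
  rw [integral_const_mul, integral_sub hsum (hcosh.const_mul _),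
    integral_const_mul, integral_add hsq hinv, integral_const_mul, integral_const_mul,
    h.integral_sq_add_mul_slope]

theorem ParisiClass.gapBound_le_integral_gapBound (h : ParisiClass (exp (-(4 * τ))) A u u')
    (hlam : 0 ≤ lam) (hτ : 0 ≤ τ) (hQ : 0 ≤ Q) (hm : 0 < m) (hm1 : m ≤ 1) (hv : 0 ≤ v)
    (hv1 : v ≤ 1) (hT : v + τ ≤ T) (x d : ℝ) :
    gapBound T lam (v + τ) (e * v + K) (K ^ 2 * v + Q) (meanSlope m v A u) x d ≤
      ∫ y, gapBound T lam τ K Q u (x + y) (d + e * v * meanSlope m v A u x)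
        ∂tiltedGauss m v A x := by
  have hA := h.lipschitzWith
  have hvar := h.mul_sq_meanCurvature_le_variance hm hm1 hv hv1 x
  have hcurv := h.div_cosh_le_sq_meanCurvature hm.le hm1 hv hT x
  have hcosh := integral_cosh_tiltedGauss_le hA hm.le hm1 hv 2 x
  have hinv := le_integral_one_div_cosh_tiltedGauss hA hm.le hm1 hv 4 x
  rw [show (2 : ℝ) ^ 2 * v / 2 + |2| * v = 4 * v by rw [abs_two]; ring] at hcosh
  rw [show (4 : ℝ) ^ 2 * v / 2 + |4| * v = 12 * v by rw [abs_of_pos four_pos]; ring] at hinv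
  have hnew : exp (-(8 * T)) / 2 * exp (-(12 * (v + τ))) * (K ^ 2 * v) / cosh (4 * x) ≤
      K ^ 2 * Var[fun y => u (x + y); tiltedGauss m v A x] := by
    calc _ ≤ exp (-(8 * T)) / 2 * 1 * (K ^ 2 * v) / cosh (4 * x) := by
          gcongr
          exact exp_le_one_iff.mpr (by linarith)
      _ = K ^ 2 * (v * (exp (-(8 * T)) / cosh (4 * x)) / 2) := by ring
      _ ≤ K ^ 2 * (v * meanCurvature m v A u u' x ^ 2 / 2) := by gcongr
      _ ≤ _ := by gcongr
  have hold : exp (-(8 * T)) / 2 * exp (-(12 * (v + τ))) * Q / cosh (4 * x) ≤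
      exp (-(8 * T)) / 2 * exp (-(12 * τ)) * Q *
        ∫ y, 1 / cosh (4 * (x + y)) ∂tiltedGauss m v A x := by
    calc _ = exp (-(8 * T)) / 2 * exp (-(12 * τ)) * Q * (exp (-(12 * v)) / cosh (4 * x)) := by
          rw [show -(12 * (v + τ)) = -(12 * τ) + -(12 * v) by ring, exp_add]; ring
      _ ≤ _ := by gcongr
  have hcost : lam ^ 2 * T ^ 2 * exp (4 * τ) * ∫ y, cosh (2 * (x + y)) ∂tiltedGauss m v A x ≤
      lam ^ 2 * T ^ 2 * exp (4 * (v + τ)) * cosh (2 * x) := by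
    rw [show 4 * (v + τ) = 4 * τ + 4 * v by ring, exp_add, ← mul_assoc, mul_assoc _ (exp (4 * v))]
    gcongr
  rw [h.integral_gapBound, gapBound, mul_add _ (K ^ 2 * v), add_div, ← add_assoc]
  rw [show d + e * v * meanSlope m v A u x + K * meanSlope m v A u x =
    d + (e * v + K) * meanSlope m v A u x by ring]
  gcongr

end GapBound

theorem sq_half_sub_div_mul_le {η a b : ℝ} (hη : 0 < η) (ha : η ≤ a) (ha1 : a ≤ 1) (hb : η ≤ b)
    (hb1 : b ≤ 1) : ((a - b) / 2) ^ 2 / (a * b) ≤ 1 / η ^ 2 := by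
  have hab : η ^ 2 ≤ a * b := by nlinarith
  gcongr
  nlinarith

theorem ParisiClass.integral_gapBound_sub_le {c C T lam τ K Q m v x d : ℝ}
    {A A₀ A₁ u u' : ℝ → ℝ} (h : ParisiClass c A u u') (h₀ : LipschitzWith 1 A₀)
    (h₁ : LipschitzWith 1 A₁)
    (hgap : ∀ y, gapBound T lam τ K Q u (x + y) d - C ≤
      1 / 2 * A₀ (x + y + d) + 1 / 2 * A₁ (x + y - d) - A (x + y)) :
    (∫ y, gapBound T lam τ K Q u (x + y) d ∂tiltedGauss m v A x) - C ≤
      ∫ y, (1 / 2 * A₀ (x + y + d) + 1 / 2 * A₁ (x + y - d) - A (x + y))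
        ∂tiltedGauss m v A x := by
  have hA := h.lipschitzWith
  have := isProbabilityMeasure_tiltedGauss hA m v x
  have hbound := (h.expGrowth_gapBound T lam τ K Q x d).integrable_tiltedGauss hA m v x
  have hshift : ∀ {B : ℝ → ℝ} (s : ℝ), LipschitzWith 1 B → ExpGrowth fun y => B (x + y + s) :=
    fun s hB => by
      simpa [add_right_comm] using ExpGrowth.of_lipschitz (lipschitz_comp_const_add hB (x + s))
  have hright : ExpGrowth fun y => 1 / 2 * A₀ (x + y + d) + 1 / 2 * A₁ (x + y - d) - A (x + y) :=
    (((hshift d h₀).const_mul _).add ((hshift (-d) h₁).const_mul _)).sub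
      (.of_lipschitz (lipschitz_comp_const_add hA x))
  calc _ = ∫ y, (gapBound T lam τ K Q u (x + y) d - C) ∂tiltedGauss m v A x := by
        rw [integral_sub hbound (integrable_const C), integral_const, probReal_univ, one_smul]
    _ ≤ _ := integral_mono (hbound.sub (integrable_const C))
        (hright.integrable_tiltedGauss hA m v x) hgap

theorem abs_half_sub_le_one {a b : ℝ} (ha : 0 ≤ a) (ha1 : a ≤ 1) (hb : 0 ≤ b) (hb1 : b ≤ 1) :
    |(a - b) / 2| ≤ 1 :=
  abs_le.mpr ⟨by linarith, by linarith⟩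

theorem abs_add_half_sub_mul_le {a b v U : ℝ} (ha : 0 ≤ a) (ha1 : a ≤ 1) (hb : 0 ≤ b)
    (hb1 : b ≤ 1) (hv : 0 ≤ v) (hU : |U| ≤ 1) (d : ℝ) :
    |d + (a - b) / 2 * v * U| ≤ |d| + v := by
  refine (abs_add_le _ _).trans (add_le_add_right ?_ _)
  rw [abs_mul, abs_mul, abs_of_nonneg hv]
  exact (mul_le_of_le_one_right (by positivity) hU).trans 
    (mul_le_of_le_one_left hv (abs_half_sub_le_one ha ha1 hb hb1))

theorem parisiFn_midpoint_gap {T η lam : ℝ} (hη : 0 < η) (hlam : 0 ≤ lam) {L : List PairCell}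
    (hL : ∀ c ∈ L, c.IsAdmissible η) (x d : ℝ) (hT : |d| + pairWidth L ≤ T) :
    gapBound T lam (pairWidth L) (massShift L) (shiftEnergy L)
        (parisiSlope (L.map PairCell.mid)) x d - entropyErrorConst / η ^ 2 * widthError L ≤
      1 / 2 * parisiFn (L.map PairCell.fst) (x + d) +
        1 / 2 * parisiFn (L.map PairCell.snd) (x - d) - parisiFn (L.map PairCell.mid) x := by
  induction L generalizing x d with
  | nil =>
    simpa [gapBound, shiftEnergy, parisiFn] using logCosh_midpoint_gap (by simpa using hT) x lam
  | cons c L ih =>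
    obtain ⟨hc, hL⟩ := List.forall_mem_cons.mp hL
    have hmid : ∀ c ∈ L.map PairCell.mid, c.IsAdmissible :=
      List.forall_mem_map.mpr fun c hc => (hL c hc).mid hη
    have hA := parisiClass_parisiFn hmid
    have h₀ := lipschitzWith_parisiFn (List.forall_mem_map.mpr fun c hc => (hL c hc).fst hη)
    have h₁ := lipschitzWith_parisiFn (List.forall_mem_map.mpr fun c hc => (hL c hc).snd hη)
    have hwidth := pairWidth_nonneg fun c hc => (hL c hc).width_nonneg
    have henergy := shiftEnergy_nonneg fun c hc => (hL c hc).width_nonneg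
    rw [totalWidth_map_mid] at hA
    rw [pairWidth_cons] at hT
    have hm := hc.mid hη
    have hU := hA.abs_meanSlope_le_one c.mid.mass c.width x
    have hdir := abs_add_half_sub_mul_le (hη.le.trans hc.le_mass₁) hc.mass₁_le_one
      (hη.le.trans hc.le_mass₂) hc.mass₂_le_one hc.width_nonneg hU d
    have hstep := hA.half_parisiOp_add_half_parisiOp_sub_ge (m := c.mid.mass) h₀ h₁
      (hη.trans_le hc.le_mass₁) (hη.trans_le hc.le_mass₂) rfl rfl hm.mass_le_one
      hc.width_nonneg hc.width_le_one x d
    have hmean := hA.integral_gapBound_sub_le (m := c.mid.mass) (v := c.width) h₀ h₁ fun y =>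
      ih hL (x + y) _ ((add_le_add_left hdir _).trans (by linarith))
    have hgap := hA.gapBound_le_integral_gapBound (T := T) (e := (c.mass₁ - c.mass₂) / 2)
      (K := massShift L) hlam hwidth henergy hm.mass_pos hm.mass_le_one hc.width_nonneg
      hc.width_le_one (by linarith [abs_nonneg d]) x d
    have herror := mul_le_mul_of_nonneg_right (sq_half_sub_div_mul_le hη hc.le_mass₁
      hc.mass₁_le_one hc.le_mass₂ hc.mass₂_le_one)
      (mul_nonneg entropyErrorConst_nonneg (mul_nonneg hc.width_nonneg (Real.sqrt_nonneg c.width)))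
    have hsplit : entropyErrorConst / η ^ 2 * widthError (c :: L) =
        1 / η ^ 2 * (entropyErrorConst * (c.width * √c.width)) +
          entropyErrorConst / η ^ 2 * widthError L := by
      rw [widthError_cons]; ring
    rw [hsplit]
    exact le_trans (by linarith!) hstep

/-! ### Integration against the cells of an order parameter -/

/-- The Stieltjes integral `∫ m dX` of the step function `m` that is given by a list of cells
starting at time `t`. -/
def stieltjesSum (X : ℝ → ℝ) : List Cell → ℝ → ℝ
  | [], _ => 0
  | c :: l, t => c.mass * (X (t + c.width) - X t) + stieltjesSum X l (t + c.width)

/-- A list of cells that is a discrete order parameter on the time interval `[0, T]`. -/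
structure IsPath (T : ℝ) (l : List Cell) : Prop where
  admissible : ∀ c ∈ l, c.IsAdmissible
  sorted : l.Pairwise fun c d => c.mass ≤ d.mass
  totalWidth_eq : totalWidth l = T

theorem stieltjesSum_sub (X Y : ℝ → ℝ) (l : List Cell) (t : ℝ) :
    stieltjesSum (fun z => X z - Y z) l t = stieltjesSum X l t - stieltjesSum Y l t := by
  induction l generalizing t with
  | nil => simp [stieltjesSum]
  | cons c l ih => simp only [stieltjesSum, ih]; ring

theorem stieltjesSum_const_mul (r : ℝ) (X : ℝ → ℝ) (l : List Cell) (t : ℝ) :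
    stieltjesSum (fun z => r * X z) l t = r * stieltjesSum X l t := by
  induction l generalizing t with
  | nil => simp [stieltjesSum]
  | cons c l ih => simp only [stieltjesSum, ih]; ring

namespace IsPath

variable {T M t : ℝ} {c : Cell} {l : List Cell} {g : ℝ → ℝ}

theorem nonneg (h : IsPath T l) : 0 ≤ T :=
  h.totalWidth_eq ▸ totalWidth_nonneg h.admissible

theorem head (h : IsPath T (c :: l)) : c.IsAdmissible :=
  h.admissible c List.mem_cons_self

theorem tail (h : IsPath T (c :: l)) : IsPath (T - c.width) l where
  admissible := (List.forall_mem_cons.mp h.admissible).2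
  sorted := h.sorted.of_cons
  totalWidth_eq := by
    rw [← h.totalWidth_eq, totalWidth_cons]
    ring

theorem mass_le (h : IsPath T (c :: l)) : ∀ d ∈ l, c.mass ≤ d.mass :=
  (List.pairwise_cons.mp h.sorted).1

/-- Summation by parts, with a fictitious cell of mass `s` before time `t`. -/
theorem abs_stieltjesSum_add_mul_le (h : IsPath T l) (hg : ∀ z ∈ Set.Icc t (t + T), |g z| ≤ M)
    {s : ℝ} (hs : 0 ≤ s) (hs_one : s ≤ 1) (hsl : ∀ c ∈ l, s ≤ c.mass) :
    |stieltjesSum g l t + s * g t| ≤ M * (2 - s) := by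
  have hgt : |g t| ≤ M := hg t ⟨le_rfl, by linarith [h.nonneg]⟩
  induction l generalizing T t s with
  | nil =>
    simp only [stieltjesSum, zero_add, abs_mul, abs_of_nonneg hs]
    nlinarith [abs_nonneg (g t)]
  | cons c l ih =>
    have hw := h.head.width_nonneg
    have hT := h.tail.nonneg
    have hrest := ih (t := t + c.width) h.tail
      (fun z hz => hg z ⟨by linarith [hz.1], by linarith [hz.2]⟩) h.head.mass_pos.le
      h.head.mass_le_one h.mass_le (hg _ ⟨by linarith, by linarith⟩)
    have hsc : 0 ≤ c.mass - s := sub_nonneg.mpr (hsl c List.mem_cons_self)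
    calc |stieltjesSum g (c :: l) t + s * g t|
        = |(stieltjesSum g l (t + c.width) + c.mass * g (t + c.width)) - (c.mass - s) * g t| := by
          rw [stieltjesSum]
          congr 1
          ring
      _ ≤ M * (2 - c.mass) + (c.mass - s) * M := by
          refine (abs_sub _ _).trans (add_le_add hrest ?_)
          rw [abs_mul, abs_of_nonneg hsc]
          gcongr
      _ = M * (2 - s) := by ring

theorem abs_stieltjesSum_le (h : IsPath T l) (hg : ∀ z ∈ Set.Icc 0 T, |g z| ≤ M) :
    |stieltjesSum g l 0| ≤ 2 * M := by
  have := h.abs_stieltjesSum_add_mul_le (t := 0) (by simpa using hg) le_rfl zero_le_one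
    fun c hc => (h.admissible c hc).mass_pos.le
  simpa [mul_comm] using this

end IsPath

/-! ### Refinements -/

/-- Two lists of cells that describe the same step function. -/
structure PathEquiv (l l' : List Cell) : Prop where
  parisiFn_eq : parisiFn l = parisiFn l'
  stieltjesSum_eq : ∀ X t, stieltjesSum X l t = stieltjesSum X l' t
  totalWidth_eq : totalWidth l = totalWidth l'

namespace PathEquiv

variable {l l' l'' : List Cell}

theorem refl (l : List Cell) : PathEquiv l l := ⟨rfl, fun _ _ => rfl, rfl⟩

theorem symm (h : PathEquiv l l') : PathEquiv l' l :=
  ⟨h.parisiFn_eq.symm, fun X t => (h.stieltjesSum_eq X t).symm, h.totalWidth_eq.symm⟩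

theorem trans (h : PathEquiv l l') (h' : PathEquiv l' l'') : PathEquiv l l'' :=
  ⟨h.parisiFn_eq.trans h'.parisiFn_eq,
    fun X t => (h.stieltjesSum_eq X t).trans (h'.stieltjesSum_eq X t),
    h.totalWidth_eq.trans h'.totalWidth_eq⟩

theorem cons (c : Cell) (h : PathEquiv l l') : PathEquiv (c :: l) (c :: l') where
  parisiFn_eq := by rw [parisiFn, h.parisiFn_eq, parisiFn]
  stieltjesSum_eq X t := by simp only [stieltjesSum, h.stieltjesSum_eq]
  totalWidth_eq := by simp only [totalWidth_cons, h.totalWidth_eq]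

theorem cons_zero {m : ℝ} (hm : 0 < m) (l : List Cell) : PathEquiv (⟨m, 0⟩ :: l) l where
  parisiFn_eq := parisiOp_zero hm _
  stieltjesSum_eq X t := by simp [stieltjesSum]
  totalWidth_eq := by simp

theorem cons_cons {m v w : ℝ} (hm : 0 < m) (hv : 0 ≤ v) (hw : 0 ≤ w)
    (hl : ∀ c ∈ l, c.IsAdmissible) :
    PathEquiv (⟨m, v⟩ :: ⟨m, w⟩ :: l) (⟨m, v + w⟩ :: l) where
  parisiFn_eq := parisiOp_parisiOp hm (lipschitzWith_parisiFn hl) hv hw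
  stieltjesSum_eq X t := by simp only [stieltjesSum, add_assoc]; ring
  totalWidth_eq := by simp only [totalWidth_cons]; ring

theorem nil_of_isPath_zero (h : IsPath 0 l) : PathEquiv [] l := by
  induction l with
  | nil => exact .refl _
  | cons c l ih =>
    have htail := h.tail
    have hw : c.width = 0 := le_antisymm (by linarith [htail.nonneg]) h.head.width_nonneg
    rw [hw, sub_zero] at htail
    rw [show c = ⟨c.mass, 0⟩ by rw [← hw]]
    exact (ih htail).trans (cons_zero h.head.mass_pos l).symm

end PathEquiv

/-- The list of cells in which each cell is split into `n` cells of equal width. -/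
def subdivide (n : ℕ) (l : List Cell) : List Cell :=
  l.flatMap fun c => List.replicate n ⟨c.mass, c.width / n⟩

section Subdivide

variable {T : ℝ} {n : ℕ} {l : List Cell}

theorem exists_of_mem_subdivide {c : Cell} (h : c ∈ subdivide n l) :
    ∃ d ∈ l, c = ⟨d.mass, d.width / n⟩ := by
  obtain ⟨d, hd, hcd⟩ := List.mem_flatMap.mp h
  exact ⟨d, hd, List.eq_of_mem_replicate hcd⟩

theorem isAdmissible_of_mem_subdivide (h : ∀ c ∈ l, c.IsAdmissible) :
    ∀ c ∈ subdivide n l, c.IsAdmissible := by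
  intro c hc
  obtain ⟨d, hd, rfl⟩ := exists_of_mem_subdivide hc
  exact ⟨(h d hd).mass_pos, (h d hd).mass_le_one, div_nonneg (h d hd).width_nonneg n.cast_nonneg⟩

theorem pathEquiv_replicate_append {m w : ℝ} (hm : 0 < m) (hw : 0 ≤ w)
    (hl : ∀ c ∈ l, c.IsAdmissible) (n : ℕ) :
    PathEquiv (List.replicate n ⟨m, w⟩ ++ l) (⟨m, n * w⟩ :: l) := by
  induction n with
  | zero => simpa using (PathEquiv.cons_zero hm l).symm
  | succ n ih =>
    have hadd : w + n * w = (n + 1 : ℕ) * w := by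
      push_cast
      ring
    rw [List.replicate_succ, List.cons_append, ← hadd]
    exact (ih.cons _).trans (.cons_cons hm hw (by positivity) hl)

theorem pathEquiv_subdivide (hn : n ≠ 0) (h : ∀ c ∈ l, c.IsAdmissible) :
    PathEquiv (subdivide n l) l := by
  induction l with
  | nil => exact .refl _
  | cons c l ih =>
    obtain ⟨hc, hl⟩ := List.forall_mem_cons.mp h
    have hw : 0 ≤ c.width / n := div_nonneg hc.width_nonneg n.cast_nonneg
    have hcancel : n * (c.width / n) = c.width := mul_div_cancel₀ _ (Nat.cast_ne_zero.mpr hn)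
    have hstep := pathEquiv_replicate_append hc.mass_pos hw
      (isAdmissible_of_mem_subdivide (n := n) hl) n
    rw [hcancel] at hstep
    exact hstep.trans ((ih hl).cons c)

theorem isPath_subdivide (h : IsPath T l) (hn : n ≠ 0) : IsPath T (subdivide n l) where
  admissible := isAdmissible_of_mem_subdivide h.admissible
  sorted := by
    refine List.pairwise_flatMap.mpr ⟨fun c _ => ?_, h.sorted.imp fun hcd a ha b hb => ?_⟩
    · exact List.pairwise_replicate.mpr (.inr le_rfl)
    · rw [List.eq_of_mem_replicate ha, List.eq_of_mem_replicate hb]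
      exact hcd
  totalWidth_eq := (pathEquiv_subdivide hn h.admissible).totalWidth_eq.trans h.totalWidth_eq

theorem IsPath.width_le (h : IsPath T l) {c : Cell} (hc : c ∈ l) : c.width ≤ T := by
  rw [← h.totalWidth_eq]
  exact List.single_le_sum (List.forall_mem_map.mpr fun d hd => (h.admissible d hd).width_nonneg)
    _ (List.mem_map_of_mem hc)

theorem IsPath.exists_pathEquiv_forall_width_le (h : IsPath T l) {δ : ℝ} (hδ : 0 < δ) :
    ∃ l', IsPath T l' ∧ PathEquiv l' l ∧
      ∀ c ∈ l', c.width ≤ δ ∧ ∃ d ∈ l, c.mass = d.mass := by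
  obtain ⟨n, hn⟩ := exists_nat_gt (T / δ)
  have hn_pos : (0 : ℝ) < n := (div_nonneg h.nonneg hδ.le).trans_lt hn
  have hn_ne : n ≠ 0 := Nat.cast_ne_zero.mp hn_pos.ne'
  refine ⟨subdivide n l, isPath_subdivide h hn_ne, pathEquiv_subdivide hn_ne h.admissible, ?_⟩
  intro c hc
  obtain ⟨d, hd, rfl⟩ := exists_of_mem_subdivide hc
  refine ⟨?_, d, hd, rfl⟩
  calc d.width / n ≤ T / n := by gcongr; exact h.width_le hd
    _ ≤ δ := (div_lt_comm₀ hδ hn_pos).mp hn |>.le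

end Subdivide

/-- A list of pair cells on which two given order parameters are constant. -/
structure IsCommonRefinement (l l' : List Cell) (L : List PairCell) : Prop where
  fst_equiv : PathEquiv (L.map PairCell.fst) l
  snd_equiv : PathEquiv (L.map PairCell.snd) l'
  sorted : L.Pairwise fun c d => c.mass₁ ≤ d.mass₁ ∧ c.mass₂ ≤ d.mass₂
  width_nonneg : ∀ c ∈ L, 0 ≤ c.width
  exists_fst : ∀ c ∈ L, ∃ d ∈ l, c.mass₁ = d.mass ∧ c.width ≤ d.width
  exists_snd : ∀ c ∈ L, ∃ d ∈ l', c.mass₂ = d.mass ∧ c.width ≤ d.width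

/-- The pair cell with the two order parameters exchanged. -/
def PairCell.swap (c : PairCell) : PairCell := ⟨c.mass₂, c.mass₁, c.width⟩

namespace IsCommonRefinement

variable {T : ℝ} {l l' : List Cell} {L : List PairCell}

theorem swap (h : IsCommonRefinement l l' L) : IsCommonRefinement l' l (L.map PairCell.swap) where
  fst_equiv := by
    rw [List.map_map]
    exact h.snd_equiv
  snd_equiv := by
    rw [List.map_map]
    exact h.fst_equiv
  sorted := List.pairwise_map.mpr (h.sorted.imp And.symm)
  width_nonneg := List.forall_mem_map.mpr h.width_nonneg
  exists_fst := List.forall_mem_map.mpr h.exists_snd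
  exists_snd := List.forall_mem_map.mpr h.exists_fst

theorem cons {m m' v w : ℝ} (hl : IsPath T (⟨m, v⟩ :: l)) (hl' : IsPath T (⟨m', w⟩ :: l'))
    (hvw : v ≤ w) (h : IsCommonRefinement l (⟨m', w - v⟩ :: l') L) :
    IsCommonRefinement (⟨m, v⟩ :: l) (⟨m', w⟩ :: l') (⟨m, m', v⟩ :: L) where
  fst_equiv := h.fst_equiv.cons _
  snd_equiv := by
    have hsplit := PathEquiv.cons_cons hl'.head.mass_pos hl.head.width_nonneg (sub_nonneg.mpr hvw)
      hl'.tail.admissible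
    rw [add_sub_cancel] at hsplit
    exact (h.snd_equiv.cons _).trans hsplit
  sorted := by
    refine List.pairwise_cons.mpr ⟨fun c hc => ⟨?_, ?_⟩, h.sorted⟩
    · obtain ⟨d, hd, hmass, -⟩ := h.exists_fst c hc
      exact (hl.mass_le d hd).trans_eq hmass.symm
    · obtain ⟨d, hd, hmass, -⟩ := h.exists_snd c hc
      rw [hmass]
      rcases List.mem_cons.mp hd with rfl | hd
      · exact le_rfl
      · exact hl'.mass_le d hd
  width_nonneg := List.forall_mem_cons.mpr ⟨hl.head.width_nonneg, h.width_nonneg⟩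
  exists_fst := by
    refine List.forall_mem_cons.mpr ⟨⟨_, List.mem_cons_self, rfl, le_rfl⟩, fun c hc => ?_⟩
    obtain ⟨d, hd, hcd⟩ := h.exists_fst c hc
    exact ⟨d, List.mem_cons_of_mem _ hd, hcd⟩
  exists_snd := by
    refine List.forall_mem_cons.mpr ⟨⟨_, List.mem_cons_self, rfl, hvw⟩, fun c hc => ?_⟩
    obtain ⟨d, hd, hmass, hwidth⟩ := h.exists_snd c hc
    rcases List.mem_cons.mp hd with rfl | hd
    · exact ⟨_, List.mem_cons_self, hmass, hwidth.trans (sub_le_self _ hl.head.width_nonneg)⟩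
    · exact ⟨d, List.mem_cons_of_mem _ hd, hmass, hwidth⟩

end IsCommonRefinement

theorem IsPath.trim {T m v w : ℝ} {l : List Cell} (h : IsPath T (⟨m, w⟩ :: l)) (hvw : v ≤ w) :
    IsPath (T - v) (⟨m, w - v⟩ :: l) where
  admissible := List.forall_mem_cons.mpr
    ⟨⟨h.head.mass_pos, h.head.mass_le_one, sub_nonneg.mpr hvw⟩, h.tail.admissible⟩
  sorted := List.pairwise_cons.mpr (List.pairwise_cons.mp h.sorted)
  totalWidth_eq := by
    simp only [← h.totalWidth_eq, totalWidth_cons]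
    ring

theorem exists_isCommonRefinement : ∀ {T : ℝ} {l l' : List Cell}, IsPath T l → IsPath T l' →
    ∃ L, IsCommonRefinement l l' L
  | _, [], _, hl, hl' => by
    cases hl.totalWidth_eq
    exact ⟨[], .refl _, .nil_of_isPath_zero hl', .nil, by simp, by simp, by simp⟩
  | _, _, [], hl, hl' => by
    cases hl'.totalWidth_eq
    exact ⟨[], .nil_of_isPath_zero hl, .refl _, .nil, by simp, by simp, by simp⟩
  | _, ⟨_, v⟩ :: _, ⟨_, w⟩ :: _, hl, hl' => by
    rcases le_total v w with hvw | hwv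
    · obtain ⟨L, hL⟩ := exists_isCommonRefinement hl.tail (hl'.trim hvw)
      exact ⟨_, hL.cons hl hl' hvw⟩
    · obtain ⟨L, hL⟩ := exists_isCommonRefinement hl'.tail (hl.trim hwv)
      exact ⟨_, (hL.cons hl' hl hwv).swap⟩
termination_by _ l l' => l.length + l'.length

theorem IsCommonRefinement.isPath_mid {T η : ℝ} {l l' : List Cell} {L : List PairCell}
    (h : IsCommonRefinement l l' L) (hl : IsPath T l) (hη : 0 < η)
    (hL : ∀ c ∈ L, c.IsAdmissible η) : IsPath T (L.map PairCell.mid) where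
  admissible := List.forall_mem_map.mpr fun c hc => (hL c hc).mid hη
  sorted := List.pairwise_map.mpr (h.sorted.imp fun hcd => by
    simp only [PairCell.mid]
    linarith [hcd.1, hcd.2])
  totalWidth_eq := by
    have hfst : totalWidth (L.map PairCell.mid) = totalWidth (L.map PairCell.fst) := by
      simp [totalWidth, PairCell.mid, PairCell.fst, Function.comp_def]
    rw [hfst, h.fst_equiv.totalWidth_eq, hl.totalWidth_eq]

theorem IsPath.exists_fine_refinement {T η δ : ℝ} {l l' : List Cell} (hl : IsPath T l)
    (hl' : IsPath T l') (hη : 0 < η) (hlη : ∀ c ∈ l, η ≤ c.mass) (hlη' : ∀ c ∈ l', η ≤ c.mass)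
    (hδ : 0 < δ) (hδ_one : δ ≤ 1) :
    ∃ L : List PairCell, PathEquiv (L.map PairCell.fst) l ∧ PathEquiv (L.map PairCell.snd) l' ∧
      IsPath T (L.map PairCell.mid) ∧ ∀ c ∈ L, c.IsAdmissible η ∧ c.width ≤ δ := by
  obtain ⟨k, hk, hkl, hk_mem⟩ := hl.exists_pathEquiv_forall_width_le hδ
  obtain ⟨L, hL⟩ := exists_isCommonRefinement hk hl'
  have hadm : ∀ c ∈ L, c.IsAdmissible η ∧ c.width ≤ δ := by
    intro c hc
    obtain ⟨d, hd, hd_mass, hd_width⟩ := hL.exists_fst c hc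
    obtain ⟨d', hd', hd_mass', -⟩ := hL.exists_snd c hc
    obtain ⟨hδd, e, he, hde⟩ := hk_mem d hd
    have hwidth : c.width ≤ δ := hd_width.trans hδd
    refine ⟨⟨?_, ?_, ?_, ?_, hL.width_nonneg c hc, hwidth.trans hδ_one⟩, hwidth⟩
    · exact (hlη e he).trans_eq (hde.symm.trans hd_mass.symm)
    · exact hd_mass.trans_le (hk.admissible d hd).mass_le_one
    · exact (hlη' d' hd').trans_eq hd_mass'.symm
    · exact hd_mass'.trans_le (hl'.admissible d' hd').mass_le_one
  exact ⟨L, hL.fst_equiv.trans hkl, hL.snd_equiv, hL.isPath_mid hk hη fun c hc => (hadm c hc).1,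
    hadm⟩

/-! ### Near-minimizers -/

/-- The functional `𝒫(m) = Ψ_m(h) - ½ ∫ m dX` in the time variable `t = ξ'(q)`. -/
def parisiEnergy (h : ℝ) (X : ℝ → ℝ) (l : List Cell) : ℝ :=
  parisiFn l h - 1 / 2 * stieltjesSum X l 0

theorem exists_shiftEnergy_le_of_gapBound_le (T h : ℝ) {ε : ℝ} (hε : 0 < ε) :
    ∃ lam > 0, ∃ δ > 0, ∀ K Q u, gapBound T lam T K Q u h 0 ≤ δ → Q ≤ ε := by
  set c := exp (-(8 * T)) / 2 * exp (-(12 * T)) / cosh (4 * h) with hc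
  set C := T ^ 2 * exp (4 * T) * cosh (2 * h) with hC
  set κ := 1 / (2 * (1 + T ^ 2)) with hκ
  have hc_pos : 0 < c := by positivity
  set lam := ε * c / (C + 1) with hlam
  have hlam_pos : 0 < lam := by positivity
  have hlamC : lam * C ≤ ε * c := by
    rw [hlam, div_mul_eq_mul_div]
    exact div_le_of_le_mul₀ (by positivity) (by positivity) (by nlinarith [mul_pos hε hc_pos])
  refine ⟨lam, hlam_pos, κ * lam * (c * ε), by positivity, fun K Q u hgap => ?_⟩
  have hbound : κ * lam * (2 * (c * Q) - lam * C) ≤ κ * lam * (c * ε) := by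
    calc κ * lam * (2 * (c * Q) - lam * C)
        ≤ κ * lam * (2 * (c * Q) - lam * C) + κ * (2 * lam * (K * u h) ^ 2) :=
          le_add_of_nonneg_right (by positivity)
      _ = gapBound T lam T K Q u h 0 := by
          rw [gapBound, ← hκ, hc, hC]
          ring
      _ ≤ κ * lam * (c * ε) := hgap
  have hdiv : 2 * (c * Q) - lam * C ≤ c * ε := le_of_mul_le_mul_left hbound (by positivity)
  exact le_of_mul_le_mul_left (by linarith : c * Q ≤ c * ε) hc_pos

theorem widthError_le {δ : ℝ} {L : List PairCell} (h : ∀ c ∈ L, 0 ≤ c.width ∧ c.width ≤ δ) :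
    widthError L ≤ √δ * pairWidth L := by
  induction L with
  | nil => simp
  | cons c L ih =>
    obtain ⟨⟨hw, hwδ⟩, hL⟩ := List.forall_mem_cons.mp h
    rw [widthError_cons, pairWidth_cons, mul_add, mul_comm √δ c.width]
    gcongr
    exact ih hL

theorem exists_pos_le_mass {l : List Cell} (h : ∀ c ∈ l, c.IsAdmissible) :
    ∃ η > 0, ∀ c ∈ l, η ≤ c.mass := by
  induction l with
  | nil => exact ⟨1, one_pos, by simp⟩
  | cons c l ih =>
    obtain ⟨hc, hl⟩ := List.forall_mem_cons.mp h
    obtain ⟨η, hη, hle⟩ := ih hl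
    exact ⟨min c.mass η, lt_min hc.mass_pos hη, List.forall_mem_cons.mpr
      ⟨min_le_left _ _, fun d hd => (min_le_right _ _).trans (hle d hd)⟩⟩

theorem exists_small_width (C T : ℝ) {ε δ : ℝ} (hε : 0 < ε) (hδ : 0 < δ) :
    ∃ w > 0, w ≤ 1 ∧ w ≤ ε ∧ C * (√w * T) ≤ δ := by
  have hcont : Continuous fun w : ℝ => C * (√w * T) := by fun_prop
  have hlim : ∀ᶠ w : ℝ in 𝓝 0, C * (√w * T) ≤ δ :=
    (hcont.tendsto' 0 0 (by simp)).eventually_le_const hδ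
  exact ((eventually_le_nhds zero_lt_one).and ((eventually_le_nhds hε).and hlim)).exists_gt

theorem stieltjesSum_map_mid (X : ℝ → ℝ) (L : List PairCell) (t : ℝ) :
    stieltjesSum X (L.map PairCell.mid) t =
      (stieltjesSum X (L.map PairCell.fst) t + stieltjesSum X (L.map PairCell.snd) t) / 2 := by
  induction L generalizing t with
  | nil => simp [stieltjesSum]
  | cons c L ih =>
    simp only [List.map_cons, stieltjesSum, PairCell.mid, PairCell.fst, PairCell.snd, ih]
    ring

section NearMinimizers

variable {T h F : ℝ} {X : ℝ → ℝ}

theorem exists_refinement_shiftEnergy_le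
    (hF : F ∈ lowerBounds (parisiEnergy h X '' {l | IsPath T l})) {ε : ℝ} (hε : 0 < ε) :
    ∃ δ > 0, ∀ l l', IsPath T l → IsPath T l' → parisiEnergy h X l ≤ F + δ →
      parisiEnergy h X l' ≤ F + δ → ∃ L : List PairCell, PathEquiv (L.map PairCell.fst) l ∧
        PathEquiv (L.map PairCell.snd) l' ∧ pairWidth L = T ∧ shiftEnergy L ≤ ε ∧
          ∀ c ∈ L, (∃ η > 0, c.IsAdmissible η) ∧ c.width ≤ ε := by
  obtain ⟨lam, hlam, δ, hδ, hgap⟩ := exists_shiftEnergy_le_of_gapBound_le T h hε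
  refine ⟨δ / 2, half_pos hδ, fun l l' hl hl' hmin hmin' => ?_⟩
  obtain ⟨η, hη, hη_le⟩ := exists_pos_le_mass (List.forall_mem_append.mpr
    ⟨hl.admissible, hl'.admissible⟩)
  obtain ⟨hηl, hηl'⟩ := List.forall_mem_append.mp hη_le
  obtain ⟨w, hw, hw_one, hwε, hw_err⟩ := exists_small_width (entropyErrorConst / η ^ 2) T hε
    (half_pos hδ)
  obtain ⟨L, hfst, hsnd, hmid, hL⟩ := hl.exists_fine_refinement hl' hη hηl hηl' hw hw_one
  have hwidth : pairWidth L = T := (totalWidth_map_mid L).symm.trans hmid.totalWidth_eq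
  have herr : entropyErrorConst / η ^ 2 * widthError L ≤ δ / 2 := by
    refine le_trans ?_ hw_err
    have := entropyErrorConst_nonneg
    rw [← hwidth]
    gcongr
    exact widthError_le fun c hc => ⟨(hL c hc).1.width_nonneg, (hL c hc).2⟩
  have hconv := parisiFn_midpoint_gap hη hlam.le (fun c hc => (hL c hc).1) h 0 (T := T)
    (by simp [hwidth])
  have hmid_le := hF ⟨_, hmid, rfl⟩
  rw [parisiEnergy, stieltjesSum_map_mid, hfst.stieltjesSum_eq, hsnd.stieltjesSum_eq] at hmid_le
  rw [hfst.parisiFn_eq, hsnd.parisiFn_eq, hwidth, add_zero, sub_zero] at hconv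
  rw [parisiEnergy] at hmin hmin'
  exact ⟨L, hfst, hsnd, hwidth, hgap _ _ _ (by linarith), fun c hc =>
    ⟨⟨η, hη, (hL c hc).1⟩, (hL c hc).2.trans hwε⟩⟩

end NearMinimizers

/-! ### Stieltjes integrals of near-minimizers -/

theorem abs_sub_sub_deriv_mul_le_of_lipschitzOnWith {g g' : ℝ → ℝ} {a b : ℝ} {B : NNReal}
    (hg : ∀ x, HasDerivAt g (g' x) x) (hg' : LipschitzOnWith B g' (Set.Icc a b)) (hab : a ≤ b) :
    |g b - g a - g' a * (b - a)| ≤ B * (b - a) ^ 2 := by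
  have hderiv : ∀ x ∈ Set.Icc a b, HasDerivWithinAt (fun x => g x - g' a * x) (g' x - g' a)
      (Set.Icc a b) x := fun x _ =>
    ((hg x).sub (hasDerivAt_const_mul (g' a))).hasDerivWithinAt
  have hbound : ∀ x ∈ Set.Icc a b, ‖g' x - g' a‖ ≤ B * (b - a) := fun x hx => by
    refine (hg'.dist_le_mul x hx a ⟨le_rfl, hab⟩).trans ?_
    rw [Real.dist_eq, abs_of_nonneg (sub_nonneg.mpr hx.1)]
    gcongr
    exact hx.2
  have hmvt := (convex_Icc a b).norm_image_sub_le_of_norm_hasDerivWithin_le hderiv hbound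
    ⟨le_rfl, hab⟩ ⟨hab, le_rfl⟩
  rw [Real.norm_eq_abs, Real.norm_eq_abs, abs_of_nonneg (sub_nonneg.mpr hab)] at hmvt
  calc |g b - g a - g' a * (b - a)| = |g b - g' a * b - (g a - g' a * a)| := by congr 1; ring
    _ ≤ B * (b - a) * (b - a) := hmvt
    _ = B * (b - a) ^ 2 := by ring

theorem exists_polynomial_even_near {f : ℝ → ℝ} {T : ℝ} (hT : 0 ≤ T)
    (hf : ContinuousOn f (Set.Icc 0 T)) {ε : ℝ} (hε : 0 < ε) :
    ∃ R : Polynomial ℝ, R.derivative.eval 0 = 0 ∧ ∀ t ∈ Set.Icc 0 T, |f t - R.eval t| ≤ ε := by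
  have hsqrt : ContinuousOn (fun z => f √z) (Set.Icc 0 (T ^ 2)) :=
    hf.comp (by fun_prop) fun z hz => ⟨sqrt_nonneg _, (sqrt_le_left hT).mpr hz.2⟩
  obtain ⟨P, hP⟩ := exists_polynomial_near_of_continuousOn 0 (T ^ 2) _ hsqrt ε hε
  refine ⟨P.comp (Polynomial.X ^ 2), by simp [Polynomial.derivative_comp], fun t ht => ?_⟩
  have := hP (t ^ 2) ⟨sq_nonneg t, pow_le_pow_left₀ ht.1 ht.2 2⟩
  rw [sqrt_sq ht.1, abs_sub_comm] at this
  simpa using this.le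

theorem exists_lipschitzOnWith_eval (R : Polynomial ℝ) (a b : ℝ) :
    ∃ B, LipschitzOnWith B (fun x => R.eval x) (Set.Icc a b) :=
  (R.contDiff_aeval (𝕜 := ℝ) 1).locallyLipschitz.locallyLipschitzOn
    |>.exists_lipschitzOnWith_of_compact isCompact_Icc

theorem abs_le_half_add_sq_div {s : ℝ} (hs : 0 < s) (K : ℝ) : |K| ≤ s / 2 + K ^ 2 / (2 * s) := by
  have hsq : s / 2 + K ^ 2 / (2 * s) - |K| = (s - |K|) ^ 2 / (2 * s) := by
    rw [← sq_abs K]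
    field_simp
    ring
  exact sub_nonneg.mp (hsq ▸ by positivity)

theorem abs_sub_deriv_mul_massShift_le {g g' : ℝ → ℝ} {T s δ t : ℝ} {B : NNReal}
    {L : List PairCell} (hg : ∀ x, HasDerivAt g (g' x) x)
    (hg' : LipschitzOnWith B g' (Set.Icc 0 T)) (hs : 0 < s)
    (hL : ∀ c ∈ L, (∃ η > 0, c.IsAdmissible η) ∧ c.width ≤ δ) (ht : 0 ≤ t)
    (htT : t + pairWidth L ≤ T) :
    |(stieltjesSum g (L.map PairCell.fst) t - stieltjesSum g (L.map PairCell.snd) t) / 2 -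
        g' t * massShift L| ≤ B * ((s / 2 + δ) * pairWidth L + shiftEnergy L / (2 * s)) := by
  induction L generalizing t with
  | nil => simp [stieltjesSum, shiftEnergy]
  | cons c L ih =>
    obtain ⟨⟨⟨η, hη, hc⟩, hcδ⟩, hL⟩ := List.forall_mem_cons.mp hL
    have hw := hc.width_nonneg
    have hwidth : 0 ≤ pairWidth L :=
      pairWidth_nonneg fun d hd => (hL d hd).1.choose_spec.2.width_nonneg
    rw [pairWidth_cons, ← add_assoc] at htT
    have hrest := ih hL (add_nonneg ht hw) htT
    have htaylor := abs_sub_sub_deriv_mul_le_of_lipschitzOnWith hg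
      (hg'.mono (Set.Icc_subset_Icc ht (by linarith))) (le_add_of_nonneg_right (a := t) hw)
    have hderiv := hg'.dist_le_mul (t + c.width) ⟨by linarith, by linarith⟩ t
      ⟨ht, by linarith⟩
    rw [add_sub_cancel_left] at htaylor
    rw [Real.dist_eq, Real.dist_eq, add_sub_cancel_left, abs_of_nonneg hw] at hderiv
    set e := (c.mass₁ - c.mass₂) / 2
    set K := massShift L
    have he_one : |e| ≤ 1 := abs_half_sub_le_one (hη.le.trans hc.le_mass₁) hc.mass₁_le_one
      (hη.le.trans hc.le_mass₂) hc.mass₂_le_one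
    have hfirst : |e * (g (t + c.width) - g t - g' t * c.width)| ≤ B * (δ * c.width) := by
      rw [abs_mul]
      calc |e| * |g (t + c.width) - g t - g' t * c.width| ≤ 1 * (B * c.width ^ 2) := by gcongr
        _ ≤ B * (δ * c.width) := by rw [one_mul, sq]; gcongr
    have hsecond : |(g' (t + c.width) - g' t) * K| ≤
        B * c.width * (s / 2 + K ^ 2 / (2 * s)) := by
      rw [abs_mul]
      gcongr
      exact abs_le_half_add_sq_div hs K
    calc _ = |e * (g (t + c.width) - g t - g' t * c.width) + (g' (t + c.width) - g' t) * K +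
          ((stieltjesSum g (L.map PairCell.fst) (t + c.width) -
            stieltjesSum g (L.map PairCell.snd) (t + c.width)) / 2 - g' (t + c.width) * K)| := by
          simp only [List.map_cons, stieltjesSum, PairCell.fst, PairCell.snd, massShift_cons]
          congr 1
          ring
      _ ≤ _ := (abs_add_three _ _ _).trans (add_le_add_three hfirst hsecond hrest)
      _ = _ := by
          rw [pairWidth_cons, shiftEnergy]
          ring

theorem IsPath.abs_stieltjesSum_sub_stieltjesSum_le {T M : ℝ} {f g : ℝ → ℝ} {l : List Cell}
    (h : IsPath T l) (hfg : ∀ z ∈ Set.Icc 0 T, |f z - g z| ≤ M) :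
    |stieltjesSum f l 0 - stieltjesSum g l 0| ≤ 2 * M :=
  stieltjesSum_sub f g l 0 ▸ h.abs_stieltjesSum_le hfg

theorem exists_forall_abs_stieltjesSum_sub_le {T h F : ℝ} {X f : ℝ → ℝ} (hT : 0 ≤ T)
    (hF : F ∈ lowerBounds (parisiEnergy h X '' {l | IsPath T l}))
    (hf : ContinuousOn f (Set.Icc 0 T)) {ε : ℝ} (hε : 0 < ε) :
    ∃ δ > 0, ∀ l l', IsPath T l → IsPath T l' → parisiEnergy h X l ≤ F + δ →
      parisiEnergy h X l' ≤ F + δ → |stieltjesSum f l 0 - stieltjesSum f l' 0| ≤ ε := by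
  obtain ⟨R, hR_zero, hR⟩ := exists_polynomial_even_near hT hf (ε := ε / 8) (by positivity)
  obtain ⟨B, hB⟩ := exists_lipschitzOnWith_eval R.derivative 0 T
  obtain ⟨s, hs, hsε⟩ : ∃ s > 0, B * ((s / 2 + s ^ 2) * T + s ^ 2 / (2 * s)) ≤ ε / 8 := by
    have hcont : Continuous fun s : ℝ => B * ((s / 2 + s ^ 2) * T + s / 2) := by fun_prop
    obtain ⟨s, hs, hle⟩ := ((hcont.tendsto' 0 0 (by simp)).eventually_le_const
      (by positivity : 0 < ε / 8)).exists_gt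
    refine ⟨s, hs, hle.trans_eq' ?_⟩
    field_simp
  obtain ⟨δ, hδ, hL⟩ := exists_refinement_shiftEnergy_le hF (sq_pos_of_pos hs)
  refine ⟨δ, hδ, fun l l' hl hl' hmin hmin' => ?_⟩
  obtain ⟨L, hfst, hsnd, hwidth, hQ, hadm⟩ := hL l l' hl hl' hmin hmin'
  have hmain := abs_sub_deriv_mul_massShift_le R.hasDerivAt hB hs hadm le_rfl
    (by rw [zero_add, hwidth])
  rw [hR_zero, zero_mul, sub_zero, hfst.stieltjesSum_eq, hsnd.stieltjesSum_eq, hwidth] at hmain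
  have hpoly : |stieltjesSum R.eval l 0 - stieltjesSum R.eval l' 0| / 2 ≤ ε / 8 := by
    rw [← abs_two, ← abs_div]
    refine hmain.trans (le_trans ?_ hsε)
    gcongr
  have hfR := hl.abs_stieltjesSum_sub_stieltjesSum_le hR
  have hfR' := hl'.abs_stieltjesSum_sub_stieltjesSum_le hR
  rw [abs_sub_comm] at hfR'
  have htri := (abs_sub_le (stieltjesSum f l 0) (stieltjesSum R.eval l 0)
    (stieltjesSum f l' 0)).trans (add_le_add_right (abs_sub_le _ (stieltjesSum R.eval l' 0) _) _)
  linarith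

/-! ### The envelope theorem -/

/-- The filter of the points `l ∈ A` at which `Φ` is close to the infimum `a` of `Φ` on `A`. -/
def nearMinimizers {ι : Type*} (Φ : ι → ℝ) (A : Set ι) (a : ℝ) : Filter ι :=
  ⨅ δ > 0, 𝓟 {l ∈ A | Φ l ≤ a + δ}

section Envelope

variable {ι : Type*} {A : Set ι}

theorem hasBasis_nearMinimizers (Φ : ι → ℝ) (A : Set ι) (a : ℝ) :
    (nearMinimizers Φ A a).HasBasis (0 < ·) fun δ => {l ∈ A | Φ l ≤ a + δ} :=
  hasBasis_biInf_principal' (fun δ hδ δ' hδ' => ⟨min δ δ', lt_min hδ hδ',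
    fun _ hl => ⟨hl.1, hl.2.trans (by gcongr; exact min_le_left _ _)⟩,
    fun _ hl => ⟨hl.1, hl.2.trans (by gcongr; exact min_le_right _ _)⟩⟩) ⟨1, one_pos⟩

theorem exists_le_add_of_isGLB {Φ : ι → ℝ} {a : ℝ} (h : IsGLB (Φ '' A) a) {δ : ℝ} (hδ : 0 < δ) :
    ∃ l ∈ A, Φ l ≤ a + δ := by
  obtain ⟨_, ⟨l, hl, rfl⟩, -, hlt⟩ := h.exists_between (lt_add_of_pos_right a hδ)
  exact ⟨l, hl, hlt.le⟩

theorem neBot_nearMinimizers {Φ : ι → ℝ} {a : ℝ} (h : IsGLB (Φ '' A) a) :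
    (nearMinimizers Φ A a).NeBot :=
  (hasBasis_nearMinimizers Φ A a).neBot_iff.mpr fun hδ => exists_le_add_of_isGLB h hδ

theorem le_add_of_isGLB_image {Φ Ψ : ι → ℝ} {a b x δ : ℝ} (ha : IsGLB (Φ '' A) a)
    (hb : b ∈ lowerBounds (Ψ '' A)) (hδ : 0 < δ)
    (h : ∀ l ∈ A, Φ l ≤ a + δ → Ψ l ≤ Φ l + x) : b ≤ a + x := by
  refine le_of_forall_pos_le_add fun ε hε => ?_
  obtain ⟨l, hl, hle⟩ := exists_le_add_of_isGLB ha (lt_min hδ hε)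
  have hnear := h l hl (hle.trans (by gcongr; exact min_le_left _ _))
  linarith [hb ⟨l, hl, rfl⟩, min_le_right δ ε]

theorem hasDerivAt_of_isGLB {Φ : ℝ → ι → ℝ} {D : ι → ℝ} {F : ℝ → ℝ} {J t M : ℝ}
    (hF : ∀ᶠ s in 𝓝 t, IsGLB (Φ s '' A) (F s))
    (hΦ : ∀ ε > 0, ∀ᶠ s in 𝓝 t, ∀ l ∈ A, |Φ s l - Φ t l - (s - t) * D l| ≤ ε * |s - t|)
    (hD : ∀ l ∈ A, |D l| ≤ M) (hJ : Tendsto D (nearMinimizers (Φ t) A (F t)) (𝓝 J)) :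
    HasDerivAt F J t := by
  rw [hasDerivAt_iff_isLittleO, Asymptotics.isLittleO_iff]
  intro c hc
  set e := c / 2 with he
  have he_pos : 0 < e := by positivity
  obtain ⟨δ, hδ, hδJ⟩ := (hasBasis_nearMinimizers _ _ _).eventually_iff.mp
    (Metric.tendsto_nhds.mp hJ e he_pos)
  have hcont : Continuous fun s => (|J| + M + 3 * e) * |s - t| := by fun_prop
  have hsmall := (hcont.tendsto' t 0 (by simp)).eventually_le_const (half_pos hδ)
  filter_upwards [hF, hΦ e he_pos, hsmall] with s hFs hΦs hsδ
  have hFt := hF.self_of_nhds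
  have hlin : ∀ l ∈ A, Φ t l ≤ F t + δ →
      |Φ s l - Φ t l - (s - t) * J| ≤ 2 * e * |s - t| := fun l hl hle => by
    have hDJ : |(s - t) * D l - (s - t) * J| ≤ e * |s - t| := by
      rw [← mul_sub, abs_mul, mul_comm]
      gcongr
      exact (hδJ ⟨hl, hle⟩).le
    linarith [abs_sub_le (Φ s l - Φ t l) ((s - t) * D l) ((s - t) * J), hΦs l hl]
  have hupper : F s ≤ F t + ((s - t) * J + 2 * e * |s - t|) :=
    le_add_of_isGLB_image hFt hFs.1 hδ fun l hl hle => by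
      linarith [(abs_le.mp (hlin l hl hle)).2]
  have hlower : F t ≤ F s + (-((s - t) * J) + 2 * e * |s - t|) :=
    le_add_of_isGLB_image hFs hFt.1 (half_pos hδ) fun l hl hle => by
      have hJst : (s - t) * J ≤ |J| * |s - t| := by
        rw [← abs_mul, mul_comm]
        exact le_abs_self _
      have hDst : -(M * |s - t|) ≤ (s - t) * D l := by
        refine neg_le_of_abs_le ?_
        rw [abs_mul, mul_comm]
        gcongr
        exact hD l hl
      have hnear : Φ t l ≤ F t + δ := by linarith [(abs_le.mp (hΦs l hl)).1]
      linarith [(abs_le.mp (hlin l hl hnear)).1]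
  rw [smul_eq_mul, norm_eq_abs, norm_eq_abs, show c = 2 * e by rw [he]; ring, abs_le]
  constructor <;> linarith

end Envelope

theorem exists_tendsto_stieltjesSum {T h F : ℝ} {X f : ℝ → ℝ} (hT : 0 ≤ T)
    (hF : IsGLB (parisiEnergy h X '' {l | IsPath T l}) F) (hf : ContinuousOn f (Set.Icc 0 T)) :
    ∃ J, Tendsto (stieltjesSum f · 0) (nearMinimizers (parisiEnergy h X) {l | IsPath T l} F)
      (𝓝 J) := by
  have := neBot_nearMinimizers hF
  refine cauchy_map_iff_exists_tendsto.mp (Metric.cauchy_iff.mpr ⟨inferInstance, fun ε hε => ?_⟩)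
  obtain ⟨δ, hδ, hle⟩ := exists_forall_abs_stieltjesSum_sub_le hT hF.1 hf (half_pos hε)
  refine ⟨_, image_mem_map ((hasBasis_nearMinimizers _ _ _).mem_of_mem hδ), ?_⟩
  rintro _ ⟨l, ⟨hl, hmin⟩, rfl⟩ _ ⟨l', ⟨hl', hmin'⟩, rfl⟩
  exact (hle l l' hl hl' hmin hmin').trans_lt (half_lt_self hε)

theorem differentiableAt_of_isGLB_parisiEnergy {T h t : ℝ} {X : ℝ → ℝ → ℝ} {F g : ℝ → ℝ}
    (hF : ∀ᶠ s in 𝓝 t, IsGLB (parisiEnergy h (X s) '' {l | IsPath T l}) (F s))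
    (hg : ContinuousOn g (Set.Icc 0 T))
    (hX : ∀ ε > 0, ∀ᶠ s in 𝓝 t, ∀ z ∈ Set.Icc 0 T,
      |X s z - X t z - (s - t) * g z| ≤ ε * |s - t|) :
    DifferentiableAt ℝ F t := by
  have hFt := hF.self_of_nhds
  obtain ⟨_, l₀, hl₀, -⟩ := hFt.nonempty
  obtain ⟨M, hM⟩ := isCompact_Icc.exists_bound_of_continuousOn hg
  obtain ⟨J, hJ⟩ := exists_tendsto_stieltjesSum hl₀.nonneg hFt hg
  refine (hasDerivAt_of_isGLB (D := fun l => -(1 / 2) * stieltjesSum g l 0) (M := M) hF ?_ ?_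
    (hJ.const_mul _)).differentiableAt
  · intro ε hε
    filter_upwards [hX ε hε] with s hs l hl
    have hsum : parisiEnergy h (X s) l - parisiEnergy h (X t) l -
        (s - t) * (-(1 / 2) * stieltjesSum g l 0) =
          -(1 / 2) * stieltjesSum (fun z => X s z - X t z - (s - t) * g z) l 0 := by
      rw [stieltjesSum_sub, stieltjesSum_sub, stieltjesSum_const_mul, parisiEnergy, parisiEnergy]
      ring
    have hle := hl.abs_stieltjesSum_le hs
    rw [hsum, abs_mul, abs_neg, abs_of_pos one_half_pos]
    linarith
  · intro l hl
    have hle := hl.abs_stieltjesSum_le hM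
    rw [abs_mul, abs_neg, abs_of_pos one_half_pos]
    linarith

/-! ### The Legendre transform on the unit interval -/

/-- A maximizer of `y ↦ y * z - φ y` on `[0, 1]`, with a junk value if there is none. -/
def legendreArg (φ : ℝ → ℝ) (z : ℝ) : ℝ :=
  Classical.epsilon fun x => x ∈ Set.Icc 0 1 ∧ IsMaxOn (fun y => y * z - φ y) (Set.Icc 0 1) x

/-- The Legendre transform of the restriction of `φ` to `[0, 1]`, written in terms of a maximizer
because the maximizer is its derivative. -/
def legendre (φ : ℝ → ℝ) (z : ℝ) : ℝ := legendreArg φ z * z - φ (legendreArg φ z)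

section Legendre

variable {φ ψ : ℝ → ℝ} {q y z d : ℝ}

theorem legendreArg_spec (hφ : ContinuousOn φ (Set.Icc 0 1)) (z : ℝ) :
    legendreArg φ z ∈ Set.Icc 0 1 ∧
      IsMaxOn (fun y => y * z - φ y) (Set.Icc 0 1) (legendreArg φ z) :=
  Classical.epsilon_spec (isCompact_Icc.exists_isMaxOn (Set.nonempty_Icc.mpr zero_le_one)
    (((continuous_id.mul continuous_const).continuousOn).sub hφ))

theorem legendreArg_mem (hφ : ContinuousOn φ (Set.Icc 0 1)) (z : ℝ) :
    legendreArg φ z ∈ Set.Icc 0 1 :=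
  (legendreArg_spec hφ z).1

theorem le_legendre (hφ : ContinuousOn φ (Set.Icc 0 1)) (hy : y ∈ Set.Icc 0 1) (z : ℝ) :
    y * z - φ y ≤ legendre φ z :=
  (legendreArg_spec hφ z).2 hy

theorem exists_forall_abs_legendre_le (hφ : ContinuousOn φ (Set.Icc 0 1)) (T : ℝ) :
    ∃ M, ∀ z ∈ Set.Icc 0 T, |legendre φ z| ≤ M := by
  obtain ⟨C, hC⟩ := isCompact_Icc.exists_bound_of_continuousOn hφ
  refine ⟨T + C, fun z hz => ?_⟩
  have hx := legendreArg_mem hφ z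
  calc |legendre φ z| ≤ |legendreArg φ z * z| + |φ (legendreArg φ z)| := abs_sub _ _
    _ ≤ T + C := by
      refine add_le_add ?_ (hC _ hx)
      rw [abs_of_nonneg (mul_nonneg hx.1 hz.1)]
      exact (mul_le_of_le_one_left hz.1 hx.2).trans hz.2

theorem add_mul_sub_le_of_convexOn {s : Set ℝ} (hφ : ConvexOn ℝ s φ) (hq : q ∈ s) (hy : y ∈ s)
    (hd : HasDerivAt φ d q) : φ q + d * (y - q) ≤ φ y := by
  rcases lt_trichotomy y q with h | rfl | h
  · have := hφ.slope_le_of_hasDerivAt hy hq h hd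
    rw [slope_def_field, div_le_iff₀ (sub_pos.mpr h)] at this
    linarith
  · simp
  · have := hφ.le_slope_of_hasDerivAt hq hy h hd
    rw [slope_def_field, le_div_iff₀ (sub_pos.mpr h)] at this
    linarith

theorem legendre_eq_of_hasDerivAt (hφ : ContinuousOn φ (Set.Icc 0 1))
    (hconv : ConvexOn ℝ (Set.Icc 0 1) φ) (hq : q ∈ Set.Icc 0 1) (hd : HasDerivAt φ d q)
    (hz : ∀ y ∈ Set.Icc (0 : ℝ) 1, z * (y - q) ≤ d * (y - q)) :
    legendre φ z = q * z - φ q := by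
  refine le_antisymm ?_ (le_legendre hφ hq z)
  have hx := legendreArg_mem hφ z
  have htangent := add_mul_sub_le_of_convexOn hconv hq hx hd
  rw [legendre]
  linarith [hz _ hx]

theorem exists_midpoint_gap_of_strictConvexOn (hφ : ContinuousOn φ (Set.Icc 0 1))
    (hconv : StrictConvexOn ℝ (Set.Icc 0 1) φ) {ε : ℝ} (hε : 0 < ε) :
    ∃ c > 0, ∀ x ∈ Set.Icc (0 : ℝ) 1, ∀ y ∈ Set.Icc (0 : ℝ) 1, ε ≤ |x - y| →
      φ ((x + y) / 2) + c ≤ (φ x + φ y) / 2 := by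
  have hcompact : IsCompact (Set.Icc (0 : ℝ) 1 ×ˢ Set.Icc (0 : ℝ) 1 ∩ {z | ε ≤ |z.1 - z.2|}) :=
    (isCompact_Icc.prod isCompact_Icc).inter_right (isClosed_le (by fun_prop) (by fun_prop))
  have hcont : ContinuousOn (fun z : ℝ × ℝ => (φ z.1 + φ z.2) / 2 - φ ((z.1 + z.2) / 2))
      (Set.Icc (0 : ℝ) 1 ×ˢ Set.Icc (0 : ℝ) 1 ∩ {z | ε ≤ |z.1 - z.2|}) := by
    refine (((hφ.comp continuousOn_fst fun z hz => hz.1.1).add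
      (hφ.comp continuousOn_snd fun z hz => hz.1.2)).div_const 2).sub
      (hφ.comp (by fun_prop) fun z hz => ?_)
    obtain ⟨⟨⟨hx₀, hx₁⟩, hy₀, hy₁⟩, -⟩ := hz
    exact ⟨by linarith, by linarith⟩
  obtain ⟨c, hc, hle⟩ := hcompact.exists_forall_le' hcont (a := 0) fun z hz => by
    have hne : z.1 ≠ z.2 := fun h => hε.not_ge (by simpa [h] using hz.2)
    have := hconv.2 hz.1.1 hz.1.2 hne one_half_pos one_half_pos (add_halves 1)
    simp only [smul_eq_mul] at this
    rw [show (z.1 + z.2) / 2 = 1 / 2 * z.1 + 1 / 2 * z.2 by ring]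
    linarith
  exact ⟨c, hc, fun x hx y hy hxy => by linarith [hle (x, y) ⟨⟨hx, hy⟩, hxy⟩]⟩

/-- The maximality of `x = legendreArg φ z` and `y = legendreArg ψ z'` is tested against the
midpoint of `x` and `y`. -/
theorem exists_forall_abs_legendreArg_sub_lt (hφ : ContinuousOn φ (Set.Icc 0 1))
    (hconv : StrictConvexOn ℝ (Set.Icc 0 1) φ) {ε : ℝ} (hε : 0 < ε) :
    ∃ δ > 0, ∀ ψ : ℝ → ℝ, ContinuousOn ψ (Set.Icc 0 1) →
      (∀ y ∈ Set.Icc (0 : ℝ) 1, |φ y - ψ y| ≤ δ) → ∀ z z', |z - z'| ≤ δ →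
        |legendreArg φ z - legendreArg ψ z'| < ε := by
  obtain ⟨c, hc, hgap⟩ := exists_midpoint_gap_of_strictConvexOn hφ hconv hε
  refine ⟨c / 2, half_pos hc, fun ψ hψ hclose z z' hz => not_le.mp fun hxy => ?_⟩
  obtain ⟨hx, hxmax⟩ := legendreArg_spec hφ z
  obtain ⟨hy, hymax⟩ := legendreArg_spec hψ z'
  set x := legendreArg φ z
  set y := legendreArg ψ z'
  have hmid : (x + y) / 2 ∈ Set.Icc (0 : ℝ) 1 :=
    ⟨by linarith [hx.1, hy.1], by linarith [hx.2, hy.2]⟩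
  have hzxy : (z - z') * (x - y) ≤ c / 2 := by
    have hxy_le : |x - y| ≤ 1 := abs_le.mpr ⟨by linarith [hx.1, hy.2], by linarith [hx.2, hy.1]⟩
    calc (z - z') * (x - y) ≤ |z - z'| * |x - y| := (le_abs_self _).trans (abs_mul _ _).le
      _ ≤ c / 2 * 1 := by gcongr
      _ = c / 2 := mul_one _
  have hxm : (x + y) / 2 * z - φ ((x + y) / 2) ≤ x * z - φ x := hxmax hmid
  have hym : (x + y) / 2 * z' - ψ ((x + y) / 2) ≤ y * z' - ψ y := hymax hmid
  linarith [hgap x hx y hy hxy, (abs_le.mp (hclose _ hy)).2, (abs_le.mp (hclose _ hmid)).1]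

theorem continuous_legendreArg (hφ : ContinuousOn φ (Set.Icc 0 1))
    (hconv : StrictConvexOn ℝ (Set.Icc 0 1) φ) : Continuous (legendreArg φ) := by
  refine Metric.continuous_iff'.mpr fun z ε hε => ?_
  obtain ⟨δ, hδ, hstable⟩ := exists_forall_abs_legendreArg_sub_lt hφ hconv hε
  filter_upwards [Metric.ball_mem_nhds z hδ] with z' hz'
  exact hstable φ hφ (by simp [hδ.le]) z' z (Metric.mem_ball.mp hz').le

theorem tendstoUniformly_legendreArg {ι : Type*} {l : Filter ι} {Φ : ι → ℝ → ℝ}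
    (hφ : ContinuousOn φ (Set.Icc 0 1)) (hconv : StrictConvexOn ℝ (Set.Icc 0 1) φ)
    (hΦ : ∀ i, ContinuousOn (Φ i) (Set.Icc 0 1)) (h : TendstoUniformlyOn Φ φ l (Set.Icc 0 1)) :
    TendstoUniformly (fun i => legendreArg (Φ i)) (legendreArg φ) l := by
  refine Metric.tendstoUniformly_iff.mpr fun ε hε => ?_
  obtain ⟨δ, hδ, hstable⟩ := exists_forall_abs_legendreArg_sub_lt hφ hconv hε
  filter_upwards [Metric.tendstoUniformlyOn_iff.mp h δ hδ] with i hi z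
  exact hstable (Φ i) (hΦ i) (fun y hy => (hi y hy).le) z z (by simp [hδ.le])

/-- Danskin's theorem, uniformly in the dual variable. -/
theorem eventually_abs_legendre_sub_sub_mul_le {Φ : ℝ → ℝ → ℝ} {w : ℝ → ℝ} {t : ℝ}
    (hΦ : ∀ s, ContinuousOn (Φ s) (Set.Icc 0 1))
    (hw : ∀ ε > 0, ∀ᶠ s in 𝓝 t, ∀ y ∈ Set.Icc (0 : ℝ) 1,
      |Φ s y - Φ t y - (s - t) * w y| ≤ ε * |s - t|)
    (harg : TendstoUniformly (fun s z => w (legendreArg (Φ s) z))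
      (fun z => w (legendreArg (Φ t) z)) (𝓝 t)) {ε : ℝ} (hε : 0 < ε) :
    ∀ᶠ s in 𝓝 t, ∀ z, |legendre (Φ s) z - legendre (Φ t) z - (s - t) * -w (legendreArg (Φ t) z)|
      ≤ ε * |s - t| := by
  filter_upwards [hw (ε / 2) (half_pos hε),
    Metric.tendstoUniformly_iff.mp harg (ε / 2) (half_pos hε)] with s hs hsarg z
  have hx := legendreArg_mem (hΦ t) z
  have hy := legendreArg_mem (hΦ s) z
  have hlower := le_legendre (hΦ s) hx z
  have hupper := le_legendre (hΦ t) hy z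
  have hxs := abs_le.mp (hs _ hx)
  have hys := abs_le.mp (hs _ hy)
  have hwxy : |(s - t) * (w (legendreArg (Φ t) z) - w (legendreArg (Φ s) z))|
      ≤ ε / 2 * |s - t| := by
    rw [abs_mul, mul_comm]
    exact mul_le_mul_of_nonneg_right (hsarg z).le (abs_nonneg _)
  rw [abs_le] at hwxy ⊢
  simp only [legendre] at hlower hupper ⊢
  constructor <;> linarith

end Legendre

/-! ### The Legendre transform of `ξ` -/

section XiFn

variable (S : Finset ℕ) (β : ℕ → ℝ) {x y z q : ℝ}

theorem continuous_xiFn : Continuous (xiFn S β) := by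
  unfold xiFn
  fun_prop

theorem continuous_xiFn' : Continuous (xiFn' S β) := by
  unfold xiFn'
  fun_prop

theorem hasDerivAt_xiFn (x : ℝ) : HasDerivAt (xiFn S β) (xiFn' S β x) x := by
  unfold xiFn xiFn'
  simp only [mul_assoc]
  exact HasDerivAt.fun_sum fun n _ => (hasDerivAt_pow n x).const_mul (β n ^ 2)

theorem monotoneOn_xiFn' : MonotoneOn (xiFn' S β) (Set.Ici 0) := by
  intro x (hx : 0 ≤ x) y _ hxy
  unfold xiFn'
  gcongr

theorem xiFn'_nonneg (hx : 0 ≤ x) : 0 ≤ xiFn' S β x :=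
  Finset.sum_nonneg fun n _ => by positivity

variable {S} in
theorem xiFn_zero (hS : ∀ p ∈ S, 0 < p) : xiFn S β 0 = 0 :=
  Finset.sum_eq_zero fun p hp => by simp [(hS p hp).ne']

theorem convexOn_xiFn : ConvexOn ℝ (Set.Ici 0) (xiFn S β) := by
  refine ⟨convex_Ici 0, fun x hx y hy a b ha hb hab => ?_⟩
  simp only [xiFn, Finset.smul_sum, ← Finset.sum_add_distrib]
  exact Finset.sum_le_sum fun n _ =>
    ((convexOn_pow n).smul (sq_nonneg (β n))).2 hx hy ha hb hab

variable {S β} in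
theorem strictConvexOn_xiFn {n : ℕ} (hnS : n ∈ S) (hn : 2 ≤ n) (hβ : β n ≠ 0) :
    StrictConvexOn ℝ (Set.Ici 0) (xiFn S β) := by
  have hsplit : xiFn S β = (fun x => β n ^ 2 * x ^ n) + xiFn (S.erase n) β :=
    funext fun x => (Finset.add_sum_erase S (fun p => β p ^ 2 * x ^ p) hnS).symm
  rw [hsplit]
  refine StrictConvexOn.add_convexOn ⟨convex_Ici 0, fun x hx y hy hxy a b ha hb hab => ?_⟩
    (convexOn_xiFn _ β)
  have := mul_lt_mul_of_pos_left ((strictConvexOn_pow hn).2 hx hy hxy ha hb hab)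
    (sq_pos_of_ne_zero hβ)
  simp only [smul_eq_mul] at this ⊢
  linarith

theorem legendre_xiFn_eq (hq : q ∈ Set.Icc 0 1)
    (hz : ∀ y ∈ Set.Icc (0 : ℝ) 1, z * (y - q) ≤ xiFn' S β q * (y - q)) :
    legendre (xiFn S β) z = q * z - xiFn S β q :=
  legendre_eq_of_hasDerivAt (continuous_xiFn S β).continuousOn
    ((convexOn_xiFn S β).subset Set.Icc_subset_Ici_self (convex_Icc 0 1)) hq
    (hasDerivAt_xiFn S β q) hz

theorem legendre_xiFn_xiFn' (hq : q ∈ Set.Icc 0 1) :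
    legendre (xiFn S β) (xiFn' S β q) = thetaFn S β q :=
  legendre_xiFn_eq S β hq fun _ _ => le_rfl

theorem legendre_xiFn_of_ge (hz : xiFn' S β 1 ≤ z) :
    legendre (xiFn S β) z = z - xiFn S β 1 := by
  simpa using legendre_xiFn_eq S β (Set.right_mem_Icc.mpr zero_le_one) fun y hy =>
    mul_le_mul_of_nonpos_right hz (sub_nonpos.mpr hy.2)

variable {S} in
theorem legendre_xiFn_of_le (hS : ∀ p ∈ S, 0 < p) (hz : z ≤ xiFn' S β 0) :
    legendre (xiFn S β) z = 0 := by
  simpa [xiFn_zero β hS] using legendre_xiFn_eq S β (Set.left_mem_Icc.mpr zero_le_one)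
    fun y hy => mul_le_mul_of_nonneg_right hz (sub_nonneg.mpr hy.1)

variable {S} {p : ℕ}

theorem xiFn_update_sub (hp : p ∈ S) (s t x : ℝ) :
    xiFn S (Function.update β p s) x - xiFn S (Function.update β p t) x
      = (s ^ 2 - t ^ 2) * x ^ p := by
  simp only [xiFn, ← Finset.sum_sub_distrib, ← sub_mul]
  rw [Finset.sum_eq_single_of_mem p hp fun n _ hn => by simp [hn]]
  simp

theorem xiFn'_update_le_update {s t : ℝ} (hx : 0 ≤ x) (hst : |s| ≤ |t|) :
    xiFn' S (Function.update β p s) x ≤ xiFn' S (Function.update β p t) x := by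
  refine Finset.sum_le_sum fun n _ => ?_
  gcongr ?_ * _ * _
  rcases eq_or_ne n p with rfl | hn
  · simpa using sq_le_sq.mpr hst
  · simp [hn]

theorem strictConvexOn_xiFn_update (hβ : ∃ n ∈ S, 2 ≤ n ∧ β n ≠ 0) (p : ℕ) {t : ℝ} (ht : t ≠ 0) :
    StrictConvexOn ℝ (Set.Ici 0) (xiFn S (Function.update β p t)) := by
  obtain ⟨n, hnS, hn, hβn⟩ := hβ
  refine strictConvexOn_xiFn hnS hn ?_
  rcases eq_or_ne n p with rfl | hnp
  · rwa [Function.update_self]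
  · rwa [Function.update_of_ne hnp]

theorem tendstoUniformlyOn_xiFn_update (hp : p ∈ S) (t : ℝ) :
    TendstoUniformlyOn (fun s => xiFn S (Function.update β p s))
      (xiFn S (Function.update β p t)) (𝓝 t) (Set.Icc 0 1) := by
  refine Metric.tendstoUniformlyOn_iff.mpr fun ε hε => ?_
  have hlim : Tendsto (fun s : ℝ => |t ^ 2 - s ^ 2|) (𝓝 t) (𝓝 0) :=
    Continuous.tendsto' (by fun_prop) _ _ (by simp)
  filter_upwards [hlim.eventually_lt_const hε] with s hs y hy
  rw [Real.dist_eq, xiFn_update_sub β hp, abs_mul]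
  exact (mul_le_of_le_one_right (abs_nonneg _) (by
    rw [abs_of_nonneg (pow_nonneg hy.1 p)]; exact pow_le_one₀ hy.1 hy.2)).trans_lt hs

theorem eventually_abs_xiFn_update_sub_le (hp : p ∈ S) (t : ℝ) {ε : ℝ} (hε : 0 < ε) :
    ∀ᶠ s in 𝓝 t, ∀ y ∈ Set.Icc (0 : ℝ) 1,
      |xiFn S (Function.update β p s) y - xiFn S (Function.update β p t) y
        - (s - t) * (2 * t * y ^ p)| ≤ ε * |s - t| := by
  filter_upwards [Metric.ball_mem_nhds t hε] with s hs y hy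
  have hpow : |y ^ p| ≤ 1 := by
    rw [abs_of_nonneg (pow_nonneg hy.1 p)]
    exact pow_le_one₀ hy.1 hy.2
  calc |xiFn S (Function.update β p s) y - xiFn S (Function.update β p t) y
        - (s - t) * (2 * t * y ^ p)| = |(s - t) * (s - t) * y ^ p| := by
        rw [xiFn_update_sub β hp]
        congr 1
        ring
    _ = |s - t| * |s - t| * |y ^ p| := by rw [abs_mul, abs_mul]
    _ ≤ ε * |s - t| * 1 := by
        gcongr
        exact (Metric.mem_ball.mp hs).le
    _ = ε * |s - t| := mul_one _

/-- At `t = 0` the derivative vanishes, so that the maximizers need not converge. -/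
theorem tendstoUniformly_legendreArg_xiFn_update (hp : p ∈ S) {t : ℝ}
    (hconv : t ≠ 0 → StrictConvexOn ℝ (Set.Ici 0) (xiFn S (Function.update β p t))) :
    TendstoUniformly
      (fun s z => 2 * t * legendreArg (xiFn S (Function.update β p s)) z ^ p)
      (fun z => 2 * t * legendreArg (xiFn S (Function.update β p t)) z ^ p) (𝓝 t) := by
  rcases eq_or_ne t 0 with rfl | ht
  · simpa using tendsto_const_nhds.tendstoUniformly_const
  have hcont (s : ℝ) := (continuous_xiFn S (Function.update β p s)).continuousOn (s := Set.Icc 0 1)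
  exact UniformContinuousOn.comp_tendstoUniformly (g := fun y => 2 * t * y ^ p)
    (fun s z => legendreArg_mem (hcont s) z) (legendreArg_mem (hcont t))
    (isCompact_Icc.uniformContinuousOn_of_continuous (by fun_prop))
    (tendstoUniformly_legendreArg (hcont t)
      ((hconv ht).subset Set.Icc_subset_Ici_self (convex_Icc 0 1)) hcont
      (tendstoUniformlyOn_xiFn_update β hp t))

theorem exists_continuous_eventually_abs_legendre_xiFn_update_sub_le (hp : p ∈ S) {t : ℝ}
    (hconv : t ≠ 0 → StrictConvexOn ℝ (Set.Ici 0) (xiFn S (Function.update β p t))) :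
    ∃ g : ℝ → ℝ, Continuous g ∧ ∀ ε > 0, ∀ᶠ s in 𝓝 t, ∀ z,
      |legendre (xiFn S (Function.update β p s)) z - legendre (xiFn S (Function.update β p t)) z
        - (s - t) * g z| ≤ ε * |s - t| := by
  have hcont (s : ℝ) := (continuous_xiFn S (Function.update β p s)).continuousOn (s := Set.Icc 0 1)
  refine ⟨_, ?_, fun ε hε => eventually_abs_legendre_sub_sub_mul_le hcont
    (fun ε hε => eventually_abs_xiFn_update_sub_le β hp t hε)
    (tendstoUniformly_legendreArg_xiFn_update β hp hconv) hε⟩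
  rcases eq_or_ne t 0 with rfl | ht
  · simpa using continuous_const
  · exact (((continuous_legendreArg (hcont t) ((hconv ht).subset Set.Icc_subset_Ici_self
      (convex_Icc 0 1))).pow p).const_mul (2 * t)).neg

end XiFn

/-! ### Splitting and extending lists of cells -/

section Append

variable {T c t r : ℝ} {l l₁ l₂ : List Cell} {X : ℝ → ℝ}

theorem totalWidth_append (l₁ l₂ : List Cell) :
    totalWidth (l₁ ++ l₂) = totalWidth l₁ + totalWidth l₂ := by
  simp [totalWidth]

theorem stieltjesSum_append (X : ℝ → ℝ) (l₁ l₂ : List Cell) (t : ℝ) :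
    stieltjesSum X (l₁ ++ l₂) t = stieltjesSum X l₁ t + stieltjesSum X l₂ (t + totalWidth l₁) := by
  induction l₁ generalizing t with
  | nil => simp [stieltjesSum]
  | cons c l₁ ih => simp only [List.cons_append, stieltjesSum, ih, totalWidth_cons, add_assoc]

theorem stieltjesSum_eq_zero (hl : ∀ c ∈ l, c.IsAdmissible)
    (hX : ∀ z ∈ Set.Icc t (t + totalWidth l), X z = r) : stieltjesSum X l t = 0 := by
  induction l generalizing t with
  | nil => rfl
  | cons c l ih =>
    obtain ⟨hc, hl⟩ := List.forall_mem_cons.mp hl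
    have hw := hc.width_nonneg
    have hT := totalWidth_nonneg hl
    rw [totalWidth_cons] at hX
    rw [stieltjesSum, hX t ⟨le_rfl, by linarith⟩, hX _ ⟨by linarith, by linarith⟩,
      ih hl fun z hz => hX z ⟨by linarith [hz.1], by linarith [hz.2]⟩]
    ring

theorem PathEquiv.append_left (h : PathEquiv l₁ l₂) : PathEquiv (l ++ l₁) (l ++ l₂) := by
  induction l with
  | nil => exact h
  | cons c l ih => exact ih.cons c

theorem IsPath.exists_pathEquiv_append (h : IsPath T l) (hc : c ∈ Set.Icc 0 T) :
    ∃ l₁ l₂, PathEquiv l (l₁ ++ l₂) ∧ IsPath c l₁ ∧ IsPath (T - c) l₂ ∧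
      l₁.map Cell.mass ⊆ l.map Cell.mass := by
  induction l generalizing T c with
  | nil =>
    cases h.totalWidth_eq
    cases le_antisymm hc.1 hc.2
    exact ⟨[], [], .refl _, h, by simpa using h, List.Subset.refl _⟩
  | cons d l ih =>
    rcases le_total d.width c with hdc | hcd
    · obtain ⟨l₁, l₂, hequiv, hl₁, hl₂, hsub⟩ :=
        ih h.tail ⟨sub_nonneg.mpr hdc, sub_le_sub_right hc.2 _⟩
      refine ⟨d :: l₁, l₂, hequiv.cons d, ⟨?_, ?_, ?_⟩, by simpa using hl₂,
        List.cons_subset_cons _ hsub⟩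
      · exact List.forall_mem_cons.mpr ⟨h.head, hl₁.admissible⟩
      · refine List.pairwise_cons.mpr ⟨fun e he => ?_, hl₁.sorted⟩
        obtain ⟨e', he', heq⟩ := List.mem_map.mp (hsub (List.mem_map_of_mem he))
        exact (h.mass_le e' he').trans_eq heq
      · rw [totalWidth_cons, hl₁.totalWidth_eq, add_sub_cancel]
    · refine ⟨[⟨d.mass, c⟩], ⟨d.mass, d.width - c⟩ :: l, ?_, ⟨?_, List.pairwise_singleton _ _, ?_⟩,
        h.trim hcd, by simp⟩
      · have := PathEquiv.cons_cons h.head.mass_pos hc.1 (sub_nonneg.mpr hcd) h.tail.admissible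
        rw [add_sub_cancel] at this
        exact this.symm
      · simpa using ⟨h.head.mass_pos, h.head.mass_le_one, hc.1⟩
      · simp

theorem integral_parisiFn_le_parisiFn_append (h : ∀ c ∈ l₁ ++ l₂, c.IsAdmissible) (x : ℝ) :
    ∫ y, parisiFn l₂ (x + y) ∂gauss (totalWidth l₁) ≤ parisiFn (l₁ ++ l₂) x := by
  induction l₁ generalizing x with
  | nil => simp [gauss_zero]
  | cons c l₁ ih =>
    obtain ⟨hc, hl⟩ := List.forall_mem_cons.mp h
    obtain ⟨hl₁, hl₂⟩ := List.forall_mem_append.mp hl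
    have hgrowth := (ExpGrowth.of_lipschitz (lipschitzWith_parisiFn hl₂)).comp_const_add x
    have hgrowth_append := (ExpGrowth.of_lipschitz (lipschitzWith_parisiFn hl)).comp_const_add x
    calc ∫ y, parisiFn l₂ (x + y) ∂gauss (c.width + totalWidth l₁)
        = ∫ y, ∫ z, parisiFn l₂ (x + (y + z)) ∂gauss (totalWidth l₁) ∂gauss c.width :=
          (integral_integral_add_gauss hc.width_nonneg (totalWidth_nonneg hl₁) hgrowth).symm
      _ ≤ ∫ y, parisiFn (l₁ ++ l₂) (x + y) ∂gauss c.width :=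
          integral_mono
            (integrable_integral_add_gauss hc.width_nonneg (totalWidth_nonneg hl₁) hgrowth)
            (hgrowth_append.integrable _) fun y => by simpa only [add_assoc] using ih hl (x + y)
      _ ≤ parisiFn (c :: (l₁ ++ l₂)) x :=
          integral_le_parisiOp hc.mass_pos (lipschitzWith_parisiFn hl) _ _

/-! ### The endpoint of the order parameter -/

theorem exp_mul_logCosh (m x : ℝ) : exp (m * logCosh x) = cosh x ^ m := by
  rw [Real.rpow_def_of_pos (cosh_pos x), logCosh, mul_comm]

theorem parisiOp_one_logCosh {v : ℝ} (hv : 0 ≤ v) (x : ℝ) :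
    parisiOp 1 v logCosh x = logCosh x + v / 2 := by
  have hexp (y : ℝ) : exp (1 * logCosh (x + y))
      = exp x / 2 * exp (1 * y) + exp (-x) / 2 * exp (-1 * y) := by
    rw [exp_mul_logCosh, Real.rpow_one, cosh_eq, neg_add, exp_add, exp_add, one_mul, neg_one_mul]
    ring
  have hint (c : ℝ) := (ExpGrowth.exp_mul c).integrable v
  have hZ : ∫ y, exp (1 * logCosh (x + y)) ∂gauss v = cosh x * exp (v / 2) := by
    simp_rw [hexp]
    rw [integral_add ((hint 1).const_mul _) ((hint (-1)).const_mul _), integral_const_mul,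
      integral_const_mul, integral_exp_mul_gauss _ hv, integral_exp_mul_gauss _ hv, cosh_eq]
    ring_nf
  rw [parisiOp, hZ, Real.log_mul (cosh_pos x).ne' (exp_pos _).ne', Real.log_exp, logCosh, div_one,
    one_mul]

theorem exp_div_add_exp_neg_div_cosh (x : ℝ) :
    exp x / (2 * cosh x) + exp (-x) / (2 * cosh x) = 1 := by
  rw [← add_div, div_eq_one_iff_eq (by positivity), cosh_eq]
  ring

/-- `cosh (x + y) / cosh x` is the average of `exp y` and `exp (-y)` with the weights that define
`cosh x`, and the power `m` is concave. -/
theorem cosh_rpow_mul_le_cosh_add_rpow {m : ℝ} (hm : 0 ≤ m) (hm_one : m ≤ 1) (x y : ℝ) :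
    cosh x ^ m * (exp x / (2 * cosh x) * exp (m * y) + exp (-x) / (2 * cosh x) * exp (-m * y))
      ≤ cosh (x + y) ^ m := by
  have hx := cosh_pos x
  have haverage : cosh (x + y)
      = cosh x * (exp x / (2 * cosh x) * exp y + exp (-x) / (2 * cosh x) * exp (-y)) := by
    rw [cosh_eq (x + y), neg_add, exp_add, exp_add]
    field_simp
  have hconcave := (Real.concaveOn_rpow hm hm_one).2 (Set.mem_Ici.mpr (exp_pos y).le)
    (Set.mem_Ici.mpr (exp_pos (-y)).le) (by positivity : 0 ≤ exp x / (2 * cosh x))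
    (by positivity) (exp_div_add_exp_neg_div_cosh x)
  simp only [smul_eq_mul, ← Real.exp_mul] at hconcave
  rw [haverage, Real.mul_rpow hx.le (by positivity)]
  rw [mul_comm y, mul_comm (-y), mul_neg, ← neg_mul] at hconcave
  gcongr

theorem logCosh_add_le_parisiOp {m v : ℝ} (hm : 0 < m) (hm_one : m ≤ 1) (hv : 0 ≤ v) (x : ℝ) :
    logCosh x + m * v / 2 ≤ parisiOp m v logCosh x := by
  have hx := cosh_pos x
  have hint (c : ℝ) := (ExpGrowth.exp_mul c).integrable v
  have hZ : cosh x ^ m * exp (m ^ 2 * v / 2) ≤ ∫ y, exp (m * logCosh (x + y)) ∂gauss v := by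
    have hlower (r r' : ℝ) : ∫ y, cosh x ^ m * (r * exp (m * y) + r' * exp (-m * y)) ∂gauss v
        = cosh x ^ m * ((r + r') * exp (m ^ 2 * v / 2)) := by
      rw [integral_const_mul, integral_add ((hint m).const_mul r) ((hint (-m)).const_mul r'),
        integral_const_mul, integral_const_mul, integral_exp_mul_gauss _ hv,
        integral_exp_mul_gauss _ hv, neg_sq, ← add_mul]
    rw [← one_mul (exp (m ^ 2 * v / 2)), ← exp_div_add_exp_neg_div_cosh x, ← hlower]
    refine integral_mono ((((hint m).const_mul _).add ((hint (-m)).const_mul _)).const_mul _)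
      ((ExpGrowth.exp_mul_add_of_lipschitz parisiClass_logCosh.lipschitzWith m x).integrable v)
      fun y => ?_
    simp only [exp_mul_logCosh]
    exact cosh_rpow_mul_le_cosh_add_rpow hm.le hm_one x y
  have hlog := Real.log_le_log (by positivity) hZ
  rw [Real.log_mul (by positivity) (exp_pos _).ne', Real.log_exp, Real.log_rpow hx] at hlog
  rw [parisiOp, one_div, le_inv_mul_iff₀ hm, logCosh]
  linarith

theorem parisiFn_append_one {v : ℝ} (hl : ∀ c ∈ l, c.IsAdmissible) (hv : 0 ≤ v) (x : ℝ) :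
    parisiFn (l ++ [⟨1, v⟩]) x = parisiFn l x + v / 2 := by
  induction l generalizing x with
  | nil => exact parisiOp_one_logCosh hv x
  | cons c l ih =>
    obtain ⟨hc, hl⟩ := List.forall_mem_cons.mp hl
    rw [List.cons_append, parisiFn, funext (ih hl),
      parisiOp_add_const hc.mass_pos (lipschitzWith_parisiFn hl), parisiFn]

theorem logCosh_add_stieltjesSum_le_parisiFn (hl : ∀ c ∈ l, c.IsAdmissible) (t x : ℝ) :
    logCosh x + 1 / 2 * stieltjesSum (fun z => z) l t ≤ parisiFn l x := by
  induction l generalizing t x with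
  | nil => simp [stieltjesSum, parisiFn]
  | cons c l ih =>
    obtain ⟨hc, hl⟩ := List.forall_mem_cons.mp hl
    have hlip : LipschitzWith 1 logCosh := parisiClass_logCosh.lipschitzWith
    obtain ⟨r, hr⟩ : ∃ r, r = 1 / 2 * stieltjesSum (fun z => z) l (t + c.width) := ⟨_, rfl⟩
    calc logCosh x + 1 / 2 * stieltjesSum (fun z => z) (c :: l) t
        = logCosh x + c.mass * c.width / 2 + r := by
          rw [stieltjesSum, hr]
          ring
      _ ≤ parisiOp c.mass c.width logCosh x + r :=
          add_le_add_left (logCosh_add_le_parisiOp hc.mass_pos hc.mass_le_one hc.width_nonneg x) r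
      _ = parisiOp c.mass c.width (fun y => logCosh y + r) x :=
          (parisiOp_add_const hc.mass_pos hlip r _ x).symm
      _ ≤ parisiFn (c :: l) x :=
          parisiOp_mono hc.mass_pos (by simpa using hlip.add (LipschitzWith.const r))
            (lipschitzWith_parisiFn hl) (hr ▸ ih hl _) _ x

theorem parisiFn_add_stieltjesSum_le_parisiFn_append (h : ∀ c ∈ l₁ ++ l₂, c.IsAdmissible)
    (t x : ℝ) :
    parisiFn l₁ x + 1 / 2 * stieltjesSum (fun z => z) l₂ t ≤ parisiFn (l₁ ++ l₂) x := by
  induction l₁ generalizing x with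
  | nil => exact logCosh_add_stieltjesSum_le_parisiFn h t x
  | cons c l₁ ih =>
    obtain ⟨hc, hl⟩ := List.forall_mem_cons.mp h
    have hlip := lipschitzWith_parisiFn (List.forall_mem_append.mp hl).1
    set r := 1 / 2 * stieltjesSum (fun z => z) l₂ t
    calc parisiFn (c :: l₁) x + r
        = parisiOp c.mass c.width (fun y => parisiFn l₁ y + r) x :=
          (parisiOp_add_const hc.mass_pos hlip r _ x).symm
      _ ≤ parisiFn (c :: (l₁ ++ l₂)) x :=
          parisiOp_mono hc.mass_pos (by simpa using hlip.add (LipschitzWith.const r))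
            (lipschitzWith_parisiFn hl) (ih hl) _ x

end Append

/-! ### Order parameters vanishing near zero -/

/-- The Parisi energy of the order parameter that vanishes on `[0, a]` and is given by the list of
cells `l` from time `a` on. -/
def rootedEnergy (h : ℝ) (X : ℝ → ℝ) (a : ℝ) (l : List Cell) : ℝ :=
  ∫ y, parisiFn l (h + y) ∂gauss a - 1 / 2 * stieltjesSum X l a

section RootedEnergy

variable {T a c ε : ℝ} {l : List Cell} {X : ℝ → ℝ}

theorem exists_parisiOp_le_integral_add {A : ℝ → ℝ} (hA : LipschitzWith 1 A) (v x : ℝ) {M : ℝ}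
    (hε : 0 < ε) (hM : 0 < M) :
    ∃ m, 0 < m ∧ m ≤ M ∧ parisiOp m v A x ≤ ∫ y, A (x + y) ∂gauss v + ε := by
  have hset : integrableExpSet (fun y => A (x + y)) (gauss v) = Set.univ :=
    Set.eq_univ_of_forall fun m => (ExpGrowth.exp_mul_add_of_lipschitz hA m x).integrable v
  have hderiv := (hasDerivAt_mgf (X := fun y => A (x + y)) (μ := gauss v) (t := 0)
    (by simp [hset])).log (by simp)
  simp only [zero_mul, exp_zero, mul_one, mgf_zero, div_one] at hderiv
  have hslope := hderiv.tendsto_slope_zero_right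
  simp only [zero_add, mgf_zero, Real.log_one, sub_zero, smul_eq_mul] at hslope
  have hsmall : ∀ᶠ m in 𝓝[>] (0 : ℝ), m ≤ M :=
    (eventually_le_nhds hM).filter_mono nhdsWithin_le_nhds
  obtain ⟨m, ⟨hm, hmM⟩, hm_pos⟩ := ((hslope.eventually_le_const (lt_add_of_pos_right _ hε)).and
    hsmall |>.and self_mem_nhdsWithin).exists
  exact ⟨m, hm_pos, hmM, by rwa [parisiOp, one_div]⟩

theorem IsPath.append_one (h : IsPath T l) {v : ℝ} (hv : 0 ≤ v) :
    IsPath (T + v) (l ++ [⟨1, v⟩]) where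
  admissible := List.forall_mem_append.mpr
    ⟨h.admissible, List.forall_mem_singleton.mpr ⟨one_pos, le_rfl, hv⟩⟩
  sorted := List.pairwise_append.mpr ⟨h.sorted, List.pairwise_singleton _ _, fun d hd =>
    List.forall_mem_singleton.mpr (h.admissible d hd).mass_le_one⟩
  totalWidth_eq := by simp [totalWidth_append, h.totalWidth_eq]

theorem IsPath.exists_pos_le_mass (h : IsPath T l) : ∃ M, 0 < M ∧ M ≤ 1 ∧ ∀ c ∈ l, M ≤ c.mass := by
  cases l with
  | nil => exact ⟨1, one_pos, le_rfl, by simp⟩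
  | cons c l => exact ⟨c.mass, h.head.mass_pos, h.head.mass_le_one,
      List.forall_mem_cons.mpr ⟨le_rfl, h.mass_le⟩⟩

/-- A missing order parameter on `[0, a]` is replaced by a very small one. -/
theorem exists_parisiEnergy_le_rootedEnergy_add (ha : 0 ≤ a) (hcT : c ≤ T)
    (hl : IsPath (c - a) l) (hXa : X 0 ≤ X a) (hXT : X T = X c + (T - c)) (h : ℝ) (hε : 0 < ε) :
    ∃ l', IsPath T l' ∧ parisiEnergy h X l' ≤ rootedEnergy h X a l + ε := by
  have hv : 0 ≤ T - c := sub_nonneg.mpr hcT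
  have hlip := lipschitzWith_parisiFn hl.admissible
  have happend := hl.append_one hv
  obtain ⟨M, hM, hM_one, hMl⟩ := happend.exists_pos_le_mass
  obtain ⟨m, hm, hmM, hop⟩ := exists_parisiOp_le_integral_add hlip a h hε hM
  refine ⟨⟨m, a⟩ :: (l ++ [⟨1, T - c⟩]), ⟨?_, ?_, ?_⟩, ?_⟩
  · exact List.forall_mem_cons.mpr ⟨⟨hm, hmM.trans hM_one, ha⟩, happend.admissible⟩
  · exact List.pairwise_cons.mpr ⟨fun d hd => hmM.trans (hMl d hd), happend.sorted⟩
  · rw [totalWidth_cons, happend.totalWidth_eq]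
    ring
  · have hroot : 0 ≤ m * (X a - X 0) := mul_nonneg hm.le (sub_nonneg.mpr hXa)
    rw [parisiEnergy, parisiFn, funext (parisiFn_append_one hl.admissible hv),
      parisiOp_add_const hm hlip, stieltjesSum, stieltjesSum_append, zero_add, hl.totalWidth_eq,
      add_sub_cancel, rootedEnergy]
    simp only [stieltjesSum, add_sub_cancel, hXT]
    linarith

theorem exists_rootedEnergy_le_parisiEnergy (ha : 0 ≤ a) (hac : a ≤ c) (hcT : c ≤ T)
    (hXa : ∀ z ∈ Set.Icc 0 a, X z = 0) (hXT : ∀ z ∈ Set.Icc c T, X z = X c + (z - c))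
    (hl : IsPath T l) (h : ℝ) :
    ∃ l', IsPath (c - a) l' ∧ rootedEnergy h X a l' ≤ parisiEnergy h X l := by
  obtain ⟨l₁, l', hsplit, hl₁, hl', -⟩ := hl.exists_pathEquiv_append ⟨ha, hac.trans hcT⟩
  obtain ⟨l₂, l₃, hsplit', hl₂, hl₃, -⟩ :=
    hl'.exists_pathEquiv_append ⟨sub_nonneg.mpr hac, sub_le_sub_right hcT a⟩
  have hequiv : PathEquiv l (l₁ ++ l₂ ++ l₃) := by
    rw [List.append_assoc]
    exact hsplit.trans hsplit'.append_left
  have hadm₁₂ := List.forall_mem_append.mpr ⟨hl₁.admissible, hl₂.admissible⟩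
  have hadm := List.forall_mem_append.mpr ⟨hadm₁₂, hl₃.admissible⟩
  have hwidth : totalWidth (l₁ ++ l₂) = c := by
    rw [totalWidth_append, hl₁.totalWidth_eq, hl₂.totalWidth_eq, add_sub_cancel]
  have hstart : stieltjesSum X l₁ 0 = 0 :=
    stieltjesSum_eq_zero hl₁.admissible (by simpa [hl₁.totalWidth_eq] using hXa)
  have hend : stieltjesSum (fun z => X z - z) l₃ c = 0 := by
    refine stieltjesSum_eq_zero hl₃.admissible (r := X c - c) fun z hz => ?_
    rw [hl₃.totalWidth_eq, sub_sub_sub_cancel_right, add_sub_cancel] at hz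
    rw [hXT z hz]
    ring
  rw [stieltjesSum_sub X fun z => z] at hend
  have hleft := integral_parisiFn_le_parisiFn_append hadm₁₂ h
  have hright := parisiFn_add_stieltjesSum_le_parisiFn_append hadm c h
  refine ⟨l₂, hl₂, ?_⟩
  rw [hl₁.totalWidth_eq] at hleft
  rw [rootedEnergy, parisiEnergy, hequiv.parisiFn_eq, hequiv.stieltjesSum_eq, stieltjesSum_append,
    stieltjesSum_append, hstart, hwidth, hl₁.totalWidth_eq, zero_add, zero_add, zero_add]
  linarith

end RootedEnergy

/-! ### Discrete order parameters as lists of cells -/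

/-- The cells between the times `τ i, …, τ (i + n)`, with masses `m (i + 1), …, m (i + n)`. -/
def seqCells (m τ : ℕ → ℝ) (i n : ℕ) : List Cell :=
  (List.range' i n).map fun j => ⟨m (j + 1), τ (j + 1) - τ j⟩

section SeqCells

variable {m v τ : ℕ → ℝ} {k : ℕ}

theorem seqCells_succ (m τ : ℕ → ℝ) (i n : ℕ) :
    seqCells m τ i (n + 1) = ⟨m (i + 1), τ (i + 1) - τ i⟩ :: seqCells m τ (i + 1) n := rfl

theorem seqCells_succ_last (m τ : ℕ → ℝ) (n : ℕ) :
    seqCells m τ 0 (n + 1) = seqCells m τ 0 n ++ [⟨m (n + 1), τ (n + 1) - τ n⟩] := by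
  simp [seqCells, List.range'_concat]

theorem parisiB_eq_parisiFn_seqCells (hv : ∀ l < k, v (l + 1) = τ (l + 1) - τ l) {i j : ℕ}
    (hij : i + j = k) : parisiB m v k j = parisiFn (seqCells m τ i j) := by
  induction j generalizing i with
  | zero => rfl
  | succ j ih =>
    ext x
    rw [parisiB, ih (i := i + 1) (by lia), show k - j = i + 1 by lia, hv i (by lia), seqCells_succ,
      parisiFn, parisiOp]

theorem totalWidth_seqCells (m τ : ℕ → ℝ) (i n : ℕ) :
    totalWidth (seqCells m τ i n) = τ (i + n) - τ i := by
  induction n generalizing i with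
  | zero => simp [seqCells, totalWidth]
  | succ n ih =>
    rw [seqCells_succ, totalWidth_cons, ih, add_right_comm i 1 n, add_assoc i n 1]
    ring

theorem stieltjesSum_seqCells (X : ℝ → ℝ) (m τ : ℕ → ℝ) (i n : ℕ) :
    stieltjesSum X (seqCells m τ i n) (τ i) =
      ∑ l ∈ Finset.Ico i (i + n), m (l + 1) * (X (τ (l + 1)) - X (τ l)) := by
  induction n generalizing i with
  | zero => simp [seqCells, stieltjesSum]
  | succ n ih =>
    rw [seqCells_succ, stieltjesSum, add_sub_cancel, ih, add_right_comm i 1 n, add_assoc i n 1,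
      Finset.sum_eq_sum_Ico_succ_bot (show i < i + (n + 1) by lia)]

theorem isPath_seqCells (hm_pos : ∀ l < k, 0 < m (l + 1)) (hm_one : m k ≤ 1)
    (hm : MonotoneOn m (Set.Iic k)) (hτ : MonotoneOn τ (Set.Iic k)) :
    IsPath (τ k - τ 0) (seqCells m τ 0 k) where
  admissible := by
    refine List.forall_mem_map.mpr fun j hj => ?_
    have hj : j + 1 ≤ k := by simpa using hj
    exact ⟨hm_pos j hj, (hm hj Set.self_mem_Iic hj).trans hm_one,
      sub_nonneg.mpr (hτ (j.le_succ.trans hj) hj j.le_succ)⟩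
  sorted := by
    refine List.pairwise_map.mpr ((List.pairwise_lt_range' ..).imp_of_mem fun hi hj hij => ?_)
    simp only [List.mem_range'_1, zero_le, zero_add, true_and] at hi hj
    exact hm hi hj (Nat.succ_le_succ hij.le)
  totalWidth_eq := by rw [totalWidth_seqCells, zero_add]

end SeqCells

section OrderParam

variable {S : Finset ℕ} {β : ℕ → ℝ} {k : ℕ}

theorem monotoneOn_orderParam_m (op : OrderParam k) : MonotoneOn op.m (Set.Iic k) :=
  monotoneOn_of_le_succ Set.ordConnected_Iic fun l _ _ hl => op.m_mono l hl

theorem monotoneOn_orderParam_q (op : OrderParam k) : MonotoneOn op.q (Set.Iic (k + 1)) :=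
  monotoneOn_of_le_succ Set.ordConnected_Iic fun l _ _ hl => op.q_mono l (Nat.le_of_succ_le_succ hl)

theorem orderParam_q_mem_Icc (op : OrderParam k) {l : ℕ} (hl : l ≤ k + 1) :
    op.q l ∈ Set.Icc 0 1 := by
  have hq := monotoneOn_orderParam_q op
  rw [← op.q_zero, ← op.q_last]
  exact ⟨hq (Set.mem_Iic.mpr (k + 1).zero_le) hl l.zero_le, hq hl Set.self_mem_Iic hl⟩

/-- The times `ξ'(q_1), …, ξ'(q_{k+1})` between which the order parameter is constant. -/
def opTime (S : Finset ℕ) (β : ℕ → ℝ) (op : OrderParam k) (i : ℕ) : ℝ := xiFn' S β (op.q (i + 1))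

theorem isPath_seqCells_opTime (S : Finset ℕ) (β : ℕ → ℝ) (op : OrderParam k) :
    IsPath (xiFn' S β 1 - xiFn' S β (op.q 1)) (seqCells op.m (opTime S β op) 0 k) := by
  have hτ : MonotoneOn (opTime S β op) (Set.Iic k) := fun i hi j hj hij =>
    monotoneOn_xiFn' S β (orderParam_q_mem_Icc op (Nat.succ_le_succ hi)).1
      (orderParam_q_mem_Icc op (Nat.succ_le_succ hj)).1
      (monotoneOn_orderParam_q op (Nat.succ_le_succ hi) (Nat.succ_le_succ hj)
        (Nat.succ_le_succ hij))
  have hpath := isPath_seqCells (fun l hl => op.m_pos (l + 1) l.succ_pos hl) op.m_last.le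
    (monotoneOn_orderParam_m op) hτ
  rwa [opTime, op.q_last, opTime] at hpath

theorem parisiP_eq_rootedEnergy (S : Finset ℕ) (h : ℝ) (β : ℕ → ℝ) (op : OrderParam k) :
    parisiP S h β op = rootedEnergy h (legendre (xiFn S β)) (xiFn' S β (op.q 1))
      (seqCells op.m (opTime S β op) 0 k) := by
  have hB : parisiB op.m (opVar S β op) k k = parisiFn (seqCells op.m (opTime S β op) 0 k) :=
    parisiB_eq_parisiFn_seqCells (fun l _ => by simp [opVar, opTime]) (zero_add k)
  have hθ {l : ℕ} (hl : l ≤ k + 1) := legendre_xiFn_xiFn' S β (orderParam_q_mem_Icc op hl)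
  have hsum : ∑ l ∈ Finset.Icc 1 k, op.m l * (thetaFn S β (op.q (l + 1)) - thetaFn S β (op.q l)) =
      stieltjesSum (legendre (xiFn S β)) (seqCells op.m (opTime S β op) 0 k)
        (xiFn' S β (op.q 1)) := by
    rw [show xiFn' S β (op.q 1) = opTime S β op 0 from rfl, stieltjesSum_seqCells, zero_add,
      ← Finset.Ico_add_one_right_eq_Icc, ← zero_add 1, ← Finset.sum_Ico_add']
    refine Finset.sum_congr rfl fun l hl => ?_
    have hl : l < k := (Finset.mem_Ico.mp hl).2
    rw [opTime, opTime, hθ (by lia), hθ (by lia)]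
  rw [parisiP, rootedEnergy, hB, hsum]
  simp only [opVar, if_true]

end OrderParam

/-- The masses of a list of cells, preceded by `0` and followed by `1`s. -/
def massSeq (l : List Cell) : ℕ → ℝ
  | 0 => 0
  | j + 1 => (l.map Cell.mass).getD j 1

/-- The endpoints of a list of cells starting at time `a`. -/
def timeSeq (a : ℝ) (l : List Cell) (j : ℕ) : ℝ := a + totalWidth (l.take j)

section ListToSeq

variable {T a : ℝ} {l : List Cell}

theorem massSeq_succ_pos (hl : ∀ c ∈ l, c.IsAdmissible) (j : ℕ) : 0 < massSeq l (j + 1) := by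
  by_cases hj : j < l.length
  · simpa [massSeq, hj] using (hl _ (List.getElem_mem hj)).mass_pos
  · simp [massSeq, Nat.not_lt.mp hj]

theorem massSeq_length_succ (l : List Cell) : massSeq l (l.length + 1) = 1 := by simp [massSeq]

theorem IsPath.monotone_massSeq (h : IsPath T l) : Monotone (massSeq l) := by
  refine monotone_nat_of_le_succ fun j => ?_
  cases j with
  | zero => exact (massSeq_succ_pos h.admissible 0).le
  | succ j =>
    by_cases hj : j + 1 < l.length
    · simpa [massSeq, hj, j.lt_succ_self.trans hj] using
        List.pairwise_iff_getElem.mp h.sorted j (j + 1) (by lia) hj j.lt_succ_self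
    · have hlast : massSeq l (j + 1 + 1) = 1 := by simp [massSeq, Nat.not_lt.mp hj]
      rw [hlast]
      by_cases hj' : j < l.length
      · simpa [massSeq, hj'] using (h.admissible _ (List.getElem_mem hj')).mass_le_one
      · simp [massSeq, Nat.not_lt.mp hj']

theorem IsPath.timeSeq_of_length_le (h : IsPath T l) (a : ℝ) {j : ℕ} (hj : l.length ≤ j) :
    timeSeq a l j = a + T := by
  rw [timeSeq, List.take_of_length_le hj, h.totalWidth_eq]

theorem monotone_timeSeq (hl : ∀ c ∈ l, c.IsAdmissible) (a : ℝ) : Monotone (timeSeq a l) := by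
  refine monotone_nat_of_le_succ fun j => ?_
  rw [timeSeq, timeSeq, List.take_add_one, totalWidth_append, ← add_assoc]
  exact le_add_of_nonneg_right (totalWidth_nonneg fun c hc => hl c (List.mem_of_getElem? (by
    simpa using hc)))

theorem IsPath.timeSeq_mem_Icc (h : IsPath T l) (a : ℝ) (j : ℕ) :
    timeSeq a l j ∈ Set.Icc a (a + T) := by
  have hmono := monotone_timeSeq h.admissible a
  rw [← h.timeSeq_of_length_le a (le_max_right j l.length)]
  refine ⟨?_, hmono (le_max_left ..)⟩
  simpa [timeSeq, totalWidth] using hmono j.zero_le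

theorem seqCells_massSeq_timeSeq (a : ℝ) (l : List Cell) :
    seqCells (massSeq l) (timeSeq a l) 0 (l.length + 1) = l ++ [⟨1, 0⟩] := by
  have hcells : seqCells (massSeq l) (timeSeq a l) 0 l.length = l := by
    refine List.ext_getElem (by simp [seqCells]) fun j _ hj => ?_
    have hwidth : timeSeq a l (j + 1) - timeSeq a l j = l[j].width := by
      rw [timeSeq, timeSeq, List.take_add_one, totalWidth_append, List.getElem?_eq_getElem hj]
      simp [totalWidth]
    simp [seqCells, massSeq, hj, hwidth]
  rw [seqCells_succ_last, hcells, massSeq_length_succ]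
  simp [timeSeq, List.take_of_length_le]

end ListToSeq

/-! ### The Parisi formula as an infimum over lists of cells -/

theorem exists_monotoneOn_rightInverse {f : ℝ → ℝ} {x y : ℝ} (hxy : x ≤ y)
    (hf : ContinuousOn f (Set.Icc x y)) (hmono : MonotoneOn f (Set.Icc x y)) :
    ∃ g : ℝ → ℝ, MonotoneOn g (Set.Icc (f x) (f y)) ∧ g (f y) = y ∧
      ∀ z ∈ Set.Icc (f x) (f y), g z ∈ Set.Icc x y ∧ f (g z) = z := by
  choose! g hg using intermediate_value_Icc hxy hf
  have hinv : ∀ z ∈ Set.Icc (f x) (f y),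
      Function.update g (f y) y z ∈ Set.Icc x y ∧ f (Function.update g (f y) y z) = z := by
    intro z hz
    by_cases hzy : z = f y
    · subst hzy
      simp [hxy]
    · rw [Function.update_of_ne hzy]
      exact hg hz
  refine ⟨Function.update g (f y) y, fun z hz w hw hzw => ?_, Function.update_self .., hinv⟩
  by_contra! hlt
  have hle := hmono (hinv w hw).1 (hinv z hz).1 hlt.le
  rw [(hinv w hw).2, (hinv z hz).2] at hle
  exact hlt.ne (by rw [le_antisymm hzw hle])

section ParisiF

variable {S : Finset ℕ} {β : ℕ → ℝ} {T : ℝ} {l : List Cell}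

theorem xiFn'_zero_le_one (S : Finset ℕ) (β : ℕ → ℝ) : xiFn' S β 0 ≤ xiFn' S β 1 :=
  monotoneOn_xiFn' S β Set.self_mem_Ici (Set.mem_Ici.mpr zero_le_one) zero_le_one

theorem exists_orderParam_opTime_eq_timeSeq (S : Finset ℕ) (β : ℕ → ℝ)
    (hl : IsPath (xiFn' S β 1 - xiFn' S β 0) l) :
    ∃ op : OrderParam (l.length + 1),
      op.m = massSeq l ∧ opTime S β op = timeSeq (xiFn' S β 0) l := by
  obtain ⟨g, hg_mono, hg_one, hg⟩ := exists_monotoneOn_rightInverse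
    (f := xiFn' S β) (x := 0) (y := 1) zero_le_one (continuous_xiFn' S β).continuousOn
    ((monotoneOn_xiFn' S β).mono Set.Icc_subset_Ici_self)
  have htime (j : ℕ) : timeSeq (xiFn' S β 0) l j ∈ Set.Icc (xiFn' S β 0) (xiFn' S β 1) := by
    simpa using hl.timeSeq_mem_Icc (xiFn' S β 0) j
  refine ⟨{
    m := massSeq l
    q := fun
      | 0 => 0
      | j + 1 => g (timeSeq (xiFn' S β 0) l j)
    m_zero := rfl
    m_last := massSeq_length_succ l
    m_mono := fun j _ => hl.monotone_massSeq j.le_succ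
    m_pos := fun j hj _ => by
      obtain ⟨i, rfl⟩ := Nat.exists_eq_succ_of_ne_zero (Nat.one_le_iff_ne_zero.mp hj)
      exact massSeq_succ_pos hl.admissible i
    q_zero := rfl
    q_last := by
      change g (timeSeq _ l (l.length + 1)) = 1
      rw [hl.timeSeq_of_length_le _ (Nat.le_succ _), add_sub_cancel, hg_one]
    q_mono := fun j _ => by
      cases j with
      | zero => exact (hg _ (htime 0)).1.1
      | succ j =>
        exact hg_mono (htime j) (htime (j + 1)) (monotone_timeSeq hl.admissible _ j.le_succ)
    }, rfl, funext fun j => (hg _ (htime j)).2⟩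

theorem exists_orderParam_parisiP_eq_rootedEnergy (h : ℝ)
    (hl : IsPath (xiFn' S β 1 - xiFn' S β 0) l) :
    ∃ op : OrderParam (l.length + 1),
      parisiP S h β op = rootedEnergy h (legendre (xiFn S β)) (xiFn' S β 0) l := by
  obtain ⟨op, hm, hτ⟩ := exists_orderParam_opTime_eq_timeSeq S β hl
  have hstart : xiFn' S β (op.q 1) = xiFn' S β 0 :=
    (congrFun hτ 0).trans (by simp [timeSeq, totalWidth])
  refine ⟨op, ?_⟩
  rw [parisiP_eq_rootedEnergy, hm, hτ, hstart, seqCells_massSeq_timeSeq, rootedEnergy,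
    rootedEnergy, funext (parisiFn_append_one hl.admissible le_rfl), stieltjesSum_append]
  simp [stieltjesSum]

theorem bddBelow_parisiEnergy {X : ℝ → ℝ} {M : ℝ} (hX : ∀ z ∈ Set.Icc 0 T, |z - X z| ≤ M) (h : ℝ) :
    BddBelow (parisiEnergy h X '' {l | IsPath T l}) := by
  refine ⟨-M, Set.forall_mem_image.mpr fun l hl => ?_⟩
  have hlower := logCosh_add_stieltjesSum_le_parisiFn hl.admissible 0 h
  have hbound := (abs_le.mp (hl.abs_stieltjesSum_le hX)).1
  rw [stieltjesSum_sub (fun z => z) X] at hbound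
  have hlog : 0 ≤ logCosh h := Real.log_nonneg (one_le_cosh h)
  rw [parisiEnergy]
  linarith

theorem lowerBounds_parisiEnergy_eq (hS : ∀ p ∈ S, 0 < p) (h : ℝ) (hT : xiFn' S β 1 ≤ T) :
    lowerBounds (parisiEnergy h (legendre (xiFn S β)) '' {l | IsPath T l}) =
      lowerBounds {x | ∃ k : ℕ, 1 ≤ k ∧ ∃ op : OrderParam k, x = parisiP S h β op} := by
  have hξ_zero := xiFn'_nonneg S β le_rfl
  ext b
  constructor
  · rintro hb _ ⟨k, -, op, rfl⟩
    have hq := orderParam_q_mem_Icc op (l := 1) (by lia)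
    have hXq : legendre (xiFn S β) 0 ≤ legendre (xiFn S β) (xiFn' S β (op.q 1)) := by
      have := le_legendre (continuous_xiFn S β).continuousOn (Set.left_mem_Icc.mpr zero_le_one)
        (xiFn' S β (op.q 1))
      rwa [xiFn_zero β hS, zero_mul, sub_zero, ← legendre_xiFn_of_le β hS hξ_zero] at this
    have hXT : legendre (xiFn S β) T = legendre (xiFn S β) (xiFn' S β 1) + (T - xiFn' S β 1) := by
      rw [legendre_xiFn_of_ge S β hT, legendre_xiFn_of_ge S β le_rfl]
      ring
    rw [parisiP_eq_rootedEnergy]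
    refine le_of_forall_pos_le_add fun ε hε => ?_
    obtain ⟨l, hl, hle⟩ := exists_parisiEnergy_le_rootedEnergy_add (xiFn'_nonneg S β hq.1) hT
      (isPath_seqCells_opTime S β op) hXq hXT h hε
    exact (hb ⟨l, hl, rfl⟩).trans hle
  · rintro hb _ ⟨l, hl, rfl⟩
    obtain ⟨l', hl', hle⟩ := exists_rootedEnergy_le_parisiEnergy hξ_zero (xiFn'_zero_le_one S β) hT
      (fun z hz => legendre_xiFn_of_le β hS hz.2) (fun z hz => by
        rw [legendre_xiFn_of_ge S β hz.1, legendre_xiFn_of_ge S β le_rfl]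
        ring) hl h
    obtain ⟨op, hop⟩ := exists_orderParam_parisiP_eq_rootedEnergy h hl'
    exact (hb ⟨_, Nat.le_add_left 1 _, op, hop.symm⟩).trans hle

theorem isGLB_parisiF (hS : ∀ p ∈ S, 0 < p) (h : ℝ) (hT : xiFn' S β 1 ≤ T) :
    IsGLB (parisiEnergy h (legendre (xiFn S β)) '' {l | IsPath T l}) (parisiF S h β) := by
  have hlower := lowerBounds_parisiEnergy_eq hS h hT
  obtain ⟨M, hM⟩ := exists_forall_abs_legendre_le (continuous_xiFn S β).continuousOn T
  have hbdd : BddBelow (parisiEnergy h (legendre (xiFn S β)) '' {l | IsPath T l}) :=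
    bddBelow_parisiEnergy (M := T + M) (fun z hz => (abs_sub _ _).trans
      (add_le_add ((abs_of_nonneg hz.1).trans_le hz.2) (hM z hz))) h
  refine (isGLB_congr hlower).mpr (isGLB_csInf ?_ ?_)
  · have hl : IsPath (xiFn' S β 1 - xiFn' S β 0) [⟨1, xiFn' S β 1 - xiFn' S β 0⟩] :=
      ⟨List.forall_mem_singleton.mpr ⟨one_pos, le_rfl, sub_nonneg.mpr (xiFn'_zero_le_one S β)⟩,
        List.pairwise_singleton .., by simp [totalWidth]⟩
    obtain ⟨op, -⟩ := exists_orderParam_opTime_eq_timeSeq S β hl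
    exact ⟨_, _, Nat.le_add_left 1 _, op, rfl⟩
  · rwa [BddBelow, ← hlower]

end ParisiF

end Parisi

open Parisi

/-- For each `p ∈ S`, the map `β_p ↦ P(β)` (with `h` and the other coordinates of `β`
fixed) is differentiable at every point. -/
theorem parisiF_differentiable
    (S : Finset ℕ) (hS : ∀ p ∈ S, 0 < p) (h : ℝ) (β : ℕ → ℝ)
    (hβ : ∃ p ∈ S, 2 ≤ p ∧ β p ≠ 0)
    (p : ℕ) (hp : p ∈ S) (t : ℝ) :
    DifferentiableAt ℝ (fun s : ℝ => parisiF S h (Function.update β p s)) t := by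
  obtain ⟨g, hg, hX⟩ := exists_continuous_eventually_abs_legendre_xiFn_update_sub_le β hp
    (strictConvexOn_xiFn_update β hβ p (t := t))
  refine differentiableAt_of_isGLB_parisiEnergy
    (h := h) (T := xiFn' S (Function.update β p (|t| + 1)) 1) ?_ hg.continuousOn
    fun ε hε => (hX ε hε).mono fun s hs z _ => hs z
  filter_upwards [continuous_abs.continuousAt.eventually_lt_const (lt_add_one |t|)] with s hs
  exact isGLB_parisiF hS h (xiFn'_update_le_update β zero_le_one (hs.le.trans (le_abs_self _)))
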